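/- Third-order MASC rate region, achievability: Let (X₁ᵢ,X₂ᵢ)_{i≥1} be i.i.d. pairs with single-letter joint distribution P_{X₁X₂} on countable alphabets satisfying V(X₁,X₂) > 0, E[V_c(X₁|X₂)] > 0, E[V_c(X₂|X₁)] > 0, T(X₁,X₂) < ∞, T(X₁|X₂) < ∞, T(X₂|X₁) < ∞, E[T_c(X₁|X₂)²] < ∞, and E[T_c(X₂|X₁)²] < ∞. Fix ε ∈ (0,1). Then there exist a constant C ≥ 0 and n₀ ∈ ℕ such that for all n ≥ n₀ and every (R₁,R₂) ∈ ℝ² with √n·( R̄ − H̄ + ((log n)/(2n))·1 − (C/n)·1 ) ∈ Q_inv(𝖵,ε), there exists an (n, M₁, M₂, ε) MASC with log M₁ ≤ n·R₁ and log M₂ ≤ n·R₂. -/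

import Mathlib

/-!
Encoders are random maps into bins and the decoder picks the most likely pair in the received pair
of bins. An error at `(x₁, x₂)` needs a competitor that is at least as likely and lies in the same
bins, so the best code has error at most
`E[min (1, N₀ / M₁ + N₁ / M₂ + N₂ / (M₁ M₂))]`, where `N₀`, `N₁`, `N₂` count the competitors that
differ from `(x₁, x₂)` in the first, the second, or both coordinates; for countable alphabets this
holds up to an arbitrarily small truncation error (`MASC.countable_code`).

The competitors are counted by a change of measure: by a Chen–Shao anti-concentration inequality
(`MASC.anticonc`) a sum of `n` independent informations falls in a unit interval with probability
`O(1 / √n)`, and hence the number of sequences of probability at least `e^{-τ}` is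
`O(e^τ / √n)` rather than just `e^τ` (`MASC.count_le`, `MASC.count_pi`). For the conditional
counts the summands are independent but not identically distributed, given the conditioning
sequence; the bound holds when the conditional variances and third moments add up to typical values
(`MASC.Side.count`), which fails with probability `O(1 / n)` by Chebyshev's inequality
(`MASC.Side.bad_prob`). The gained factor `1 / √n` is the source of the `(log n) / (2 n)` term: the
thresholds for the information sums become `log (√n M₁)`, `log (√n M₂)`, `log (√n M₁ M₂)`. Below the
thresholds the error contributes truncated exponential moments, which anti-concentration bounds by
`O(1 / √n)` (`MASC.trunc_integral_le`, `MASC.one_shot`).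

It remains to compare the probability that all three information sums are below their thresholds
with its Gaussian counterpart. The dispersion matrix may be singular (for independent sources it
always is), so the multivariate Berry–Esseen bound `MASC.berryEsseen` only assumes positive diagonal
entries. It is proved by Lindeberg replacement under Gaussian smoothing: the smoothing removal uses
only anti-concentration of the coordinates, the replacement step is a Taylor expansion in which the
shifts lie in the range of `A`, and the two are closed up by induction on `n`.

Finally, the Gaussian orthant probability grows at least linearly when the orthant is enlarged along
the diagonal (`MASC.growth`), uniformly over orthants of probability in `[1 - ε, 1 - ε / 2]`. A
shift of the rates by `C / n` therefore pays for all errors of order `1 / √n`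
(`MASC.choose_sizes`).
-/

/-- `P[Z ≤ z]` for the centered Gaussian vector `Z = A·W` in `ℝ^d`, where `W` is a vector of
`d` independent standard Gaussians (so `Z` has covariance `A·Aᵀ`). -/
noncomputable def stdGaussianCdf {d : ℕ} (A : Matrix (Fin d) (Fin d) ℝ) (z : Fin d → ℝ) : ℝ :=
  ((MeasureTheory.Measure.map (fun w => A.mulVec w)
      (MeasureTheory.Measure.pi fun _ : Fin d => ProbabilityTheory.gaussianReal 0 1))
    {y | ∀ i, y i ≤ z i}).toReal

/-! ### Anti-concentration of independent sums -/

namespace MASC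
open MeasureTheory ProbabilityTheory
open scoped ENNReal

/-- The identity centred at `c` and clipped at height `r`. -/
noncomputable def clip (c r w : ℝ) : ℝ := max (-r) (min r (w - c))

lemma clip_mono {c r w w' : ℝ} (h : w ≤ w') : clip c r w ≤ clip c r w' := by
  unfold clip; gcongr

lemma abs_clip_le {c r w : ℝ} (hr : 0 ≤ r) : |clip c r w| ≤ r := by
  unfold clip
  rw [abs_le]
  constructor
  · exact le_max_left _ _
  · exact max_le (by linarith) (min_le_left _ _)

lemma measurable_clip (c r : ℝ) : Measurable (clip c r) := by
  unfold clip; fun_prop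

lemma mul_clip_sub_nonneg {c r w x : ℝ} : 0 ≤ x * (clip c r w - clip c r (w - x)) := by
  rcases le_total 0 x with h | h
  · have := clip_mono (c := c) (r := r) (w := w - x) (w' := w) (by linarith)
    exact mul_nonneg h (by linarith)
  · have := clip_mono (c := c) (r := r) (w := w) (w' := w - x) (by linarith)
    exact mul_nonneg_of_nonpos_of_nonpos h (by linarith)

/-- On the interval `[a, b]` the increment of the clipped identity dominates `min δ |x|`. -/
lemma le_mul_clip_sub {a b δ w x : ℝ} (hδ : 0 ≤ δ) (ha : a ≤ w) (hb : w ≤ b) :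
    |x| * min δ |x| ≤
      x * (clip ((a + b) / 2) ((b - a) / 2 + δ) w - clip ((a + b) / 2) ((b - a) / 2 + δ) (w - x)) := by
  have e1 : clip ((a + b) / 2) ((b - a) / 2 + δ) w = w - (a + b) / 2 := by
    unfold clip
    rw [min_eq_right (by linarith), max_eq_right (by linarith)]
  rw [e1]
  unfold clip
  rcases le_total 0 x with h | h
  · rw [abs_of_nonneg h]
    apply mul_le_mul_of_nonneg_left _ h
    rcases max_cases (-((b - a) / 2 + δ)) (min ((b - a) / 2 + δ) (w - x - (a + b) / 2)) with h1 | h1 <;>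
    rcases min_cases ((b - a) / 2 + δ) (w - x - (a + b) / 2) with h2 | h2 <;>
    rcases min_cases δ x with h3 | h3 <;> linarith
  · rw [abs_of_nonpos h]
    rw [← neg_mul_neg x]
    apply mul_le_mul_of_nonneg_left _ (by linarith)
    rcases max_cases (-((b - a) / 2 + δ)) (min ((b - a) / 2 + δ) (w - x - (a + b) / 2)) with h1 | h1 <;>
    rcases min_cases ((b - a) / 2 + δ) (w - x - (a + b) / 2) with h2 | h2 <;>
    rcases min_cases δ (-x) with h3 | h3 <;> linarith

lemma sq_sub_le_mul_min {δ x : ℝ} (hδ : 0 < δ) :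
    x ^ 2 - |x| ^ 3 / (4 * δ) ≤ |x| * min δ |x| := by
  rw [← sq_abs]
  have hx := abs_nonneg x
  generalize |x| = y at hx
  rw [sub_le_iff_le_add, ← sub_le_iff_le_add', le_div_iff₀ (by positivity)]
  rcases min_cases δ y with ⟨h, h'⟩ | ⟨h, h'⟩ <;> rw [h]
  · nlinarith [mul_nonneg hx (sq_nonneg (y - 2 * δ))]
  · nlinarith [pow_nonneg hx 3]

/-- Anti-concentration of a sum `W` of independent centred variables, by the Chen–Shao argument:
for a clipped identity `f` around the interval, Stein's identity bounds `E[W f(W)]` from below by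
the mass of the interval, while `|f| ≤ r` bounds it from above. -/
theorem anticonc {Ω : Type*} [MeasurableSpace Ω] (μ : Measure Ω) [IsProbabilityMeasure μ] {n : ℕ}
    (ξ : Fin n → Ω → ℝ) (hind : iIndepFun ξ μ) (hmeas : ∀ j, Measurable (ξ j))
    (h3 : ∀ j, MemLp (ξ j) 3 μ) (h0 : ∀ j, ∫ ω, ξ j ω ∂μ = 0) (B2 Γ : ℝ)
    (hB : B2 = ∑ j, ∫ ω, ξ j ω ^ 2 ∂μ) (hΓ : Γ = ∑ j, ∫ ω, |ξ j ω| ^ 3 ∂μ) (hpos : 0 < B2)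
    (a b : ℝ) (hab : a ≤ b) :
    μ.real {ω | a ≤ ∑ j, ξ j ω ∧ ∑ j, ξ j ω ≤ b} ≤ (b - a) / √B2 + 2 * Γ / (B2 * √B2) := by
  have h2 : ∀ j, MemLp (ξ j) 2 μ := fun j => (h3 j).mono_exponent (by norm_num)
  have h1 : ∀ j, Integrable (ξ j) μ := fun j => (h2 j).integrable (by norm_num)
  have hi2 : ∀ j, Integrable (fun ω => ξ j ω ^ 2) μ := fun j => (h2 j).integrable_sq
  have hi3 : ∀ j, Integrable (fun ω => |ξ j ω| ^ 3) μ := fun j => by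
    have := (h3 j).integrable_norm_pow (p := 3) (by norm_num)
    simpa [Real.norm_eq_abs] using this
  have hΓ0 : 0 ≤ Γ := by
    rw [hΓ]; exact Finset.sum_nonneg fun j _ => integral_nonneg fun ω => by positivity
  have hΓpos : 0 < Γ := by
    rcases hΓ0.lt_or_eq with h | h
    · exact h
    exfalso
    rw [hΓ] at h
    have hz := (Finset.sum_eq_zero_iff_of_nonneg
      (fun j _ => integral_nonneg (fun ω => by positivity))).1 h.symm
    have : B2 = 0 := by
      rw [hB]
      refine Finset.sum_eq_zero fun j hj => ?_
      have := (integral_eq_zero_iff_of_nonneg (fun ω => by positivity) (hi3 j)).1 (hz j hj)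
      rw [integral_eq_zero_iff_of_nonneg (fun ω => by positivity) (hi2 j)]
      filter_upwards [this] with ω hω
      simpa using hω
    linarith
  set W : Ω → ℝ := fun ω => ∑ j, ξ j ω with hW
  have hWm : Measurable W := Finset.measurable_sum _ fun j _ => hmeas j
  have hW2 : MemLp W 2 μ := memLp_finsetSum _ fun j _ => h2 j
  set δ := Γ / (2 * B2) with hδdef
  have hδ : 0 < δ := by positivity
  set r := (b - a) / 2 + δ with hr
  have hr0 : 0 ≤ r := by rw [hr]; linarith
  set f := clip ((a + b) / 2) r with hf
  have hfm : Measurable f := measurable_clip _ _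
  have hfb : ∀ w, |f w| ≤ r := fun w => abs_clip_le hr0
  set Yj : Fin n → Ω → ℝ := fun j ω => |ξ j ω| * min δ |ξ j ω| with hYj
  set Y : Ω → ℝ := fun ω => ∑ j, Yj j ω with hY
  have hYjm : ∀ j, Measurable (Yj j) := fun j => by
    have := hmeas j
    simp only [hYj]; fun_prop
  have hYjle : ∀ j ω, |Yj j ω| ≤ δ * |ξ j ω| := fun j ω => by
    simp only [hYj]
    rw [abs_of_nonneg (by positivity), mul_comm]
    gcongr
    exact min_le_left _ _
  have hYj2 : ∀ j, MemLp (Yj j) 2 μ := fun j =>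
    ((h2 j).const_mul δ).mono (hYjm j).aestronglyMeasurable (Filter.Eventually.of_forall fun ω => by
      simp only [Real.norm_eq_abs, abs_mul, abs_of_pos hδ]
      exact hYjle j ω)
  have hY2 : MemLp Y 2 μ := memLp_finsetSum _ fun j _ => hYj2 j
  have hY1 : Integrable Y μ := hY2.integrable (by norm_num)
  have hEY : B2 / 2 ≤ ∫ ω, Y ω ∂μ := by
    simp only [hY]
    rw [integral_finsetSum _ fun j _ => (hYj2 j).integrable (by norm_num)]
    have : ∀ j, ∫ ω, ξ j ω ^ 2 ∂μ - (∫ ω, |ξ j ω| ^ 3 ∂μ) / (4 * δ) ≤ ∫ ω, Yj j ω ∂μ := fun j => by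
      rw [← integral_div, ← integral_sub (hi2 j) ((hi3 j).div_const _)]
      exact integral_mono ((hi2 j).sub ((hi3 j).div_const _)) ((hYj2 j).integrable (by norm_num))
        fun ω => sq_sub_le_mul_min hδ
    calc B2 / 2 = B2 - Γ / (4 * δ) := by rw [hδdef]; field_simp; ring
      _ = ∑ j, (∫ ω, ξ j ω ^ 2 ∂μ - (∫ ω, |ξ j ω| ^ 3 ∂μ) / (4 * δ)) := by
        rw [Finset.sum_sub_distrib, ← Finset.sum_div, ← hB, ← hΓ]
      _ ≤ _ := Finset.sum_le_sum fun j _ => this j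
  -- the first absolute moment of a square integrable variable
  have habs : ∀ Z : Ω → ℝ, MemLp Z 2 μ → ∀ s : ℝ, ∫ ω, Z ω ^ 2 ∂μ ≤ s → ∫ ω, |Z ω| ∂μ ≤ √s := by
    intro Z hZ s hs
    apply Real.le_sqrt_of_sq_le
    refine le_trans ?_ hs
    have hv := variance_nonneg |Z| μ
    rw [variance_eq_sub hZ.abs] at hv
    simp only [Pi.pow_apply, Pi.abs_apply, sq_abs] at hv
    linarith
  have hEW2 : ∫ ω, W ω ^ 2 ∂μ = B2 := by
    have hv : variance W μ = ∑ j, variance (ξ j) μ := by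
      have := IndepFun.variance_sum (X := ξ) (s := Finset.univ) (fun i _ => h2 i)
        (fun i _ j _ hij => hind.indepFun hij)
      rw [← this]; congr 1; ext ω; simp [hW]
    have hW0 : ∫ ω, W ω ∂μ = 0 := by
      simp only [hW]
      rw [integral_finsetSum _ fun j _ => h1 j]
      simp [h0]
    rw [variance_of_integral_eq_zero hWm.aemeasurable hW0] at hv
    rw [hv, hB]
    refine Finset.sum_congr rfl fun j _ => ?_
    rw [variance_of_integral_eq_zero (hmeas j).aemeasurable (h0 j)]
  have hEW : ∫ ω, |W ω| ∂μ ≤ √B2 := habs W hW2 _ hEW2.le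
  have hYdev : ∫ ω, |Y ω - ∫ ω', Y ω' ∂μ| ∂μ ≤ δ * √B2 := by
    have : δ * √B2 = √(δ ^ 2 * B2) := by
      rw [Real.sqrt_mul (by positivity), Real.sqrt_sq hδ.le]
    rw [this]
    refine habs (fun ω => Y ω - ∫ ω', Y ω' ∂μ) (hY2.sub (memLp_const _)) _ ?_
    rw [← variance_eq_integral hY2.1.aemeasurable]
    have hindY : iIndepFun Yj μ :=
      hind.comp (fun _ x => |x| * min δ |x|) (fun _ => by fun_prop)
    have := IndepFun.variance_sum (X := Yj) (s := Finset.univ) (fun i _ => hYj2 i)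
        (fun i _ j _ hij => hindY.indepFun hij)
    have e : Y = ∑ j, Yj j := by ext ω; simp [hY]
    rw [e, this, hB, Finset.mul_sum]
    refine Finset.sum_le_sum fun j _ => (variance_le_expectation_sq (hYj2 j).1).trans ?_
    rw [← integral_const_mul]
    refine integral_mono (hYj2 j).integrable_sq ((hi2 j).const_mul _) fun ω => ?_
    simp only [Pi.pow_apply]
    rw [← sq_abs, ← sq_abs (ξ j ω), ← mul_pow]
    exact pow_le_pow_left₀ (abs_nonneg _) (hYjle j ω) 2
  set I : Set Ω := {ω | a ≤ W ω ∧ W ω ≤ b} with hI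
  have hIm : MeasurableSet I :=
    (measurableSet_le measurable_const hWm).inter (measurableSet_le hWm measurable_const)
  have hbound : ∀ g : Ω → ℝ, Measurable g → ∀ j, Integrable (fun ω => ξ j ω * f (g ω)) μ :=
    fun g hg j => by
      refine ((h1 j).norm.const_mul r).mono
        ((hmeas j).mul (hfm.comp hg)).aestronglyMeasurable (Filter.Eventually.of_forall fun ω => ?_)
      simp only [Real.norm_eq_abs, abs_mul, abs_abs, abs_of_nonneg hr0]
      rw [mul_comm]
      exact mul_le_mul_of_nonneg_right (hfb _) (abs_nonneg _)
  have hWf : Integrable (fun ω => W ω * f (W ω)) μ := by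
    simp only [hW, Finset.sum_mul]
    exact integrable_finsetSum _ fun j _ => hbound _ hWm j
  -- Stein's identity: independence lets one subtract `f (W - ξ j)` for free
  have hstein : ∫ ω, W ω * f (W ω) ∂μ
      = ∫ ω, ∑ j, ξ j ω * (f (W ω) - f (W ω - ξ j ω)) ∂μ := by
    simp only [mul_sub]
    have hb2 : ∀ j, Integrable (fun ω => ξ j ω * f (W ω) - ξ j ω * f (W ω - ξ j ω)) μ :=
      fun j => (hbound _ hWm j).sub (hbound _ (hWm.sub (hmeas j)) j)
    rw [integral_finsetSum _ fun j _ => hb2 j]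
    conv_lhs => simp only [hW, Finset.sum_mul]
    rw [integral_finsetSum _ fun j _ => hbound _ hWm j]
    refine Finset.sum_congr rfl fun j _ => ?_
    rw [integral_sub (hbound _ hWm j)
      (hbound (fun ω => W ω - ξ j ω) (hWm.sub (hmeas j)) j)]
    have hz : ∫ ω, ξ j ω * f (W ω - ξ j ω) ∂μ = 0 := by
      have hi := hind.indepFun_finsetSum_of_notMem hmeas (Finset.notMem_erase j Finset.univ)
      have hi' := (hi.comp hfm measurable_id).symm
      have e : ∀ ω, W ω - ξ j ω = (∑ i ∈ Finset.univ.erase j, ξ i) ω := fun ω => by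
        simp only [hW, Finset.sum_apply]
        rw [← Finset.add_sum_erase _ _ (Finset.mem_univ j)]; ring
      simp only [e]
      have := hi'.integral_fun_mul_eq_mul_integral (hmeas j).aestronglyMeasurable
        (hfm.comp (by fun_prop)).aestronglyMeasurable
      simp only [Function.comp, id] at this
      rw [this, h0, zero_mul]
    rw [hz, sub_zero]
  have hlow : ∫ ω, I.indicator Y ω ∂μ ≤ ∫ ω, W ω * f (W ω) ∂μ := by
    rw [hstein]
    refine integral_mono (hY1.indicator hIm) (integrable_finsetSum _ fun j _ => ?_) fun ω => ?_
    · simp only [mul_sub]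
      exact (hbound _ hWm j).sub (hbound _ (hWm.sub (hmeas j)) j)
    · by_cases hω : ω ∈ I
      · rw [Set.indicator_of_mem hω]
        exact Finset.sum_le_sum fun j _ => le_mul_clip_sub hδ.le hω.1 hω.2
      · rw [Set.indicator_of_notMem hω]
        exact Finset.sum_nonneg fun j _ => mul_clip_sub_nonneg
  have hup : ∫ ω, W ω * f (W ω) ∂μ ≤ r * √B2 := by
    calc ∫ ω, W ω * f (W ω) ∂μ ≤ ∫ ω, r * |W ω| ∂μ := by
          refine integral_mono hWf ((hW2.integrable (by norm_num)).abs.const_mul r) fun ω => ?_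
          refine (le_abs_self _).trans ?_
          simp only [abs_mul]
          rw [mul_comm]
          exact mul_le_mul_of_nonneg_right (hfb _) (abs_nonneg _)
      _ = r * ∫ ω, |W ω| ∂μ := integral_const_mul _ _
      _ ≤ _ := mul_le_mul_of_nonneg_left hEW hr0
  have hlow2 : μ.real I * (B2 / 2) - δ * √B2 ≤ ∫ ω, I.indicator Y ω ∂μ := by
    have hdi : Integrable (fun ω => |Y ω - ∫ ω', Y ω' ∂μ|) μ :=
      (hY1.sub (integrable_const _)).abs
    have : ∫ ω, (I.indicator (fun _ => B2 / 2) ω - |Y ω - ∫ ω', Y ω' ∂μ|) ∂μ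
        ≤ ∫ ω, I.indicator Y ω ∂μ := by
      refine integral_mono (((integrable_const _).indicator hIm).sub hdi)
        (hY1.indicator hIm) fun ω => ?_
      by_cases hω : ω ∈ I
      · simp only [Set.indicator_of_mem hω]
        have := neg_abs_le (Y ω - ∫ ω', Y ω' ∂μ)
        linarith
      · simp only [Set.indicator_of_notMem hω]
        have := abs_nonneg (Y ω - ∫ ω', Y ω' ∂μ)
        linarith
    rw [integral_sub ((integrable_const _).indicator hIm) hdi, integral_indicator_const _ hIm,
      smul_eq_mul] at this
    linarith
  have hfin : μ.real I * (B2 / 2) ≤ ((b - a) / 2 + 2 * δ) * √B2 := by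
    rw [hr] at hup
    linarith
  have hs : 0 < √B2 := Real.sqrt_pos.2 hpos
  have hss : √B2 * √B2 = B2 := Real.mul_self_sqrt hpos.le
  have : (b - a) / √B2 + 2 * Γ / (B2 * √B2) = ((b - a) / 2 + 2 * δ) * √B2 / (B2 / 2) := by
    rw [hδdef]
    field_simp
    rw [show √B2 ^ 2 = B2 by rw [sq, hss]]
  rw [this, le_div_iff₀ (by positivity)]
  exact hfin

/-- If the variances add up to at least `n v₀` and the third absolute moments to at most `n T₀`, then
an interval of length `l` has probability `O((l + 1) / √n)`. -/
theorem anticonc_sqrt {Ω : Type*} [MeasurableSpace Ω] (μ : Measure Ω) [IsProbabilityMeasure μ] {n : ℕ}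
    (ξ : Fin n → Ω → ℝ) (hind : iIndepFun ξ μ) (hmeas : ∀ j, Measurable (ξ j))
    (h3 : ∀ j, MemLp (ξ j) 3 μ) (h0 : ∀ j, ∫ ω, ξ j ω ∂μ = 0) (v₀ T₀ : ℝ) (hv : 0 < v₀)
    (hn : 0 < n)
    (hB : n * v₀ ≤ ∑ j, ∫ ω, ξ j ω ^ 2 ∂μ) (hΓ : ∑ j, ∫ ω, |ξ j ω| ^ 3 ∂μ ≤ n * T₀)
    (a b : ℝ) (hab : a ≤ b) :
    μ.real {ω | a ≤ ∑ j, ξ j ω ∧ ∑ j, ξ j ω ≤ b} ≤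
      ((b - a) / √v₀ + 2 * T₀ / (v₀ * √v₀)) / √n := by
  have hn' : (0 : ℝ) < n := by exact_mod_cast hn
  have hΓ0 : 0 ≤ ∑ j, ∫ ω, |ξ j ω| ^ 3 ∂μ :=
    Finset.sum_nonneg fun j _ => integral_nonneg fun ω => by positivity
  have hT : 0 ≤ T₀ := nonneg_of_mul_nonneg_right (hΓ0.trans hΓ) hn'
  refine (anticonc μ ξ hind hmeas h3 h0 _ _ rfl rfl ((by positivity : 0 < n * v₀).trans_le hB)
    a b hab).trans ?_
  have e : ((b - a) / √v₀ + 2 * T₀ / (v₀ * √v₀)) / √n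
      = (b - a) / √(n * v₀) + 2 * (n * T₀) / (n * v₀ * √(n * v₀)) := by
    rw [Real.sqrt_mul hn'.le]
    field_simp
  rw [e]
  have h1 : √(n * v₀) ≤ √(∑ j, ∫ ω, ξ j ω ^ 2 ∂μ) := Real.sqrt_le_sqrt hB
  have h2 : 0 < √(n * v₀) := Real.sqrt_pos.2 (by positivity)
  have h3 : 0 < n * v₀ := by positivity
  gcongr

/-- If `W` puts mass at most `q` on each interval of length one, the truncated exponential moment
`E[exp (W - τ); W ≤ τ]` is at most `2 q`, by slicing `(-∞, τ]` into unit intervals. -/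
theorem exp_trunc_le {Ω : Type*} [MeasurableSpace Ω] (μ : Measure Ω) [IsProbabilityMeasure μ]
    (W : Ω → ℝ) (hW : Measurable W) (q : ℝ) (hq : ∀ a : ℝ, μ.real {ω | a ≤ W ω ∧ W ω ≤ a + 1} ≤ q)
    (τ : ℝ) :
    ∫⁻ ω in {ω | W ω ≤ τ}, ENNReal.ofReal (Real.exp (W ω - τ)) ∂μ ≤ ENNReal.ofReal (2 * q) := by
  have hq0 : 0 ≤ q := measureReal_nonneg.trans (hq 0)
  have hSm : MeasurableSet {ω | W ω ≤ τ} := measurableSet_le hW measurable_const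
  let S : ℕ → Set Ω := fun l => {ω | τ - l - 1 ≤ W ω ∧ W ω ≤ τ - l - 1 + 1}
  have hSl : ∀ l, MeasurableSet (S l) := fun l =>
    (measurableSet_le measurable_const hW).inter (measurableSet_le hW measurable_const)
  rw [← lintegral_indicator hSm]
  have hpt : ∀ ω, Set.indicator {ω | W ω ≤ τ} (fun ω => ENNReal.ofReal (Real.exp (W ω - τ))) ω
      ≤ ∑' l : ℕ, (S l).indicator (fun _ => ENNReal.ofReal (Real.exp (-1) ^ l)) ω := by
    intro ω
    by_cases h : W ω ≤ τ
    · rw [Set.indicator_of_mem (by exact h)]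
      set l := ⌊τ - W ω⌋₊ with hl
      have h1 : (l : ℝ) ≤ τ - W ω := Nat.floor_le (by linarith)
      have h2 : τ - W ω < l + 1 := Nat.lt_floor_add_one _
      refine le_trans ?_ (ENNReal.le_tsum l)
      rw [Set.indicator_of_mem (by constructor <;> linarith)]
      apply ENNReal.ofReal_le_ofReal
      rw [← Real.exp_nat_mul]
      apply Real.exp_le_exp.2
      linarith
    · rw [Set.indicator_of_notMem (by exact h)]
      exact zero_le
  refine (lintegral_mono hpt).trans ?_
  rw [lintegral_tsum fun l => (measurable_const.indicator (hSl l)).aemeasurable]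
  have hterm : ∀ l, ∫⁻ ω, (S l).indicator (fun _ => ENNReal.ofReal (Real.exp (-1) ^ l)) ω ∂μ
      ≤ ENNReal.ofReal (q * Real.exp (-1) ^ l) := fun l => by
    rw [lintegral_indicator_const (hSl l), ← ofReal_measureReal,
      ← ENNReal.ofReal_mul (by positivity), mul_comm]
    apply ENNReal.ofReal_le_ofReal
    exact mul_le_mul_of_nonneg_right (hq _) (by positivity)
  refine (ENNReal.tsum_le_tsum hterm).trans ?_
  have he : Real.exp (-1) ≤ 1 / 2 := by
    rw [Real.exp_neg, one_div]
    exact inv_anti₀ (by norm_num) (by have := Real.add_one_le_exp 1; linarith)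
  have hsum : HasSum (fun l : ℕ => q * Real.exp (-1) ^ l) (q * (1 - Real.exp (-1))⁻¹) :=
    (hasSum_geometric_of_lt_one (Real.exp_pos _).le (by linarith)).mul_left q
  rw [← ENNReal.ofReal_tsum_of_nonneg (fun l => by positivity) hsum.summable, hsum.tsum_eq]
  apply ENNReal.ofReal_le_ofReal
  rw [mul_comm]
  refine mul_le_mul_of_nonneg_right ?_ hq0
  rw [inv_le_comm₀ (by linarith) (by norm_num)]
  linarith

end MASC

/-! ### The standard Gaussian measure -/

namespace MASC
open MeasureTheory ProbabilityTheory
open scoped ENNReal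

/-- The standard Gaussian measure on `ℝ^d`. -/
noncomputable abbrev stdG (d : ℕ) : Measure (Fin d → ℝ) :=
  Measure.pi fun _ : Fin d => gaussianReal 0 1

lemma map_conv_one (a b c : ℝ) (h : a ^ 2 + b ^ 2 = c ^ 2) :
    Measure.map (fun q : ℝ × ℝ => a * q.1 + b * q.2) ((gaussianReal 0 1).prod (gaussianReal 0 1))
      = Measure.map (fun x => c * x) (gaussianReal 0 1) := by
  have e1 : (fun q : ℝ × ℝ => a * q.1 + b * q.2)
      = (fun q : ℝ × ℝ => q.1 + q.2) ∘ (Prod.map (fun x => a * x) (fun x => b * x)) := by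
    ext q; rfl
  rw [e1, ← Measure.map_map (by fun_prop) (by fun_prop),
    ← Measure.map_prod_map _ _ (by fun_prop) (by fun_prop),
    gaussianReal_map_const_mul, gaussianReal_map_const_mul, gaussianReal_map_const_mul]
  change (gaussianReal _ _) ∗ (gaussianReal _ _) = _
  rw [gaussianReal_conv_gaussianReal]
  congr 1
  · simp
  · ext; simp [h]

/-- Rotation invariance: an orthogonal combination of two independent standard Gaussian vectors
is a rescaled standard Gaussian vector. -/
lemma map_rot {d : ℕ} (a b c : ℝ) (h : a ^ 2 + b ^ 2 = c ^ 2) :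
    Measure.map (fun q : (Fin d → ℝ) × (Fin d → ℝ) => a • q.1 + b • q.2)
        ((stdG d).prod (stdG d))
      = Measure.map (fun x => c • x) (stdG d) := by
  have mp := measurePreserving_arrowProdEquivProdArrow ℝ ℝ (Fin d)
    (fun _ => gaussianReal 0 1) (fun _ => gaussianReal 0 1)
  rw [← mp.map_eq, Measure.map_map (by fun_prop) mp.measurable]
  have e1 : ((fun q : (Fin d → ℝ) × (Fin d → ℝ) => a • q.1 + b • q.2)
      ∘ (MeasurableEquiv.arrowProdEquivProdArrow ℝ ℝ (Fin d)))
      = fun (x : Fin d → ℝ × ℝ) i => (fun q : ℝ × ℝ => a * q.1 + b * q.2) (x i) := by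
    ext x i; rfl
  have e2 : (fun x : Fin d → ℝ => c • x) = fun x i => (fun x => c * x) (x i) := by
    ext x i; rfl
  have s1 : SigmaFinite (Measure.map (fun q : ℝ × ℝ => a * q.1 + b * q.2)
      ((gaussianReal 0 1).prod (gaussianReal 0 1))) := by
    have := Measure.isProbabilityMeasure_map
      (μ := (gaussianReal 0 1).prod (gaussianReal 0 1))
      (f := fun q : ℝ × ℝ => a * q.1 + b * q.2) (by fun_prop)
    infer_instance
  have s2 : SigmaFinite (Measure.map (fun x : ℝ => c * x) (gaussianReal 0 1)) := by
    have := Measure.isProbabilityMeasure_map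
      (μ := (gaussianReal 0 1)) (f := fun q : ℝ => c * q) (by fun_prop)
    infer_instance
  rw [e1, e2, Measure.pi_map_pi (f := fun (_ : Fin d) (x : ℝ) => c * x) (fun i => by fun_prop),
    Measure.pi_map_pi (f := fun (_ : Fin d) (q : ℝ × ℝ) => a * q.1 + b * q.2)
      (fun i => by fun_prop)]
  congr 1
  ext1 i
  exact map_conv_one a b c h

lemma gaussianReal_shift (h : ℝ) :
    gaussianReal h 1 = (gaussianReal 0 1).withDensity
      (fun x => ENNReal.ofReal (Real.exp (h * x - h ^ 2 / 2))) := by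
  rw [gaussianReal_of_var_ne_zero _ one_ne_zero, gaussianReal_of_var_ne_zero _ one_ne_zero,
    ← withDensity_mul _ (by fun_prop) (by fun_prop)]
  congr 1
  ext x
  simp only [gaussianPDF, gaussianPDFReal, Pi.mul_apply]
  rw [← ENNReal.ofReal_mul (by positivity), mul_assoc _ (Real.exp _) (Real.exp _),
    ← Real.exp_add]
  congr 3
  push_cast
  ring

/-- The Cameron–Martin formula for the standard Gaussian measure. -/
lemma map_add_stdG {d : ℕ} (h : Fin d → ℝ) :
    Measure.map (fun w => w + h) (stdG d) = (stdG d).withDensity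
      (fun w => ENNReal.ofReal (Real.exp (∑ i, h i * w i - (∑ i, h i ^ 2) / 2))) := by
  have e2 : (fun w : Fin d → ℝ => w + h) = fun x i => (fun i (y : ℝ) => y + h i) i (x i) := by
    ext x i; rfl
  have s2 : ∀ i, SigmaFinite (Measure.map (fun y : ℝ => y + h i) (gaussianReal 0 1)) := by
    intro i
    have := Measure.isProbabilityMeasure_map
      (μ := (gaussianReal 0 1)) (f := fun q : ℝ => q + h i) (by fun_prop)
    infer_instance
  rw [e2, Measure.pi_map_pi (f := fun i (y : ℝ) => y + h i) (fun i => by fun_prop)]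
  refine Measure.pi_eq fun s hs => ?_
  rw [withDensity_apply _ (MeasurableSet.univ_pi hs), ← lintegral_indicator (MeasurableSet.univ_pi hs)]
  have key : ∀ w : Fin d → ℝ, (Set.univ.pi s).indicator
      (fun w => ENNReal.ofReal (Real.exp (∑ i, h i * w i - (∑ i, h i ^ 2) / 2))) w
      = ∏ i, (s i).indicator (fun x => ENNReal.ofReal (Real.exp (h i * x - h i ^ 2 / 2))) (w i) := by
    intro w
    by_cases hw : w ∈ Set.univ.pi s
    · rw [Set.indicator_of_mem hw, Finset.sum_div, ← Finset.sum_sub_distrib, Real.exp_sum,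
        ENNReal.ofReal_prod_of_nonneg (fun i _ => (Real.exp_pos _).le)]
      exact Finset.prod_congr rfl fun i _ => by
        rw [Set.indicator_of_mem (hw i trivial)]
    · rw [Set.indicator_of_notMem hw]
      simp only [Set.mem_pi, Set.mem_univ, true_implies, not_forall] at hw
      obtain ⟨i, hi⟩ := hw
      exact (Finset.prod_eq_zero (Finset.mem_univ i) (Set.indicator_of_notMem hi _)).symm
  simp_rw [key]
  have hm : ∀ i, Measurable ((s i).indicator
      (fun x => ENNReal.ofReal (Real.exp (h i * x - h i ^ 2 / 2)))) := fun i =>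
    Measurable.indicator (by fun_prop) (hs i)
  rw [lintegral_prod_eq_prod_lintegral_of_indepFun Finset.univ
    (fun i (w : Fin d → ℝ) => (s i).indicator
      (fun x => ENNReal.ofReal (Real.exp (h i * x - h i ^ 2 / 2))) (w i))
    (iIndepFun_pi (X := fun i => (s i).indicator
      (fun x => ENNReal.ofReal (Real.exp (h i * x - h i ^ 2 / 2))))
      fun i => (hm i).aemeasurable) (fun i => (hm i).comp (measurable_pi_apply i))]
  refine Finset.prod_congr rfl fun i _ => ?_
  have := (measurePreserving_eval (fun _ : Fin d => gaussianReal 0 1) i).lintegral_comp (hm i)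
  simp only [Function.eval] at this
  rw [this, lintegral_indicator (hs i), ← withDensity_apply _ (hs i), ← gaussianReal_shift,
    gaussianReal_map_add_const, zero_add]

/-- Cameron–Martin in the form used for the Taylor expansion: the dependence on `h` is moved from
the possibly discontinuous `ψ` to a smooth density. -/
lemma integral_shift {d : ℕ} (ψ : (Fin d → ℝ) → ℝ) (hψ : Measurable ψ) (h : Fin d → ℝ) :
    ∫ w, ψ (w + h) ∂stdG d
      = ∫ w, ψ w * Real.exp (∑ i, h i * w i - (∑ i, h i ^ 2) / 2) ∂stdG d := by
  have := integral_map (μ := stdG d) (φ := fun w => w + h) (f := ψ) (by fun_prop)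
    hψ.aestronglyMeasurable
  rw [← this, map_add_stdG, integral_withDensity_eq_integral_toReal_smul (by fun_prop)
    (by simp)]
  refine integral_congr_ae (Filter.Eventually.of_forall fun w => ?_)
  simp only [ENNReal.toReal_ofReal (Real.exp_pos _).le, smul_eq_mul]
  ring

/-- The `ℓ¹` norm of a vector. -/
noncomputable def nrm {d : ℕ} (w : Fin d → ℝ) : ℝ := ∑ i, |w i|

lemma nrm_nonneg {d : ℕ} (w : Fin d → ℝ) : 0 ≤ nrm w := Finset.sum_nonneg fun _ _ => abs_nonneg _

@[fun_prop]
lemma measurable_nrm {d : ℕ} : Measurable (nrm : (Fin d → ℝ) → ℝ) := by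
  unfold nrm; fun_prop

lemma integrable_exp_nrm {d : ℕ} (t : ℝ) :
    Integrable (fun w => Real.exp (t * nrm w)) (stdG d) := by
  have h1 : Integrable (fun x : ℝ => Real.exp (t * |x|)) (gaussianReal 0 1) := by
    have a := integrable_exp_mul_gaussianReal (μ := 0) (v := 1) t
    have b := integrable_exp_mul_gaussianReal (μ := 0) (v := 1) (-t)
    refine (a.add b).mono' (by fun_prop) (Filter.Eventually.of_forall fun x => ?_)
    rw [Real.norm_of_nonneg (Real.exp_pos _).le]
    simp only [Pi.add_apply]
    rcases abs_cases x with ⟨h, _⟩ | ⟨h, _⟩ <;> rw [h]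
    · linarith [Real.exp_pos (-t * x)]
    · have : t * -x = -t * x := by ring
      rw [this]; linarith [Real.exp_pos (t * x)]
  have := Integrable.fintype_prod (ι := Fin d) (μ := fun _ => gaussianReal 0 1)
    (f := fun _ x => Real.exp (t * |x|)) (fun _ => h1)
  refine this.congr (Filter.Eventually.of_forall fun w => ?_)
  simp only [nrm, Finset.mul_sum, Real.exp_sum]

lemma integral_coord {d : ℕ} (f : ℝ → ℝ) (hf : Measurable f) (j : Fin d) :
    ∫ w, f (w j) ∂stdG d = ∫ x, f x ∂gaussianReal 0 1 := by
  have := (measurePreserving_eval (fun _ : Fin d => gaussianReal 0 1) j).map_eq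
  rw [← this, integral_map (measurable_pi_apply j).aemeasurable hf.aestronglyMeasurable]

lemma memLp_coord {d : ℕ} (p : ℝ≥0∞) (hp : p ≠ ∞) (j : Fin d) :
    MemLp (fun w : Fin d → ℝ => w j) p (stdG d) :=
  (memLp_id_gaussianReal' (μ := 0) (v := 1) p hp).comp_measurePreserving
    (measurePreserving_eval (fun _ : Fin d => gaussianReal 0 1) j)

lemma integral_coord_id {d : ℕ} (j : Fin d) : ∫ w, w j ∂stdG d = 0 := by
  rw [integral_coord (fun x => x) measurable_id j]
  simp [integral_id_gaussianReal]

lemma integral_coord_mul {d : ℕ} (j k : Fin d) :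
    ∫ w, w j * w k ∂stdG d = if j = k then 1 else 0 := by
  split_ifs with h
  · subst h
    have h1 := integral_coord (fun x => x * x) (by fun_prop) j
    rw [h1]
    have h2 := variance_of_integral_eq_zero (μ := gaussianReal 0 1) (X := id) (by fun_prop)
      (by simp [integral_id_gaussianReal])
    rw [variance_id_gaussianReal] at h2
    simpa [sq] using h2.symm
  · have hind : iIndepFun (fun j (w : Fin d → ℝ) => w j) (stdG d) :=
      iIndepFun_pi (X := fun j x => x) (fun i => by fun_prop)
    rw [(hind.indepFun h).integral_fun_mul_eq_mul_integral
      (measurable_pi_apply j).aestronglyMeasurable (measurable_pi_apply k).aestronglyMeasurable,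
      integral_coord_id, zero_mul]

/-- The law of a linear form of a standard Gaussian vector. -/
lemma map_linear_stdG {d : ℕ} (r : Fin d → ℝ) :
    Measure.map (fun w => ∑ j, r j * w j) (stdG d)
      = gaussianReal 0 (Real.toNNReal (∑ j, r j ^ 2)) := by
  have hind : iIndepFun (fun j (w : Fin d → ℝ) => r j * w j) (stdG d) :=
    iIndepFun_pi (X := fun j x => r j * x) (fun i => by fun_prop)
  have hlaw : ∀ j, HasGaussianLaw (fun w : Fin d → ℝ => r j * w j) (stdG d) := by
    intro j
    refine ⟨?_⟩
    have : Measure.map (fun w : Fin d → ℝ => r j * w j) (stdG d)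
        = Measure.map (fun x => r j * x) (gaussianReal 0 1) := by
      rw [← (measurePreserving_eval (fun _ : Fin d => gaussianReal 0 1) j).map_eq,
        Measure.map_map (by fun_prop) (by fun_prop)]
      rfl
    rw [this, gaussianReal_map_const_mul]
    infer_instance
  have hs := iIndepFun.hasGaussianLaw_fun_sum hlaw hind
  rw [hs.map_eq_gaussianReal]
  have hm : ∀ j, MemLp (fun w : Fin d → ℝ => w j) 2 (stdG d) := memLp_coord 2 (by simp)
  have hmean : ∫ w, ∑ j, r j * w j ∂stdG d = 0 := by
    rw [integral_finsetSum _ fun j _ => ((hm j).integrable (by norm_num)).const_mul _]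
    refine Finset.sum_eq_zero fun j _ => ?_
    rw [integral_const_mul, integral_coord_id, mul_zero]
  rw [hmean]
  congr 2
  rw [variance_of_integral_eq_zero
    (Measurable.aemeasurable (by fun_prop)) hmean]
  have e : ∀ w : Fin d → ℝ, (∑ j, r j * w j) ^ 2 = ∑ j, ∑ k, r j * r k * (w j * w k) := by
    intro w
    rw [sq, Finset.sum_mul_sum]
    exact Finset.sum_congr rfl fun j _ => Finset.sum_congr rfl fun k _ => by ring
  have hi : ∀ j k, Integrable (fun w : Fin d → ℝ => r j * r k * (w j * w k)) (stdG d) :=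
    fun j k => ((hm j).integrable_mul (hm k)).const_mul _
  simp_rw [e]
  rw [integral_finsetSum _ fun j _ => integrable_finsetSum _ fun k _ => hi j k]
  refine Finset.sum_congr rfl fun j _ => ?_
  rw [integral_finsetSum _ fun k _ => hi j k]
  simp only [integral_const_mul, integral_coord_mul]
  simp [sq]

/-- A nondegenerate centred normal variable has a density bounded by `1 / √v`. -/
lemma gaussianReal_abs_le (v : ℝ) (hv : 0 < v) (a δ : ℝ) (hδ : 0 ≤ δ) :
    (gaussianReal 0 (Real.toNNReal v)).real {x | |x - a| ≤ δ} ≤ 2 / √v * δ := by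
  have hv' : Real.toNNReal v ≠ 0 := by simpa using hv
  have hms : MeasurableSet {x : ℝ | |x - a| ≤ δ} := measurableSet_le (by fun_prop) (by fun_prop)
  rw [gaussianReal_of_var_ne_zero _ hv', measureReal_def, withDensity_apply _ hms]
  have hset : {x : ℝ | |x - a| ≤ δ} = Set.Icc (a - δ) (a + δ) := by
    ext x; simp only [Set.mem_ofPred_eq, Set.mem_Icc, abs_le]
    constructor <;> rintro ⟨h1, h2⟩ <;> constructor <;> linarith
  refine ENNReal.toReal_le_of_le_ofReal (by positivity) ?_
  calc ∫⁻ x in {x | |x - a| ≤ δ}, gaussianPDF 0 v.toNNReal x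
      ≤ ∫⁻ x in {x | |x - a| ≤ δ}, ENNReal.ofReal (1 / √v) := by
        refine lintegral_mono fun x => ?_
        refine ENNReal.ofReal_le_ofReal ?_
        unfold gaussianPDFReal
        rw [Real.coe_toNNReal v hv.le, one_div]
        have h1 : Real.exp (-(x - 0) ^ 2 / (2 * v)) ≤ 1 := by
          rw [Real.exp_le_one_iff]
          exact div_nonpos_of_nonpos_of_nonneg (by nlinarith [sq_nonneg (x - 0)]) (by positivity)
        have h2 : √v ≤ √(2 * Real.pi * v) := by
          refine Real.sqrt_le_sqrt ?_
          nlinarith [Real.pi_gt_three]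
        have h3 : 0 < √v := Real.sqrt_pos.mpr hv
        calc _ ≤ (√(2 * Real.pi * v))⁻¹ * 1 := by gcongr
          _ ≤ (√v)⁻¹ := by rw [mul_one]; gcongr
    _ = ENNReal.ofReal (2 / √v * δ) := by
        rw [setLIntegral_const, hset, Real.volume_Icc, ← ENNReal.ofReal_mul (by positivity)]
        congr 1
        ring

lemma stdG_linear_abs_le {d : ℕ} (r : Fin d → ℝ) (hr : 0 < ∑ j, r j ^ 2) (a δ : ℝ) (hδ : 0 ≤ δ) :
    (stdG d).real {w | |∑ j, r j * w j - a| ≤ δ} ≤ 2 / √(∑ j, r j ^ 2) * δ := by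
  have h := gaussianReal_abs_le _ hr a δ hδ
  rw [← map_linear_stdG, map_measureReal_apply (by fun_prop)
    (measurableSet_le (by fun_prop) (by fun_prop))] at h
  exact h

end MASC

/-! ### Taylor expansion of Gaussian smoothing -/

namespace MASC
open MeasureTheory ProbabilityTheory
open scoped ENNReal

lemma abs_dot_le {d : ℕ} (h w : Fin d → ℝ) : |∑ i, h i * w i| ≤ nrm h * nrm w := by
  unfold nrm
  rw [Finset.sum_mul_sum]
  refine (Finset.abs_sum_le_sum_abs _ _).trans (Finset.sum_le_sum fun i _ => ?_)
  rw [abs_mul]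
  exact Finset.single_le_sum (f := fun j => |h i| * |w j|) (fun j _ => by positivity)
    (Finset.mem_univ i)

lemma sum_sq_le_nrm {d : ℕ} (h : Fin d → ℝ) : ∑ i, h i ^ 2 ≤ nrm h ^ 2 := by
  have := abs_dot_le h h
  rw [sq (nrm h)]
  refine le_trans (le_trans (le_of_eq ?_) (le_abs_self _)) this
  exact Finset.sum_congr rfl fun i _ => sq _

/-- Third-order Taylor remainder of the Cameron–Martin density `exp (s - t / 2)`, where
`s = h · w` and `t = |h|²`. -/
lemma remainder_le (s t a N : ℝ) (ha : 0 ≤ a) (hN : 0 ≤ N) (hs : |s| ≤ a * N) (ht0 : 0 ≤ t)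
    (ht : t ≤ a ^ 2) :
    |Real.exp (s - t / 2) - (1 + s + (s ^ 2 - t) / 2)|
      ≤ a ^ 3 * (7 * Real.exp (2 * (N + 1)) + Real.exp (s - t / 2)) := by
  have hE := Real.exp_pos (s - t / 2)
  have hexpG : 1 + (N + 1) + (N + 1) ^ 2 / 2 + (N + 1) ^ 3 / 6 ≤ Real.exp (N + 1) := by
    have := Real.sum_le_exp_of_nonneg (x := N + 1) (by linarith) 4
    simp [Finset.sum_range_succ, Nat.factorial] at this
    linarith
  have hexp2 : Real.exp (2 * (N + 1)) = Real.exp (N + 1) * Real.exp (N + 1) := by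
    rw [← Real.exp_add]; ring_nf
  have hG1 : 1 ≤ Real.exp (N + 1) := Real.one_le_exp (by linarith)
  obtain ⟨hs1, hs2⟩ := abs_le.mp hs
  rcases le_or_gt a 1 with h1 | h1
  · set x := s - t / 2 with hx
    have hxa : |x| ≤ a * (N + 1) := by
      rw [abs_le]; constructor <;> nlinarith
    have hxG : |x| ≤ N + 1 := hxa.trans (by nlinarith)
    have hc := Complex.norm_exp_sub_sum_le_norm_mul_exp (x : ℂ) 3
    have hr : |Real.exp x - (1 + x + x ^ 2 / 2)| ≤ |x| ^ 3 * Real.exp |x| := by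
      have e1 : Complex.exp (x : ℂ) - ∑ m ∈ Finset.range 3, (x : ℂ) ^ m / (m.factorial : ℂ)
          = ((Real.exp x - (1 + x + x ^ 2 / 2) : ℝ) : ℂ) := by
        simp [Finset.sum_range_succ, Nat.factorial]
      rw [e1, Complex.norm_real, Complex.norm_real] at hc
      exact hc
    have hr2 : |x| ^ 3 * Real.exp |x| ≤ a ^ 3 * (6 * Real.exp (2 * (N + 1))) := by
      calc |x| ^ 3 * Real.exp |x| ≤ (a * (N + 1)) ^ 3 * Real.exp (N + 1) := by gcongr
        _ = a ^ 3 * ((N + 1) ^ 3 * Real.exp (N + 1)) := by ring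
        _ ≤ a ^ 3 * (6 * Real.exp (2 * (N + 1))) := by
            rw [hexp2, ← mul_assoc 6]
            gcongr
            nlinarith [sq_nonneg (N + 1)]
    have hd : |(1 + x + x ^ 2 / 2) - (1 + s + (s ^ 2 - t) / 2)| ≤ a ^ 3 * Real.exp (2 * (N + 1)) := by
      have e : (1 + x + x ^ 2 / 2) - (1 + s + (s ^ 2 - t) / 2) = - (s * t) / 2 + t ^ 2 / 8 := by
        rw [hx]; ring
      rw [e]
      have ha3 : 0 ≤ a ^ 3 := by positivity
      have b1 : |s * t| ≤ a ^ 3 * N := by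
        rw [abs_mul, abs_of_nonneg ht0]
        calc |s| * t ≤ (a * N) * a ^ 2 := by gcongr
          _ = _ := by ring
      have b2 : t ^ 2 ≤ a ^ 3 := by
        calc t ^ 2 ≤ (a ^ 2) ^ 2 := by gcongr
          _ = a ^ 3 * a := by ring
          _ ≤ a ^ 3 * 1 := by gcongr
          _ = _ := mul_one _
      have b3 : N + 1 ≤ Real.exp (2 * (N + 1)) := by
        have := Real.add_one_le_exp (2 * (N + 1)); linarith
      have b4 : a ^ 3 * (N + 1) ≤ a ^ 3 * Real.exp (2 * (N + 1)) := by gcongr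
      obtain ⟨b11, b12⟩ := abs_le.mp b1
      have := sq_nonneg t
      have : 0 ≤ a ^ 3 * N := by positivity
      rw [abs_le]; constructor <;> nlinarith
    have : |Real.exp x - (1 + s + (s ^ 2 - t) / 2)| ≤ |Real.exp x - (1 + x + x ^ 2 / 2)|
        + |(1 + x + x ^ 2 / 2) - (1 + s + (s ^ 2 - t) / 2)| := abs_sub_le _ _ _
    have h5 : 0 ≤ a ^ 3 * Real.exp x := by positivity
    nlinarith
  · have ha2 : a ^ 2 ≤ a ^ 3 := pow_le_pow_right₀ h1.le (by norm_num)
    have ha1 : a ≤ a ^ 3 := by nlinarith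
    have ha0 : 1 ≤ a ^ 3 := by linarith
    have hs3 : s ^ 2 ≤ a ^ 2 * N ^ 2 := by
      rw [← mul_pow, ← sq_abs s]; gcongr
    have key : |1 + s + (s ^ 2 - t) / 2| ≤ a ^ 3 * (1 + N + N ^ 2 / 2 + 1 / 2) := by
      have k1 : a * N ≤ a ^ 3 * N := by gcongr
      have k2 : a ^ 2 * N ^ 2 ≤ a ^ 3 * N ^ 2 := by gcongr
      have k3 : 0 ≤ a ^ 3 * N ^ 2 := by positivity
      have := sq_nonneg s
      rw [abs_le]; constructor <;> nlinarith
    have k4 : 1 + N + N ^ 2 / 2 + 1 / 2 ≤ 7 * Real.exp (2 * (N + 1)) := by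
      rw [hexp2]; 
      have : Real.exp (N + 1) ≤ Real.exp (N + 1) * Real.exp (N + 1) := by nlinarith
      nlinarith [pow_nonneg (show 0 ≤ N + 1 by linarith) 3]
    have k5 : a ^ 3 * (1 + N + N ^ 2 / 2 + 1 / 2) ≤ a ^ 3 * (7 * Real.exp (2 * (N + 1))) := by
      gcongr
    have k6 : Real.exp (s - t / 2) ≤ a ^ 3 * Real.exp (s - t / 2) := by nlinarith
    calc _ ≤ |Real.exp (s - t / 2)| + |1 + s + (s ^ 2 - t) / 2| := abs_sub _ _
      _ ≤ _ := by rw [abs_of_pos hE]; linarith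

/-- The constant in the Taylor expansion of a Gaussian-smoothed bounded function. -/
noncomputable def gK (d : ℕ) : ℝ := 7 * ∫ w, Real.exp (2 * (nrm w + 1)) ∂stdG d + 1

lemma integrable_exp_nrm' {d : ℕ} :
    Integrable (fun w => Real.exp (2 * (nrm w + 1))) (stdG d) := by
  have := (integrable_exp_nrm (d := d) 2).const_mul (Real.exp 2)
  refine this.congr (Filter.Eventually.of_forall fun w => ?_)
  simp only [← Real.exp_add]; ring_nf

lemma gK_nonneg (d : ℕ) : 0 ≤ gK d := by
  unfold gK
  have : 0 ≤ ∫ w, Real.exp (2 * (nrm w + 1)) ∂stdG d :=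
    integral_nonneg fun w => (Real.exp_pos _).le
  linarith

lemma integrable_exp_dot {d : ℕ} (h : Fin d → ℝ) :
    Integrable (fun w => Real.exp (∑ i, h i * w i - (∑ i, h i ^ 2) / 2)) (stdG d) := by
  refine ((integrable_exp_nrm (d := d) (nrm h)).const_mul 1).mono'
    (Measurable.aestronglyMeasurable (by fun_prop))
    (Filter.Eventually.of_forall fun w => ?_)
  rw [Real.norm_of_nonneg (Real.exp_pos _).le, one_mul]
  refine Real.exp_le_exp.mpr ?_
  have := (abs_le.mp (abs_dot_le h w)).2
  have : 0 ≤ ∑ i, h i ^ 2 := Finset.sum_nonneg fun i _ => sq_nonneg _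
  linarith

/-- Second-order Taylor expansion, with an explicit remainder, of `h ↦ ∫ ψ (w + h) dγ(w)`. -/
lemma taylor {d : ℕ} (ψ : (Fin d → ℝ) → ℝ) (hψ : Measurable ψ) (c : ℝ)
    (hc : ∀ w, |ψ w| ≤ c) (h : Fin d → ℝ) :
    |∫ w, ψ (w + h) ∂stdG d - (∫ w, ψ w ∂stdG d + ∑ i, h i * ∫ w, ψ w * w i ∂stdG d
      + (1 / 2) * ∑ i, ∑ j, h i * h j * ∫ w, ψ w * (w i * w j - if i = j then 1 else 0) ∂stdG d)|
      ≤ c * gK d * nrm h ^ 3 := by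
  have hc0 : 0 ≤ c := (abs_nonneg _).trans (hc 0)
  have hb : ∀ {g : (Fin d → ℝ) → ℝ}, Integrable g (stdG d) →
      Integrable (fun w => ψ w * g w) (stdG d) := fun hg =>
    hg.bdd_mul (c := c) hψ.aestronglyMeasurable (Filter.Eventually.of_forall fun w => hc w)
  have i0 : Integrable ψ (stdG d) := by
    simpa using hb (integrable_const (1 : ℝ))
  have m1 : ∀ i, MemLp (fun w : Fin d → ℝ => w i) 2 (stdG d) := memLp_coord 2 (by simp)
  have i1 : ∀ i, Integrable (fun w => ψ w * w i) (stdG d) := fun i =>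
    hb ((m1 i).integrable (by norm_num))
  have i2 : ∀ i j, Integrable (fun w => ψ w * (w i * w j - if i = j then 1 else 0)) (stdG d) :=
    fun i j => hb (((m1 i).integrable_mul (m1 j)).sub (integrable_const _))
  have i1' : ∀ i, Integrable (fun w => h i * (ψ w * w i)) (stdG d) := fun i => (i1 i).const_mul _
  have i2' : ∀ i j, Integrable (fun w => h i * h j * (ψ w * (w i * w j - if i = j then 1 else 0)))
      (stdG d) := fun i j => (i2 i j).const_mul _
  have iE := hb (integrable_exp_dot h)
  have eQ : (∫ w, ψ w ∂stdG d + ∑ i, h i * ∫ w, ψ w * w i ∂stdG d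
      + (1 / 2) * ∑ i, ∑ j, h i * h j * ∫ w, ψ w * (w i * w j - if i = j then 1 else 0) ∂stdG d)
      = ∫ w, (ψ w + ∑ i, h i * (ψ w * w i)
        + (1 / 2) * ∑ i, ∑ j, h i * h j * (ψ w * (w i * w j - if i = j then 1 else 0))) ∂stdG d := by
    rw [integral_add, integral_add, integral_finsetSum, integral_const_mul, integral_finsetSum]
    · simp only [integral_const_mul]
      congr 3
      ext i
      rw [integral_finsetSum]
      · simp only [integral_const_mul]
      · exact fun j _ => i2' i j
    · exact fun i _ => integrable_finsetSum _ fun j _ => i2' i j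
    · exact fun i _ => i1' i
    · exact i0
    · exact integrable_finsetSum _ fun i _ => i1' i
    · exact i0.add (integrable_finsetSum _ fun i _ => i1' i)
    · exact (integrable_finsetSum _ fun i _ => integrable_finsetSum _ fun j _ => i2' i j).const_mul _
  have iQ : Integrable (fun w => (ψ w + ∑ i, h i * (ψ w * w i)
        + (1 / 2) * ∑ i, ∑ j, h i * h j * (ψ w * (w i * w j - if i = j then 1 else 0)))) (stdG d) :=
    (i0.add (integrable_finsetSum _ fun i _ => i1' i)).add
     ((integrable_finsetSum _ fun i _ => integrable_finsetSum _ fun j _ => i2' i j).const_mul _)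
  rw [eQ, integral_shift ψ hψ, ← integral_sub iE iQ]
  have hpt : ∀ w : Fin d → ℝ, ψ w + ∑ i, h i * (ψ w * w i)
        + (1 / 2) * ∑ i, ∑ j, h i * h j * (ψ w * (w i * w j - if i = j then 1 else 0))
      = ψ w * (1 + (∑ i, h i * w i) + ((∑ i, h i * w i) ^ 2 - ∑ i, h i ^ 2) / 2) := by
    intro w
    have a1 : ∑ i, h i * (ψ w * w i) = ψ w * ∑ i, h i * w i := by
      rw [Finset.mul_sum]; exact Finset.sum_congr rfl fun i _ => by ring
    have a2 : ∑ i, ∑ j, h i * h j * (ψ w * (w i * w j - if i = j then 1 else 0))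
        = ψ w * ((∑ i, h i * w i) ^ 2 - ∑ i, h i ^ 2) := by
      have b1 : (∑ i, h i * w i) ^ 2 = ∑ i, ∑ j, h i * h j * (w i * w j) := by
        rw [sq, Finset.sum_mul_sum]
        exact Finset.sum_congr rfl fun j _ => Finset.sum_congr rfl fun k _ => by ring
      have b2 : ∑ i, h i ^ 2 = ∑ i, ∑ j, h i * h j * (if i = j then 1 else 0) := by
        simp [sq]
      rw [b1, b2, ← Finset.sum_sub_distrib, Finset.mul_sum]
      refine Finset.sum_congr rfl fun i _ => ?_
      rw [← Finset.sum_sub_distrib, Finset.mul_sum]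
      exact Finset.sum_congr rfl fun j _ => by ring
    rw [a1, a2]; ring
  simp only [hpt, ← mul_sub]
  have hdom : Integrable (fun w => c * (nrm h ^ 3 * (7 * Real.exp (2 * (nrm w + 1))
      + Real.exp (∑ i, h i * w i - (∑ i, h i ^ 2) / 2)))) (stdG d) :=
    (((integrable_exp_nrm'.const_mul 7).add (integrable_exp_dot h)).const_mul _).const_mul _
  have hone : ∫ w, Real.exp (∑ i, h i * w i - (∑ i, h i ^ 2) / 2) ∂stdG d = 1 := by
    have := integral_shift (d := d) (fun _ => 1) measurable_const h
    simpa using this.symm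
  calc _ ≤ ∫ w, c * (nrm h ^ 3 * (7 * Real.exp (2 * (nrm w + 1))
      + Real.exp (∑ i, h i * w i - (∑ i, h i ^ 2) / 2))) ∂stdG d := by
        rw [← Real.norm_eq_abs]
        refine norm_integral_le_of_norm_le hdom (Filter.Eventually.of_forall fun w => ?_)
        rw [norm_mul]
        exact mul_le_mul (hc w) (remainder_le _ _ (nrm h) (nrm w) (nrm_nonneg _) (nrm_nonneg _)
          (abs_dot_le h w) (Finset.sum_nonneg fun i _ => sq_nonneg _) (sum_sq_le_nrm h))
          (norm_nonneg _) hc0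
    _ = c * gK d * nrm h ^ 3 := by
        rw [integral_const_mul, integral_const_mul, integral_add (integrable_exp_nrm'.const_mul 7)
          (integrable_exp_dot h), integral_const_mul, hone, gK]
        ring

lemma meas_int {α β : Type*} [MeasurableSpace α] [MeasurableSpace β] {ν : Measure β} [SFinite ν]
    {f : α × β → ℝ} (hf : Measurable f) : Measurable fun x => ∫ y, f (x, y) ∂ν :=
  (hf.stronglyMeasurable.integral_prod_right').measurable

lemma abs_int_le {α : Type*} [MeasurableSpace α] (μ : Measure α) [IsProbabilityMeasure μ]
    {f : α → ℝ} {c : ℝ} (hf : ∀ x, |f x| ≤ c) : |∫ x, f x ∂μ| ≤ c := by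
  have := norm_integral_le_of_norm_le_const (μ := μ) (f := f) (C := c)
    (Filter.Eventually.of_forall hf)
  simpa using this

lemma integrable_bdd {α : Type*} [MeasurableSpace α] {μ : Measure α} [IsFiniteMeasure μ]
    {f : α → ℝ} {c : ℝ} (hm : Measurable f) (hf : ∀ x, |f x| ≤ c) : Integrable f μ :=
  Integrable.of_bound hm.aestronglyMeasurable c (Filter.Eventually.of_forall hf)

lemma memLp_nrm {d : ℕ} {Ω : Type*} [MeasurableSpace Ω] {μ : Measure Ω}
    {ξ : Ω → Fin d → ℝ} {p : ℝ≥0∞} (h3 : ∀ i, MemLp (fun ω => ξ ω i) p μ) :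
    MemLp (fun ω => nrm (ξ ω)) p μ := by
  unfold nrm
  exact memLp_finsetSum _ fun i _ => (h3 i).abs

lemma integrable_nrm3 {d : ℕ} {Ω : Type*} [MeasurableSpace Ω] {μ : Measure Ω}
    {ξ : Ω → Fin d → ℝ} (h3 : ∀ i, MemLp (fun ω => ξ ω i) 3 μ) :
    Integrable (fun ω => nrm (ξ ω) ^ 3) μ := by
  refine ((memLp_nrm h3).integrable_norm_pow (p := 3) (by norm_num)).congr
    (Filter.Eventually.of_forall fun ω => ?_)
  simp only [Real.norm_of_nonneg (nrm_nonneg _)]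

/-- The Taylor expansion averaged over a centred random shift `a ξ`: only the covariance of `ξ`
enters the main term. -/
lemma taylor_random {d : ℕ} {Ω : Type*} [MeasurableSpace Ω] (μ : Measure Ω)
    [IsProbabilityMeasure μ] (ξ : Ω → Fin d → ℝ) (hξ : Measurable ξ)
    (h3 : ∀ i, MemLp (fun ω => ξ ω i) 3 μ) (h0 : ∀ i, ∫ ω, ξ ω i ∂μ = 0)
    (ψ : (Fin d → ℝ) → ℝ) (hψ : Measurable ψ) (c : ℝ)
    (hc : ∀ w, |ψ w| ≤ c) (a : ℝ) (ha : 0 ≤ a) :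
    |∫ ω, ∫ w, ψ (w + a • ξ ω) ∂stdG d ∂μ - (∫ w, ψ w ∂stdG d
      + (1 / 2) * ∑ i, ∑ j, a ^ 2 * (∫ ω, ξ ω i * ξ ω j ∂μ)
        * ∫ w, ψ w * (w i * w j - if i = j then 1 else 0) ∂stdG d)|
      ≤ c * gK d * (∫ ω, nrm (ξ ω) ^ 3 ∂μ) * a ^ 3 := by
  set c0 := ∫ w, ψ w ∂stdG d
  set c1 : Fin d → ℝ := fun i => ∫ w, ψ w * w i ∂stdG d with hc1
  set c2 : Fin d → Fin d → ℝ := fun i j =>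
    ∫ w, ψ w * (w i * w j - if i = j then 1 else 0) ∂stdG d with hc2
  have m2 : ∀ i, MemLp (fun ω => ξ ω i) 2 μ := fun i => (h3 i).mono_exponent (by norm_num)
  have i1 : ∀ i, Integrable (fun ω => a * ξ ω i * c1 i) μ := fun i =>
    (((m2 i).integrable (by norm_num)).const_mul _).mul_const _
  have i2 : ∀ i j, Integrable (fun ω => a ^ 2 * (ξ ω i * ξ ω j) * c2 i j) μ := fun i j =>
    (((m2 i).integrable_mul (m2 j)).const_mul _).mul_const _
  have eQ : c0 + (1 / 2) * ∑ i, ∑ j, a ^ 2 * (∫ ω, ξ ω i * ξ ω j ∂μ) * c2 i j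
      = ∫ ω, (c0 + ∑ i, a * ξ ω i * c1 i
        + (1 / 2) * ∑ i, ∑ j, a ^ 2 * (ξ ω i * ξ ω j) * c2 i j) ∂μ := by
    rw [integral_add, integral_add, integral_finsetSum, integral_const_mul, integral_finsetSum]
    · simp only [integral_const_mul, integral_mul_const, h0]
      simp only [integral_const, probReal_univ, one_smul, mul_zero, zero_mul,
        Finset.sum_const_zero, add_zero]
      congr 2
      refine Finset.sum_congr rfl fun i _ => ?_
      rw [integral_finsetSum]
      · simp only [integral_const_mul, integral_mul_const]
      · exact fun j _ => i2 i j
    · exact fun i _ => integrable_finsetSum _ fun j _ => i2 i j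
    · exact fun i _ => i1 i
    · exact integrable_const _
    · exact integrable_finsetSum _ fun i _ => i1 i
    · exact (integrable_const _).add (integrable_finsetSum _ fun i _ => i1 i)
    · exact (integrable_finsetSum _ fun i _ => integrable_finsetSum _ fun j _ => i2 i j).const_mul _
  have iQ : Integrable (fun ω => (c0 + ∑ i, a * ξ ω i * c1 i
        + (1 / 2) * ∑ i, ∑ j, a ^ 2 * (ξ ω i * ξ ω j) * c2 i j)) μ :=
    ((integrable_const _).add (integrable_finsetSum _ fun i _ => i1 i)).add
     ((integrable_finsetSum _ fun i _ => integrable_finsetSum _ fun j _ => i2 i j).const_mul _)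
  have iL : Integrable (fun ω => ∫ w, ψ (w + a • ξ ω) ∂stdG d) μ := by
    refine integrable_bdd (c := c) ?_ fun ω => abs_int_le _ fun w => hc _
    exact meas_int (f := fun p : Ω × (Fin d → ℝ) => ψ (p.2 + a • ξ p.1)) (by fun_prop)
  rw [eQ, ← integral_sub iL iQ]
  have hdom : Integrable (fun ω => c * gK d * nrm (ξ ω) ^ 3 * a ^ 3) μ :=
    ((integrable_nrm3 h3).const_mul _).mul_const _
  rw [← Real.norm_eq_abs]
  refine (norm_integral_le_of_norm_le hdom (Filter.Eventually.of_forall fun ω => ?_)).trans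
    (le_of_eq ?_)
  · have ht := taylor ψ hψ c hc (a • ξ ω)
    rw [Real.norm_eq_abs]
    have en : nrm (a • ξ ω) = a * nrm (ξ ω) := by
      simp only [nrm, Pi.smul_apply, smul_eq_mul, abs_mul, abs_of_nonneg ha, Finset.mul_sum]
    rw [en] at ht
    refine (le_of_eq ?_).trans (ht.trans (le_of_eq (by ring)))
    congr 2
    simp only [Pi.smul_apply, smul_eq_mul]
    congr 3
    ext i
    refine Finset.sum_congr rfl fun j _ => ?_
    simp only [hc2]; ring
  · rw [integral_mul_const, integral_const_mul]

/-- Two centred random shifts with the same covariance give the same Gaussian smoothing up to a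
third-order error. -/
lemma compare {d : ℕ} {Ω Ω' : Type*} [MeasurableSpace Ω] [MeasurableSpace Ω'] (μ : Measure Ω)
    [IsProbabilityMeasure μ] (μ' : Measure Ω') [IsProbabilityMeasure μ']
    (ξ : Ω → Fin d → ℝ) (hξ : Measurable ξ) (ξ' : Ω' → Fin d → ℝ) (hξ' : Measurable ξ')
    (h3 : ∀ i, MemLp (fun ω => ξ ω i) 3 μ) (h0 : ∀ i, ∫ ω, ξ ω i ∂μ = 0)
    (h3' : ∀ i, MemLp (fun ω => ξ' ω i) 3 μ') (h0' : ∀ i, ∫ ω, ξ' ω i ∂μ' = 0)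
    (hcov : ∀ i j, ∫ ω, ξ ω i * ξ ω j ∂μ = ∫ ω, ξ' ω i * ξ' ω j ∂μ')
    (ψ : (Fin d → ℝ) → ℝ) (hψ : Measurable ψ) (c : ℝ)
    (hc : ∀ w, |ψ w| ≤ c) (a : ℝ) (ha : 0 ≤ a) :
    |∫ ω, ∫ w, ψ (w + a • ξ ω) ∂stdG d ∂μ - ∫ ω, ∫ w, ψ (w + a • ξ' ω) ∂stdG d ∂μ'|
      ≤ c * (gK d * (∫ ω, nrm (ξ ω) ^ 3 ∂μ + ∫ ω, nrm (ξ' ω) ^ 3 ∂μ')) * a ^ 3 := by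
  have t1 := taylor_random μ ξ hξ h3 h0 ψ hψ c hc a ha
  have t2 := taylor_random μ' ξ' hξ' h3' h0' ψ hψ c hc a ha
  simp only [hcov] at t1
  rw [abs_sub_comm] at t2
  refine (abs_sub_le _ _ _).trans ((add_le_add t1 t2).trans (le_of_eq (by ring)))

end MASC

/-! ### Replacing one random step by a Gaussian step -/

namespace MASC
open MeasureTheory ProbabilityTheory
open scoped ENNReal

/-- Every real matrix has a generalized inverse. -/
lemma exists_ginv {d : ℕ} (A : Matrix (Fin d) (Fin d) ℝ) :
    ∃ B : Matrix (Fin d) (Fin d) ℝ, A * B * A = A := by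
  let f := Matrix.toLin' A
  obtain ⟨g', hg'⟩ := LinearMap.exists_rightInverse_of_surjective f.rangeRestrict
    (LinearMap.range_rangeRestrict f)
  obtain ⟨g, hg⟩ := LinearMap.exists_extend g'
  refine ⟨LinearMap.toMatrix' g, ?_⟩
  apply Matrix.toLin'.injective
  rw [Matrix.toLin'_mul, Matrix.toLin'_mul, Matrix.toLin'_toMatrix']
  apply LinearMap.ext
  intro v
  change f (g (f v)) = f v
  have h1 : g (f v) = g' (f.rangeRestrict v) := by
    rw [← hg]; rfl
  rw [h1]
  have := congrArg (fun l => ((l (f.rangeRestrict v) : LinearMap.range f) : Fin d → ℝ)) hg'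
  simpa using this

lemma memLp_mulVec {d : ℕ} {Ω : Type*} [MeasurableSpace Ω] {μ : Measure Ω} {p : ℝ≥0∞}
    {X : Ω → Fin d → ℝ} (hX : ∀ i, MemLp (fun ω => X ω i) p μ) (M : Matrix (Fin d) (Fin d) ℝ)
    (i : Fin d) : MemLp (fun ω => M.mulVec (X ω) i) p μ := by
  simp only [Matrix.mulVec, dotProduct]
  exact memLp_finsetSum _ fun j _ => (hX j).const_mul _

lemma integral_mulVec {d : ℕ} {Ω : Type*} [MeasurableSpace Ω] {μ : Measure Ω}
    {X : Ω → Fin d → ℝ} (hX : ∀ i, Integrable (fun ω => X ω i) μ) (h0 : ∀ i, ∫ ω, X ω i ∂μ = 0)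
    (M : Matrix (Fin d) (Fin d) ℝ) (i : Fin d) : ∫ ω, M.mulVec (X ω) i ∂μ = 0 := by
  simp only [Matrix.mulVec, dotProduct]
  rw [integral_finsetSum _ fun j _ => (hX j).const_mul _]
  simp [integral_const_mul, h0]

lemma cov_mulVec {d : ℕ} {Ω : Type*} [MeasurableSpace Ω] {μ : Measure Ω}
    {X : Ω → Fin d → ℝ} (hX : ∀ i, MemLp (fun ω => X ω i) 2 μ)
    (M : Matrix (Fin d) (Fin d) ℝ) (i j : Fin d) :
    ∫ ω, M.mulVec (X ω) i * M.mulVec (X ω) j ∂μ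
      = ∑ k, ∑ l, M i k * M j l * ∫ ω, X ω k * X ω l ∂μ := by
  have e : ∀ ω, M.mulVec (X ω) i * M.mulVec (X ω) j
      = ∑ k, ∑ l, M i k * M j l * (X ω k * X ω l) := by
    intro ω
    simp only [Matrix.mulVec, dotProduct]
    rw [Finset.sum_mul_sum]
    exact Finset.sum_congr rfl fun j _ => Finset.sum_congr rfl fun k _ => by ring
  have hi : ∀ k l, Integrable (fun ω => M i k * M j l * (X ω k * X ω l)) μ :=
    fun k l => ((hX k).integrable_mul (hX l)).const_mul _
  simp_rw [e]
  rw [integral_finsetSum _ fun j _ => integrable_finsetSum _ fun k _ => hi j k]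
  refine Finset.sum_congr rfl fun j _ => ?_
  rw [integral_finsetSum _ fun k _ => hi j k]
  simp only [integral_const_mul]

lemma cov_stdG {d : ℕ} (A : Matrix (Fin d) (Fin d) ℝ) (i j : Fin d) :
    ∫ w, A.mulVec w i * A.mulVec w j ∂stdG d = (A * A.transpose) i j := by
  rw [cov_mulVec (X := fun w => w) (memLp_coord 2 (by simp))]
  simp [integral_coord_mul, Matrix.mul_apply]

/-- A random vector with second-moment matrix `A Aᵀ` lies almost surely in the range of `A`; this
is what allows singular covariances. -/
lemma ae_range {d : ℕ} {Ω : Type*} [MeasurableSpace Ω] {μ : Measure Ω}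
    {X : Ω → Fin d → ℝ} (hX : ∀ i, MemLp (fun ω => X ω i) 2 μ)
    (A B : Matrix (Fin d) (Fin d) ℝ) (hB : A * B * A = A)
    (hcov : ∀ i j, ∫ ω, X ω i * X ω j ∂μ = (A * A.transpose) i j) :
    ∀ᵐ ω ∂μ, A.mulVec (B.mulVec (X ω)) = X ω := by
  set N : Matrix (Fin d) (Fin d) ℝ := 1 - A * B with hN
  have hNA : N * A = 0 := by rw [hN, sub_mul, one_mul, hB, sub_self]
  have hz : ∀ i, ∀ᵐ ω ∂μ, N.mulVec (X ω) i = 0 := by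
    intro i
    have h1 := cov_mulVec hX N i i
    have h2 : ∑ k, ∑ l, N i k * N i l * ∫ ω, X ω k * X ω l ∂μ = 0 := by
      simp only [hcov]
      have : (N * (A * A.transpose) * N.transpose) i i = 0 := by
        rw [← Matrix.mul_assoc, hNA]; simp
      rw [← this]
      simp only [Matrix.mul_apply (M := N * (A * A.transpose)), Matrix.mul_apply (M := N),
        Finset.sum_mul, Matrix.transpose_apply]
      rw [Finset.sum_comm]
      exact Finset.sum_congr rfl fun j _ => Finset.sum_congr rfl fun k _ => by ring
    rw [h2] at h1
    have m := memLp_mulVec hX N i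
    have h3 := (integral_eq_zero_iff_of_nonneg (fun ω => mul_self_nonneg _)
      (m.integrable_mul m)).mp h1
    filter_upwards [h3] with ω hω
    simpa using hω
  filter_upwards [ae_all_iff.mpr hz] with ω hω
  ext i
  have := hω i
  rw [hN, Matrix.sub_mulVec, Matrix.one_mulVec, ← Matrix.mulVec_mulVec] at this
  simp only [Pi.sub_apply] at this
  linarith

@[fun_prop]
lemma measurable_mulVec {d : ℕ} (A : Matrix (Fin d) (Fin d) ℝ) :
    Measurable fun w : Fin d → ℝ => A.mulVec w := by
  unfold Matrix.mulVec dotProduct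
  fun_prop

/-- Gaussian smoothing with covariance `s A Aᵀ`. -/
noncomputable def gP {d : ℕ} (A : Matrix (Fin d) (Fin d) ℝ) (s : ℝ) (F : (Fin d → ℝ) → ℝ)
    (z : Fin d → ℝ) : ℝ := ∫ w, F (z - √s • A.mulVec w) ∂stdG d

/-- Averaging over one random step `X`. -/
noncomputable def gT {d : ℕ} {Ω : Type*} [MeasurableSpace Ω] (μ : Measure Ω) (X : Ω → Fin d → ℝ)
    (F : (Fin d → ℝ) → ℝ) (z : Fin d → ℝ) : ℝ := ∫ ω, F (z - X ω) ∂μ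

section ops
variable {d : ℕ} {Ω : Type*} [MeasurableSpace Ω] (A : Matrix (Fin d) (Fin d) ℝ)
  (μ : Measure Ω) [IsProbabilityMeasure μ] (X : Ω → Fin d → ℝ)

lemma gP_meas (s : ℝ) {F : (Fin d → ℝ) → ℝ} (hF : Measurable F) : Measurable (gP A s F) :=
  meas_int (f := fun p : (Fin d → ℝ) × (Fin d → ℝ) => F (p.1 - √s • A.mulVec p.2)) (by fun_prop)

lemma gP_le (s : ℝ) {F : (Fin d → ℝ) → ℝ} {c : ℝ} (hc : ∀ z, |F z| ≤ c) (z) :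
    |gP A s F z| ≤ c := abs_int_le _ fun _ => hc _

omit [IsProbabilityMeasure μ] in
lemma gT_meas [SFinite μ] (hX : Measurable X) {F : (Fin d → ℝ) → ℝ} (hF : Measurable F) :
    Measurable (gT μ X F) :=
  meas_int (f := fun p : (Fin d → ℝ) × Ω => F (p.1 - X p.2)) (by fun_prop)

lemma gT_le {F : (Fin d → ℝ) → ℝ} {c : ℝ} (hc : ∀ z, |F z| ≤ c) (z) :
    |gT μ X F z| ≤ c := abs_int_le _ fun _ => hc _

lemma gP_gT_comm (hX : Measurable X) (s : ℝ) {F : (Fin d → ℝ) → ℝ} (hF : Measurable F) {c : ℝ}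
    (hc : ∀ z, |F z| ≤ c) : gP A s (gT μ X F) = gT μ X (gP A s F) := by
  ext z
  unfold gP gT
  rw [integral_integral_swap]
  · refine integral_congr_ae (Filter.Eventually.of_forall fun ω => ?_)
    refine integral_congr_ae (Filter.Eventually.of_forall fun w => ?_)
    simp only
    congr 1
    abel
  · exact integrable_bdd (c := c) (by unfold Function.uncurry; fun_prop) fun p => hc _

lemma gP_gP (s t : ℝ) (hs : 0 ≤ s) (ht : 0 ≤ t) {F : (Fin d → ℝ) → ℝ} (hF : Measurable F) {c : ℝ}
    (hc : ∀ z, |F z| ≤ c) : gP A s (gP A t F) = gP A (s + t) F := by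
  ext z
  unfold gP
  have h1 := map_rot (d := d) (√s) (√t) (√(s + t)) (by
    rw [Real.sq_sqrt hs, Real.sq_sqrt ht, Real.sq_sqrt (add_nonneg hs ht)])
  have e1 : ∫ w, F (z - √(s + t) • A.mulVec w) ∂stdG d
      = ∫ v, F (z - A.mulVec v) ∂Measure.map (fun x => √(s + t) • x) (stdG d) := by
    rw [integral_map (by fun_prop) (Measurable.aestronglyMeasurable (by fun_prop))]
    simp only [Matrix.mulVec_smul]
  rw [e1, ← h1, integral_map (by fun_prop) (Measurable.aestronglyMeasurable (by fun_prop)),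
    integral_prod]
  · simp only [Matrix.mulVec_add, Matrix.mulVec_smul, sub_sub]
  · exact integrable_bdd (c := c) (by fun_prop) fun p => hc _

lemma gP_sub (s : ℝ) {F G : (Fin d → ℝ) → ℝ} (hF : Measurable F) (hG : Measurable G) {c c' : ℝ}
    (hc : ∀ z, |F z| ≤ c) (hc' : ∀ z, |G z| ≤ c') (z) :
    gP A s (fun y => F y - G y) z = gP A s F z - gP A s G z :=
  integral_sub (integrable_bdd (c := c) (by fun_prop) fun p => hc _)
    (integrable_bdd (c := c') (by fun_prop) fun p => hc' _)

lemma gT_sub (hX : Measurable X) {F G : (Fin d → ℝ) → ℝ} (hF : Measurable F) (hG : Measurable G)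
    {c c' : ℝ} (hc : ∀ z, |F z| ≤ c) (hc' : ∀ z, |G z| ≤ c') :
    gT μ X (fun y => F y - G y) = fun z => gT μ X F z - gT μ X G z := by
  ext z
  exact integral_sub (integrable_bdd (c := c) (by fun_prop) fun p => hc _)
    (integrable_bdd (c := c') (by fun_prop) fun p => hc' _)

/-- Replacing one random step by a Gaussian step of the same covariance, after Gaussian smoothing
at scale `√m`, costs `O (m ^ (-3/2))`. -/
lemma step_le (hX : Measurable X) (h3 : ∀ i, MemLp (fun ω => X ω i) 3 μ)
    (h0 : ∀ i, ∫ ω, X ω i ∂μ = 0)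
    (hcov : ∀ i j, ∫ ω, X ω i * X ω j ∂μ = (A * A.transpose) i j) :
    ∃ K : ℝ, 0 ≤ K ∧ ∀ (F : (Fin d → ℝ) → ℝ), Measurable F → ∀ c : ℝ, (∀ z, |F z| ≤ c) →
      ∀ m : ℝ, 1 ≤ m → ∀ z, |gP A m (gT μ X F) z - gP A (m + 1) F z| ≤ K * c / (m * √m) := by
  obtain ⟨B, hB⟩ := exists_ginv A
  have h2 : ∀ i, MemLp (fun ω => X ω i) 2 μ := fun i => (h3 i).mono_exponent (by norm_num)
  set ξ : Ω → Fin d → ℝ := fun ω => B.mulVec (X ω) with hξ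
  set ξ' : (Fin d → ℝ) → Fin d → ℝ := fun w => B.mulVec (A.mulVec w) with hξ'
  have g3 : ∀ i, MemLp (fun w => A.mulVec w i) 3 (stdG d) :=
    fun i => memLp_mulVec (X := fun w => w) (memLp_coord 3 (by simp)) A i
  have g2 : ∀ i, MemLp (fun w => A.mulVec w i) 2 (stdG d) :=
    fun i => (g3 i).mono_exponent (by norm_num)
  have g0 : ∀ i, ∫ w, A.mulVec w i ∂stdG d = 0 := fun i => integral_mulVec (X := fun w => w)
    (fun i => (memLp_coord 2 (by simp) i).integrable (by norm_num)) integral_coord_id A i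
  refine ⟨gK d * (∫ ω, nrm (ξ ω) ^ 3 ∂μ + ∫ ω, nrm (ξ' ω) ^ 3 ∂stdG d),
    mul_nonneg (gK_nonneg d) (add_nonneg (integral_nonneg fun _ => pow_nonneg (nrm_nonneg _) 3)
      (integral_nonneg fun _ => pow_nonneg (nrm_nonneg _) 3)), ?_⟩
  intro F hF c hc m hm z
  have hm0 : 0 < m := by linarith
  have hsm : 0 < √m := Real.sqrt_pos.mpr hm0
  have key := compare μ (stdG d) ξ (by fun_prop) ξ' (by fun_prop)
    (fun i => memLp_mulVec h3 B i)
    (fun i => integral_mulVec (fun i => (h2 i).integrable (by norm_num)) h0 B i)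
    (fun i => memLp_mulVec g3 B i)
    (fun i => integral_mulVec (fun i => (g2 i).integrable (by norm_num)) g0 B i)
    (fun i j => by
      rw [cov_mulVec h2 B i j, cov_mulVec g2 B i j]; simp only [hcov, cov_stdG])
    (fun w => F (z - √m • A.mulVec w)) (by fun_prop) c (fun w => hc _) (1 / √m) (by positivity)
  have e : ∀ w v : Fin d → ℝ, z - √m • A.mulVec (w + (1 / √m) • v)
      = z - √m • A.mulVec w - A.mulVec v := by
    intro w v
    rw [Matrix.mulVec_add, Matrix.mulVec_smul, smul_add, smul_smul,
      mul_one_div_cancel hsm.ne', one_smul, sub_sub]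
  simp only [e] at key
  have e1 : ∫ ω, ∫ w, F (z - √m • A.mulVec w - A.mulVec (ξ ω)) ∂stdG d ∂μ
      = gP A m (gT μ X F) z := by
    unfold gP gT
    rw [integral_integral_swap]
    · refine integral_congr_ae (Filter.Eventually.of_forall fun w => ?_)
      refine integral_congr_ae ?_
      filter_upwards [ae_range h2 A B hB hcov] with ω hω
      simp only [hξ, hω]
    · exact integrable_bdd (c := c) (by unfold Function.uncurry; fun_prop) fun p => hc _
  have e2 : ∫ v, ∫ w, F (z - √m • A.mulVec w - A.mulVec (ξ' v)) ∂stdG d ∂stdG d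
      = gP A (m + 1) F z := by
    rw [← gP_gP A m 1 hm0.le zero_le_one hF hc]
    unfold gP
    rw [integral_integral_swap]
    · refine integral_congr_ae (Filter.Eventually.of_forall fun w => ?_)
      refine integral_congr_ae (Filter.Eventually.of_forall fun v => ?_)
      simp only [hξ', Real.sqrt_one, one_smul, Matrix.mulVec_mulVec]
      rw [← mul_assoc, hB]
    · exact integrable_bdd (c := c) (by unfold Function.uncurry; fun_prop) fun p => hc _
  rw [e1, e2] at key
  refine key.trans (le_of_eq ?_)
  have : m * √m = √m ^ 3 := by
    nth_rewrite 1 [← Real.sq_sqrt hm0.le]; ring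
  rw [this]
  field_simp

end ops

end MASC

/-! ### The multivariate Berry–Esseen theorem -/

namespace MASC
open MeasureTheory ProbabilityTheory
open scoped ENNReal

/-- The indicator function of the nonnegative orthant. -/
noncomputable def orth {d : ℕ} : (Fin d → ℝ) → ℝ := Set.indicator {z | ∀ i, 0 ≤ z i} 1

@[fun_prop]
lemma measurable_orth {d : ℕ} : Measurable (orth : (Fin d → ℝ) → ℝ) := by
  refine measurable_one.indicator ?_
  rw [show {z : Fin d → ℝ | ∀ i, 0 ≤ z i} = ⋂ i, {z | 0 ≤ z i} by ext; simp]
  exact MeasurableSet.iInter fun i => measurableSet_le (by fun_prop) (by fun_prop)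

lemma orth_of {d : ℕ} {z : Fin d → ℝ} (h : ∀ i, 0 ≤ z i) : orth z = 1 :=
  Set.indicator_of_mem (show z ∈ {z : Fin d → ℝ | ∀ i, 0 ≤ z i} from h) _

lemma orth_of_not {d : ℕ} {z : Fin d → ℝ} (h : ¬ ∀ i, 0 ≤ z i) : orth z = 0 :=
  Set.indicator_of_notMem (show z ∉ {z : Fin d → ℝ | ∀ i, 0 ≤ z i} from h) _

lemma orth_nonneg {d : ℕ} (z : Fin d → ℝ) : 0 ≤ orth z := by
  by_cases h : ∀ i, 0 ≤ z i
  · rw [orth_of h]; norm_num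
  · rw [orth_of_not h]

lemma orth_le {d : ℕ} (z : Fin d → ℝ) : orth z ≤ 1 := by
  by_cases h : ∀ i, 0 ≤ z i
  · rw [orth_of h]
  · rw [orth_of_not h]; norm_num

lemma orth_abs {d : ℕ} (z : Fin d → ℝ) : |orth z| ≤ 1 := by
  rw [abs_of_nonneg (orth_nonneg z)]; exact orth_le z

lemma integral_orth {d : ℕ} {Ω : Type*} [MeasurableSpace Ω] (L : Measure Ω)
    {S : Ω → Fin d → ℝ} (hS : Measurable S) (z : Fin d → ℝ) :
    ∫ ω, orth (z - S ω) ∂L = L.real {ω | ∀ i, S ω i ≤ z i} := by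
  have hm : MeasurableSet {ω | ∀ i, S ω i ≤ z i} := by
    rw [show {ω | ∀ i, S ω i ≤ z i} = ⋂ i, {ω | S ω i ≤ z i} by ext; simp]
    exact MeasurableSet.iInter fun i => measurableSet_le (by fun_prop) (by fun_prop)
  rw [← integral_indicator_one hm]
  congr 1
  ext ω
  by_cases h : ∀ i, S ω i ≤ z i
  · rw [orth_of (by intro i; simpa using h i), Set.indicator_of_mem (by exact h)]; rfl
  · rw [orth_of_not (by simpa using h), Set.indicator_of_notMem (by exact h)]

lemma orth_diff {d : ℕ} (z y s : Fin d → ℝ) :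
    |orth (z - s) - orth (z - y - s)| ≤ ∑ i, Set.indicator {t : ℝ | |t - z i| ≤ |y i|} 1 (s i) := by
  have hnn : ∀ i, (0 : ℝ) ≤ Set.indicator {t : ℝ | |t - z i| ≤ |y i|} 1 (s i) := fun i =>
    Set.indicator_nonneg (fun _ _ => zero_le_one) _
  have hex : ∀ i, |s i - z i| ≤ |y i| →
      (1 : ℝ) ≤ ∑ i, Set.indicator {t : ℝ | |t - z i| ≤ |y i|} 1 (s i) := by
    intro i hi
    refine le_trans (le_of_eq ?_) (Finset.single_le_sum (fun i _ => hnn i) (Finset.mem_univ i))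
    rw [Set.indicator_of_mem (by exact hi)]; rfl
  by_cases h1 : ∀ i, 0 ≤ (z - s) i <;> by_cases h2 : ∀ i, 0 ≤ (z - y - s) i
  · rw [orth_of h1, orth_of h2]; simpa using Finset.sum_nonneg fun i _ => hnn i
  · rw [orth_of h1, orth_of_not h2]
    push Not at h2
    obtain ⟨i, hi⟩ := h2
    have := h1 i
    simp only [Pi.sub_apply] at hi this
    simpa using hex i (by rw [abs_of_nonpos (by linarith)]; linarith [le_abs_self (y i)])
  · rw [orth_of_not h1, orth_of h2]
    push Not at h1
    obtain ⟨i, hi⟩ := h1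
    have := h2 i
    simp only [Pi.sub_apply] at hi this
    simpa using hex i (by rw [abs_of_nonneg (by linarith)]; linarith [neg_abs_le (y i)])
  · rw [orth_of_not h1, orth_of_not h2]; simpa using Finset.sum_nonneg fun i _ => hnn i

/-- Gaussian smoothing moves the distribution function of a vector with anticoncentrated
coordinates only a little. -/
lemma smoothing {d : ℕ} {Ω : Type*} [MeasurableSpace Ω] (L : Measure Ω) [IsProbabilityMeasure L]
    {S : Ω → Fin d → ℝ} (hS : Measurable S) (α b : Fin d → ℝ)
    (hac : ∀ i a δ, 0 ≤ δ → L.real {ω | |S ω i - a| ≤ δ} ≤ α i * δ + b i)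
    (A : Matrix (Fin d) (Fin d) ℝ) (M : ℝ) (z : Fin d → ℝ) :
    |∫ ω, orth (z - S ω) ∂L - gP A M (fun z => ∫ ω, orth (z - S ω) ∂L) z|
      ≤ ∑ i, (α i * √M * ∫ w, |A.mulVec w i| ∂stdG d + b i) := by
  set F : (Fin d → ℝ) → ℝ := fun z => ∫ ω, orth (z - S ω) ∂L with hF
  have hFm : Measurable F :=
    meas_int (f := fun p : (Fin d → ℝ) × Ω => orth (p.1 - S p.2)) (by fun_prop)
  have hFb : ∀ z, |F z| ≤ 1 := fun z => abs_int_le _ fun _ => orth_abs _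
  have hF1 : ∀ y, |F z - F (z - y)| ≤ ∑ i, (α i * |y i| + b i) := by
    intro y
    have hi : ∀ z : Fin d → ℝ, Integrable (fun ω => orth (z - S ω)) L := fun z =>
      integrable_bdd (c := 1) (by fun_prop) fun _ => orth_abs _
    have hms : ∀ i, MeasurableSet {ω | |S ω i - z i| ≤ |y i|} := fun i =>
      measurableSet_le (by fun_prop) (by fun_prop)
    have e : ∀ i ω, Set.indicator {t : ℝ | |t - z i| ≤ |y i|} (1 : ℝ → ℝ) (S ω i)
        = Set.indicator {ω | |S ω i - z i| ≤ |y i|} (1 : Ω → ℝ) ω := fun i ω => rfl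
    have hii : ∀ i, Integrable (fun ω =>
        Set.indicator {t : ℝ | |t - z i| ≤ |y i|} (1 : ℝ → ℝ) (S ω i)) L := by
      intro i
      simp only [e]
      exact (integrable_const (1 : ℝ)).indicator (hms i)
    rw [hF]
    simp only
    rw [← integral_sub (hi z) (hi (z - y)), ← Real.norm_eq_abs]
    refine (norm_integral_le_of_norm_le (integrable_finsetSum _ fun i _ => hii i)
      (Filter.Eventually.of_forall fun ω => orth_diff z y (S ω))).trans ?_
    rw [integral_finsetSum _ fun i _ => hii i]
    refine Finset.sum_le_sum fun i _ => ?_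
    simp only [e]
    rw [integral_indicator_one (hms i)]
    exact hac i _ _ (abs_nonneg _)
  have hAi : ∀ i, Integrable (fun w => |A.mulVec w i|) (stdG d) := fun i =>
    ((memLp_mulVec (X := fun w => w) (memLp_coord 2 (by simp)) A i).integrable (by norm_num)).abs
  have e1 : F z - gP A M F z = ∫ w, (F z - F (z - √M • A.mulVec w)) ∂stdG d := by
    rw [integral_sub (integrable_const _) (integrable_bdd (c := 1) (by fun_prop) fun _ => hFb _)]
    simp [gP]
  have hint : ∀ i, Integrable (fun w => α i * (√M * |A.mulVec w i|) + b i) (stdG d) := fun i =>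
    (((hAi i).const_mul _).const_mul _).add (integrable_const _)
  change |F z - gP A M F z| ≤ _
  rw [e1, ← Real.norm_eq_abs]
  refine (norm_integral_le_of_norm_le (integrable_finsetSum Finset.univ fun i _ => hint i)
    (Filter.Eventually.of_forall fun w => (hF1 _).trans (le_of_eq ?_))).trans (le_of_eq ?_)
  · refine Finset.sum_congr rfl fun i _ => ?_
    rw [Pi.smul_apply, smul_eq_mul, abs_mul, abs_of_nonneg (Real.sqrt_nonneg _)]
  · rw [integral_finsetSum _ fun i _ => hint i]
    refine Finset.sum_congr rfl fun i _ => ?_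
    rw [integral_add (((hAi i).const_mul _).const_mul _) (integrable_const _), integral_const_mul,
      integral_const_mul]
    simp only [integral_const, probReal_univ, one_smul]
    ring

/-- Distribution function of the sum of `n` independent copies of `X`. -/
noncomputable def cdfSum {d : ℕ} {Ω : Type*} [MeasurableSpace Ω] (μ : Measure Ω)
    (X : Ω → Fin d → ℝ) (n : ℕ) (z : Fin d → ℝ) : ℝ :=
  ∫ x, orth (z - ∑ j, X (x j)) ∂(Measure.pi fun _ : Fin n => μ)

section ops
variable {d : ℕ} {Ω : Type*} [MeasurableSpace Ω] (A : Matrix (Fin d) (Fin d) ℝ)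
  (μ : Measure Ω) [IsProbabilityMeasure μ] (X : Ω → Fin d → ℝ)

lemma cdfSum_zero : cdfSum μ X 0 = orth := by
  ext z; simp [cdfSum]

lemma cdfSum_le (n : ℕ) (z) : |cdfSum μ X n z| ≤ 1 := abs_int_le _ fun _ => orth_abs _

omit [IsProbabilityMeasure μ] in
lemma cdfSum_nonneg (n : ℕ) (z) : 0 ≤ cdfSum μ X n z := integral_nonneg fun _ => orth_nonneg _

lemma cdfSum_meas (hX : Measurable X) (n : ℕ) : Measurable (cdfSum μ X n) :=
  meas_int (f := fun p : (Fin d → ℝ) × (Fin n → Ω) => orth (p.1 - ∑ j, X (p.2 j)))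
    (measurable_orth.comp (measurable_fst.sub (Finset.measurable_fun_sum _ fun j _ =>
      hX.comp ((measurable_pi_apply j).comp measurable_snd))))

lemma cdfSum_succ (hX : Measurable X) (n : ℕ) : cdfSum μ X (n + 1) = gT μ X (cdfSum μ X n) := by
  ext z
  unfold cdfSum gT
  have mp := measurePreserving_piFinSuccAbove (fun _ : Fin (n + 1) => μ) 0
  have hsm : ∀ k, Measurable fun x : Fin k → Ω => ∑ j, X (x j) := fun k =>
    Finset.measurable_fun_sum _ fun j _ => hX.comp (measurable_pi_apply j)
  have e : ∀ x : Fin (n + 1) → Ω, orth (z - ∑ j, X (x j))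
      = (fun p : Ω × (Fin n → Ω) => orth (z - X p.1 - ∑ j, X (p.2 j)))
        (MeasurableEquiv.piFinSuccAbove (fun _ => Ω) 0 x) := by
    intro x
    simp [Fin.sum_univ_succ, sub_sub, MeasurableEquiv.piFinSuccAbove, Fin.tail]
  simp only [e]
  have hm : Measurable (fun p : Ω × (Fin n → Ω) => orth (z - X p.1 - ∑ j, X (p.2 j))) :=
    measurable_orth.comp ((measurable_const.sub (hX.comp measurable_fst)).sub
      ((hsm n).comp measurable_snd))
  have := mp.integral_comp' (fun p : Ω × (Fin n → Ω) => orth (z - X p.1 - ∑ j, X (p.2 j)))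
  rw [this, integral_prod]
  exact integrable_bdd (c := 1) hm fun _ => orth_abs _

/-- One term of the telescoping sum: the discrepancy is split into the part carried by the
previous error `κ` and the part carried by the already smooth Gaussian distribution function. -/
lemma term_le (hX : Measurable X) (K : ℝ)
    (hK : ∀ (F : (Fin d → ℝ) → ℝ), Measurable F → ∀ c : ℝ, (∀ z, |F z| ≤ c) →
      ∀ m : ℝ, 1 ≤ m → ∀ z, |gP A m (gT μ X F) z - gP A (m + 1) F z| ≤ K * c / (m * √m))
    (j : ℕ) (κ : ℝ) (hκ : ∀ z, |cdfSum μ X j z - gP A j orth z| ≤ κ) (m : ℝ) (hm : 1 ≤ m) (z) :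
    |gP A m (cdfSum μ X (j + 1)) z - gP A (m + 1) (cdfSum μ X j) z|
      ≤ K * κ / (m * √m) + K / ((m + j) * √(m + j)) := by
  have mG := cdfSum_meas μ X hX j
  have bG := cdfSum_le μ X j
  have mP := gP_meas A (j : ℝ) measurable_orth
  have bP := gP_le A (j : ℝ) orth_abs
  have hj : (0 : ℝ) ≤ j := Nat.cast_nonneg j
  have t1 := hK _ (mG.sub mP) κ hκ m hm z
  have t2 := hK _ measurable_orth 1 orth_abs (m + j) (by linarith) z
  have e1 : gP A m (gT μ X (fun y => cdfSum μ X j y - gP A j orth y)) z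
      = gP A m (gT μ X (cdfSum μ X j)) z - gP A m (gT μ X (gP A j orth)) z := by
    rw [gT_sub μ X hX mG mP bG bP]
    exact gP_sub A m (gT_meas μ X hX mG) (gT_meas μ X hX mP) (gT_le μ X bG) (gT_le μ X bP) z
  have e2 : gP A (m + 1) (fun y => cdfSum μ X j y - gP A j orth y) z
      = gP A (m + 1) (cdfSum μ X j) z - gP A (m + 1) (gP A j orth) z :=
    gP_sub A _ mG mP bG bP z
  have e3 : gP A m (gT μ X (gP A j orth)) z = gP A (m + j) (gT μ X orth) z := by
    rw [← gP_gT_comm A μ X hX j measurable_orth orth_abs,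
      gP_gP A m j (by linarith) hj (gT_meas μ X hX measurable_orth) (gT_le μ X orth_abs)]
  have e4 : gP A (m + 1) (gP A j orth) z = gP A (m + j + 1) orth z := by
    rw [gP_gP A (m + 1) j (by linarith) hj measurable_orth orth_abs]
    congr 1; ring
  change |gP A m (gT μ X (fun y => cdfSum μ X j y - gP A j orth y)) z
    - gP A (m + 1) (fun y => cdfSum μ X j y - gP A j orth y) z| ≤ _ at t1
  rw [e1, e2, e3, e4] at t1
  rw [mul_one] at t2
  rw [cdfSum_succ μ X hX]
  have := abs_add_le (gP A m (gT μ X (cdfSum μ X j)) z - gP A (m + ↑j) (gT μ X orth) z -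
      (gP A (m + 1) (cdfSum μ X j) z - gP A (m + ↑j + 1) orth z))
      (gP A (m + ↑j) (gT μ X orth) z - gP A (m + ↑j + 1) orth z)
  refine le_trans (le_of_eq ?_) (this.trans (add_le_add t1 t2))
  congr 1; ring

omit [IsProbabilityMeasure μ] in
/-- Lindeberg's replacement, one summand at a time, under an initial Gaussian smoothing by `M`. -/
lemma telescope (M : ℝ) (n : ℕ) (z) :
    gP A M (cdfSum μ X n) z - gP A (M + n) (cdfSum μ X 0) z
      = ∑ j ∈ Finset.range n, (gP A (M + (n - 1 - j)) (cdfSum μ X (j + 1)) z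
        - gP A (M + (n - 1 - j) + 1) (cdfSum μ X j) z) := by
  have := Finset.sum_range_sub (fun j : ℕ => gP A (M + (n - j)) (cdfSum μ X j) z) n
  simp only [sub_self, add_zero, Nat.cast_zero, sub_zero] at this
  rw [← this]
  refine Finset.sum_congr rfl fun j _ => ?_
  congr 2
  · push_cast; ring
  · ring

end ops

lemma sum_inv_le (M : ℝ) (hM : 1 ≤ M) (n : ℕ) :
    ∑ j ∈ Finset.range n, 1 / ((M + (n - 1 - j)) * √(M + (n - 1 - j))) ≤ 4 / √M := by
  have h1 : ∀ x : ℝ, 1 ≤ x → 1 / (x * √x) ≤ 4 * (1 / √x - 1 / √(x + 1)) := by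
    intro x hx
    have hx0 : 0 < x := by linarith
    have a := Real.sq_sqrt hx0.le
    have b := Real.sq_sqrt (show 0 ≤ x + 1 by linarith)
    set p := √x
    set q := √(x + 1)
    have hp : 1 ≤ p := by rw [Real.one_le_sqrt]; exact hx
    have hpq : p ≤ q := Real.sqrt_le_sqrt (by linarith)
    have hp0 : 0 < p := by linarith
    have hq0 : 0 < q := by linarith
    have hq : q ≤ 3 / 2 * p := by
      by_contra h
      push Not at h
      nlinarith
    have e : 4 * (1 / p - 1 / q) = 4 / (p * q * (q + p)) := by
      have : (q - p) * (q + p) = 1 := by nlinarith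
      field_simp
      nlinarith
    rw [e, ← a]
    rw [div_le_div_iff₀ (by positivity) (by positivity)]
    have : q * (q + p) ≤ 4 * p ^ 2 := by nlinarith
    nlinarith
  have h2 : ∑ j ∈ Finset.range n, 1 / ((M + (n - 1 - j)) * √(M + (n - 1 - j)))
      ≤ ∑ j ∈ Finset.range n, (4 * (1 / √(M + (n - (j + 1 : ℕ)))) - 4 * (1 / √(M + (n - j)))) := by
    refine Finset.sum_le_sum fun j hj => ?_
    have hjn : (j : ℝ) + 1 ≤ n := by exact_mod_cast Finset.mem_range.mp hj
    have := h1 (M + (n - 1 - j)) (by linarith)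
    refine this.trans (le_of_eq ?_)
    push_cast
    rw [show M + ((n : ℝ) - 1 - j) + 1 = M + (n - j) by ring,
      show M + ((n : ℝ) - 1 - j) = M + (n - (j + 1)) by ring]
    ring
  refine h2.trans ?_
  rw [Finset.sum_range_sub (fun j : ℕ => 4 * (1 / √(M + ((n : ℝ) - j))))]
  have : 0 ≤ 4 * (1 / √(M + ((n : ℝ) - (0 : ℕ)))) := by positivity
  simp only [sub_self, add_zero]
  have e : 4 * (1 / √M) = 4 / √M := by ring
  rw [← e]
  linarith

section ops
variable {d : ℕ} {Ω : Type*} [MeasurableSpace Ω] (A : Matrix (Fin d) (Fin d) ℝ)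
  (μ : Measure Ω) [IsProbabilityMeasure μ] (X : Ω → Fin d → ℝ)

/-- The inductive argument: the smoothing estimates and the telescoping sum bootstrap to a
Berry–Esseen bound of order `1 / √n`. -/
lemma induct (hX : Measurable X) (K : ℝ) (hK0 : 0 ≤ K)
    (hK : ∀ (F : (Fin d → ℝ) → ℝ), Measurable F → ∀ c : ℝ, (∀ z, |F z| ≤ c) →
      ∀ m : ℝ, 1 ≤ m → ∀ z, |gP A m (gT μ X F) z - gP A (m + 1) F z| ≤ K * c / (m * √m))
    (C : ℝ) (hC0 : 0 ≤ C)
    (hC1 : ∀ M : ℝ, 1 ≤ M → ∀ n : ℕ, 0 < n → ∀ z,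
      |cdfSum μ X n z - gP A M (cdfSum μ X n) z| ≤ C * √M / √n)
    (hC2 : ∀ M : ℝ, 1 ≤ M → ∀ n : ℕ, 0 < n → ∀ z,
      |gP A n orth z - gP A M (gP A n orth) z| ≤ C * √M / √n) :
    ∃ D : ℝ, 0 ≤ D ∧ ∀ n : ℕ, 0 < n → ∀ z, |cdfSum μ X n z - gP A n orth z| ≤ D / √n := by
  -- the smoothing parameter is chosen so large that the part of the telescoping sum which is
  -- proportional to the earlier errors is at most half of the claimed bound
  set M : ℝ := (12 * K) ^ 2 + 1 with hM
  have hM1 : 1 ≤ M := by rw [hM]; nlinarith [sq_nonneg (12 * K)]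
  have hsM : 12 * K ≤ √M := Real.le_sqrt_of_sq_le (by rw [hM]; linarith)
  have hsM1 : 1 ≤ √M := by rw [Real.one_le_sqrt]; exact hM1
  set D : ℝ := 2 * (2 * C * √M + 4 * K) with hD
  have hD0 : 0 ≤ D := by positivity
  refine ⟨D, hD0, ?_⟩
  intro n
  induction n using Nat.strong_induction_on with
  | _ n ih =>
  intro hn z
  have hn0 : (1 : ℝ) ≤ n := by exact_mod_cast hn
  have hsn : 0 < √(n : ℝ) := Real.sqrt_pos.mpr (by linarith)
  have hsn2 := Real.sq_sqrt (show (0 : ℝ) ≤ n by linarith)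
  -- bound on each term of the telescoping sum
  have hterm : ∀ j ∈ Finset.range n, |gP A (M + (n - 1 - j)) (cdfSum μ X (j + 1)) z
        - gP A (M + (n - 1 - j) + 1) (cdfSum μ X j) z|
        ≤ K * (3 / (n * √n)) + K * (3 / 2 * D / √n) * (1 / ((M + (n - 1 - j)) * √(M + (n - 1 - j))))
          + K / (n * √n) := by
    intro j hj
    have hjn : (j : ℝ) + 1 ≤ n := by exact_mod_cast Finset.mem_range.mp hj
    have hm : 1 ≤ M + ((n : ℝ) - 1 - j) := by linarith
    have hlast : K / ((M + ((n : ℝ) - 1 - j) + j) * √(M + ((n : ℝ) - 1 - j) + j)) ≤ K / (n * √n) := by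
      have : (n : ℝ) ≤ M + ((n : ℝ) - 1 - j) + j := by linarith
      gcongr
    set m : ℝ := M + ((n : ℝ) - 1 - j) with hmdef
    have hm0 : 0 < m := by linarith
    have hsm : 0 < √m := Real.sqrt_pos.mpr hm0
    -- for `2 j < n` at least `n / 2` Gaussian steps smooth, and the trivial bound `1` on the
    -- earlier error suffices; for `2 j ≥ n` the induction hypothesis `D / √j` is `O(D / √n)`
    by_cases hcase : 2 * j < n
    · have hκ : ∀ z, |cdfSum μ X j z - gP A j orth z| ≤ 1 := by
        intro z
        have h1 := abs_le.mp (cdfSum_le μ X j z)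
        have h2 := abs_le.mp (gP_le A j orth_abs z)
        have h3 := cdfSum_nonneg μ X j z
        have h4 : 0 ≤ gP A j orth z := integral_nonneg fun _ => orth_nonneg _
        rw [abs_le]; constructor <;> linarith
      have t := term_le A μ X hX K hK j 1 hκ m hm z
      have hmn : (n : ℝ) / 2 ≤ m := by
        have : 2 * (j : ℝ) + 1 ≤ n := by exact_mod_cast hcase
        rw [hmdef]; linarith
      have hb : K * 1 / (m * √m) ≤ K * (3 / (n * √n)) := by
        have hs : √(n : ℝ) ≤ 3 / 2 * √m := by
          have : √(n : ℝ) ≤ √((3 / 2 * √m) ^ 2) := by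
            refine Real.sqrt_le_sqrt ?_
            rw [mul_pow, Real.sq_sqrt hm0.le]; linarith
          rwa [Real.sqrt_sq (by positivity)] at this
        rw [mul_one, div_eq_mul_one_div]
        refine mul_le_mul_of_nonneg_left ?_ hK0
        rw [div_le_div_iff₀ (by positivity) (by positivity), one_mul]
        calc (n : ℝ) * √n ≤ (2 * m) * (3 / 2 * √m) := by gcongr; linarith
          _ = _ := by ring
      have hpos : 0 ≤ K * (3 / 2 * D / √n) * (1 / (m * √m)) := by positivity
      linarith
    · push Not at hcase
      have hj0 : 0 < j := by omega
      have hj' : (n : ℝ) ≤ 2 * j := by exact_mod_cast hcase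
      have hsj : 0 < √(j : ℝ) := Real.sqrt_pos.mpr (by exact_mod_cast hj0)
      have hκ := ih j (Finset.mem_range.mp hj) hj0
      have t := term_le A μ X hX K hK j (D / √j) hκ m hm z
      have hs : √(n : ℝ) ≤ 3 / 2 * √j := by
        have : √(n : ℝ) ≤ √((3 / 2 * √j) ^ 2) := by
          refine Real.sqrt_le_sqrt ?_
          rw [mul_pow, Real.sq_sqrt (by positivity)]; linarith
        rwa [Real.sqrt_sq (by positivity)] at this
      have hb : K * (D / √j) / (m * √m) ≤ K * (3 / 2 * D / √n) * (1 / (m * √m)) := by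
        rw [div_eq_mul_one_div]
        refine mul_le_mul_of_nonneg_right (mul_le_mul_of_nonneg_left ?_ hK0) (by positivity)
        rw [div_le_div_iff₀ hsj hsn]
        nlinarith
      have hpos : 0 ≤ K * (3 / (n * √n)) := by positivity
      linarith
  have htele := telescope A μ X M n z
  rw [cdfSum_zero] at htele
  have hsum : |gP A M (cdfSum μ X n) z - gP A (M + n) orth z|
      ≤ 4 * K / √n + K * (3 / 2 * D / √n) * (4 / √M) := by
    rw [htele]
    refine (Finset.abs_sum_le_sum_abs _ _).trans ((Finset.sum_le_sum hterm).trans ?_)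
    rw [Finset.sum_add_distrib, Finset.sum_add_distrib]
    have h1 := mul_le_mul_of_nonneg_left (sum_inv_le M hM1 n)
      (show 0 ≤ K * (3 / 2 * D / √n) by positivity)
    rw [Finset.mul_sum] at h1
    have h2 : (n : ℝ) * (K * (3 / (n * √n))) + n * (K / (n * √n)) = 4 * K / √n := by
      field_simp; ring
    simp only [Finset.sum_const, Finset.card_range, nsmul_eq_mul]
    linarith
  have hMn : gP A M (gP A n orth) z = gP A (M + n) orth z := by
    rw [gP_gP A M n (by linarith) (by linarith) measurable_orth orth_abs]
  have a1 := hC1 M hM1 n hn z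
  have a2 := hC2 M hM1 n hn z
  rw [hMn] at a2
  have hsmall : K * (3 / 2 * D / √n) * (4 / √M) ≤ D / 2 / √n := by
    have : K * (3 / 2 * D / √n) * (4 / √M) = (6 * K / √M) * (D / √n) := by ring
    rw [this]
    have h6 : 6 * K / √M ≤ 1 / 2 := by
      rw [div_le_iff₀ (by linarith)]; linarith
    calc (6 * K / √M) * (D / √n) ≤ 1 / 2 * (D / √n) := by gcongr
      _ = _ := by ring
  have hfin : C * √M / √n + (4 * K / √n + D / 2 / √n) + C * √M / √n = D / √n := by
    rw [hD]; field_simp; ring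
  rw [abs_le] at *
  constructor <;> linarith [a1.1, a1.2, a2.1, a2.2, hsum.1, hsum.2]

/-- **Multivariate Berry–Esseen theorem** for orthants: the covariance `A Aᵀ` may be singular, but
each coordinate must have positive variance. -/
theorem berryEsseen (hX : Measurable X) (h3 : ∀ i, MemLp (fun ω => X ω i) 3 μ)
    (h0 : ∀ i, ∫ ω, X ω i ∂μ = 0)
    (hcov : ∀ i j, ∫ ω, X ω i * X ω j ∂μ = (A * A.transpose) i j)
    (hpos : ∀ i, 0 < (A * A.transpose) i i) :
    ∃ D : ℝ, 0 ≤ D ∧ ∀ n : ℕ, 0 < n → ∀ z : Fin d → ℝ,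
      |(Measure.pi fun _ : Fin n => μ).real {x | ∀ i, ∑ j, X (x j) i ≤ z i}
        - (stdG d).real {w | ∀ i, √n * A.mulVec w i ≤ z i}| ≤ D / √n := by
  obtain ⟨K, hK0, hK⟩ := step_le A μ X hX h3 h0 hcov
  set V : Fin d → ℝ := fun i => (A * A.transpose) i i with hV
  set T : Fin d → ℝ := fun i => ∫ ω, |X ω i| ^ 3 ∂μ with hT
  have hT0 : ∀ i, 0 ≤ T i := fun i => integral_nonneg fun _ => by positivity
  set E : Fin d → ℝ := fun i => ∫ w, |A.mulVec w i| ∂stdG d with hE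
  have hE0 : ∀ i, 0 ≤ E i := fun i => integral_nonneg fun _ => abs_nonneg _
  have hVs : ∀ i, V i = ∑ j, A i j ^ 2 := fun i => by
    simp only [hV, Matrix.mul_apply, Matrix.transpose_apply, sq]
  have hsV : ∀ i, 0 < √(V i) := fun i => Real.sqrt_pos.mpr (hpos i)
  set C : ℝ := ∑ i, (2 / √(V i) * E i + 2 * T i / (V i * √(V i))) with hC
  have hterm : ∀ i, 0 ≤ 2 / √(V i) * E i + 2 * T i / (V i * √(V i)) := fun i =>
    add_nonneg (mul_nonneg (by positivity) (hE0 i))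
      (div_nonneg (mul_nonneg (by norm_num) (hT0 i)) (mul_nonneg (hpos i).le (hsV i).le))
  have hC0 : 0 ≤ C := Finset.sum_nonneg fun i _ => hterm i
  have hC1 : ∀ M : ℝ, 1 ≤ M → ∀ n : ℕ, 0 < n → ∀ z,
      |cdfSum μ X n z - gP A M (cdfSum μ X n) z| ≤ C * √M / √n := by
    intro M hM n hn z
    have hn0 : (0 : ℝ) < n := by exact_mod_cast hn
    have hsn : 0 < √(n : ℝ) := Real.sqrt_pos.mpr hn0
    have hsM : 1 ≤ √M := by rw [Real.one_le_sqrt]; exact hM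
    have hsm : Measurable fun x : Fin n → Ω => ∑ j, X (x j) :=
      Finset.measurable_fun_sum _ fun j _ => hX.comp (measurable_pi_apply j)
    have hs := smoothing (Measure.pi fun _ : Fin n => μ) hsm
      (fun i => 2 / √(V i) / √n) (fun i => 2 * T i / (V i * √(V i)) / √n) (by
        intro i a δ hδ
        have mp := fun j => measurePreserving_eval (fun _ : Fin n => μ) j
        have hXi : Measurable fun ω => X ω i := (measurable_pi_apply i).comp hX
        have hint : ∀ (f : Ω → ℝ), Measurable f → ∀ j,
            ∫ x, f (x j) ∂(Measure.pi fun _ : Fin n => μ) = ∫ ω, f ω ∂μ := by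
          intro f hf j
          rw [← (mp j).map_eq, integral_map (measurable_pi_apply j).aemeasurable
            hf.aestronglyMeasurable]
          rw [(mp j).map_eq]
        have ac := anticonc_sqrt (Measure.pi fun _ : Fin n => μ) (fun j x => X (x j) i)
          (iIndepFun_pi (X := fun _ ω => X ω i) fun _ => hXi.aemeasurable)
          (fun j => hXi.comp (measurable_pi_apply j))
          (fun j => (h3 i).comp_measurePreserving (mp j))
          (fun j => (hint _ hXi j).trans (h0 i)) (V i) (T i) (hpos i) hn
          (by
            simp only [hint (fun ω => X ω i ^ 2) (by fun_prop)]
            simp [sq, hcov, hV])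
          (by
            simp only [hint (fun ω => |X ω i| ^ 3) (by fun_prop)]
            simp [hT])
          (a - δ) (a + δ) (by linarith)
        refine le_trans (le_of_eq ?_) (ac.trans (le_of_eq ?_))
        · congr 1
          ext x
          simp only [Set.mem_ofPred_eq, Finset.sum_apply, abs_le]
          constructor <;> rintro ⟨h1, h2⟩ <;> constructor <;> linarith
        · ring) A M z
    change |cdfSum μ X n z - gP A M (cdfSum μ X n) z| ≤ _ at hs
    refine hs.trans ?_
    rw [hC, Finset.sum_mul, Finset.sum_div]
    refine Finset.sum_le_sum fun i _ => ?_
    have h2 : 0 ≤ 2 * T i / (V i * √(V i)) :=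
      div_nonneg (mul_nonneg (by norm_num) (hT0 i)) (mul_nonneg (hpos i).le (hsV i).le)
    have e : 2 / √(V i) / √n * √M * E i + 2 * T i / (V i * √(V i)) / √n
      = (2 / √(V i) * E i * √M + 2 * T i / (V i * √(V i)) * 1) / √n := by ring
    change 2 / √(V i) / √n * √M * E i + 2 * T i / (V i * √(V i)) / √n ≤ _
    rw [e, add_mul]
    gcongr
  have hC2 : ∀ M : ℝ, 1 ≤ M → ∀ n : ℕ, 0 < n → ∀ z,
      |gP A n orth z - gP A M (gP A n orth) z| ≤ C * √M / √n := by
    intro M hM n hn z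
    have hn0 : (0 : ℝ) < n := by exact_mod_cast hn
    have hsn : 0 < √(n : ℝ) := Real.sqrt_pos.mpr hn0
    have hsM : 1 ≤ √M := by rw [Real.one_le_sqrt]; exact hM
    have hs := smoothing (stdG d) (S := fun w => √(n : ℝ) • A.mulVec w) (by fun_prop)
      (fun i => 2 / √(V i) / √n) (fun i => 0) (by
        intro i a δ hδ
        have e1 : ∀ w : Fin d → ℝ, (√(n : ℝ) • A.mulVec w) i = ∑ j, (√n * A i j) * w j := by
          intro w
          simp only [Pi.smul_apply, smul_eq_mul, Matrix.mulVec, dotProduct, Finset.mul_sum]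
          exact Finset.sum_congr rfl fun j _ => by ring
        have e2 : ∑ j, (√n * A i j) ^ 2 = n * V i := by
          rw [hVs, Finset.mul_sum]
          exact Finset.sum_congr rfl fun j _ => by rw [mul_pow, Real.sq_sqrt hn0.le]
        have h := stdG_linear_abs_le (fun j => √n * A i j) (by
          rw [e2]; exact mul_pos hn0 (hpos i)) a δ hδ
        simp only [e1, add_zero]
        refine h.trans (le_of_eq ?_)
        rw [e2, Real.sqrt_mul hn0.le, div_div, mul_comm (√(n : ℝ))]) A M z
    change |gP A n orth z - gP A M (gP A n orth) z| ≤ _ at hs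
    refine hs.trans ?_
    rw [hC, Finset.sum_mul, Finset.sum_div]
    refine Finset.sum_le_sum fun i _ => ?_
    have h2 : 0 ≤ 2 * T i / (V i * √(V i)) :=
      div_nonneg (mul_nonneg (by norm_num) (hT0 i)) (mul_nonneg (hpos i).le (hsV i).le)
    have e : 2 / √(V i) / √n * √M * E i + 0
      = (2 / √(V i) * E i * √M + 0) / √n := by ring
    change 2 / √(V i) / √n * √M * E i + 0 ≤ _
    rw [e, add_mul]
    gcongr
    positivity
  obtain ⟨D, hD0, hD⟩ := induct A μ X hX K hK0 hK C hC0 hC1 hC2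
  refine ⟨D, hD0, fun n hn z => ?_⟩
  have h := hD n hn z
  have e1 : cdfSum μ X n z
      = (Measure.pi fun _ : Fin n => μ).real {x | ∀ i, ∑ j, X (x j) i ≤ z i} := by
    unfold cdfSum
    have hsm : Measurable fun x : Fin n → Ω => ∑ j, X (x j) :=
      Finset.measurable_fun_sum _ fun j _ => hX.comp (measurable_pi_apply j)
    rw [integral_orth _ hsm]
    simp only [Finset.sum_apply]
  have e2 : gP A n orth z = (stdG d).real {w | ∀ i, √n * A.mulVec w i ≤ z i} := by
    unfold gP
    rw [integral_orth _ (by fun_prop)]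
    simp only [Pi.smul_apply, smul_eq_mul]
  rwa [e1, e2] at h

end ops
end MASC

/-! ### Growth of Gaussian orthant probabilities -/

namespace MASC
open MeasureTheory ProbabilityTheory
open scoped ENNReal

lemma abs_cos_sub_le (x y : ℝ) : |Real.cos x - Real.cos y| ≤ |x - y| := by
  rw [Real.cos_sub_cos, abs_mul, abs_mul]
  have h1 := Real.abs_sin_le_one ((x + y) / 2)
  have h2 : |Real.sin ((x - y) / 2)| ≤ |(x - y) / 2| := Real.abs_sin_le_abs
  rw [abs_div, abs_two] at h2
  have h3 : |(-2 : ℝ)| = 2 := by norm_num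
  rw [h3]
  nlinarith [abs_nonneg (Real.sin ((x + y) / 2)), abs_nonneg (Real.sin ((x - y) / 2))]

lemma abs_sin_sub_le (x y : ℝ) : |Real.sin x - Real.sin y| ≤ |x - y| := by
  have := abs_cos_sub_le (x - Real.pi / 2) (y - Real.pi / 2)
  simpa [Real.cos_sub_pi_div_two] using this

/-- The Gaussian probability of the orthant-shaped event `A w ≤ z`. -/
noncomputable def gcdf {d : ℕ} (A : Matrix (Fin d) (Fin d) ℝ) (z : Fin d → ℝ) : ℝ :=
  (stdG d).real {w | ∀ i, A.mulVec w i ≤ z i}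

lemma measurableSet_orthant {d : ℕ} (A : Matrix (Fin d) (Fin d) ℝ) (z : Fin d → ℝ) :
    MeasurableSet {w | ∀ i, A.mulVec w i ≤ z i} := by
  rw [show {w | ∀ i, A.mulVec w i ≤ z i} = ⋂ i, {w | A.mulVec w i ≤ z i} by ext; simp]
  exact MeasurableSet.iInter fun i => measurableSet_le
    ((measurable_pi_apply i).comp (measurable_mulVec A)) measurable_const

lemma exists_tail (d : ℕ) (η : ℝ) (hη : 0 < η) :
    ∃ B : ℝ, 0 < B ∧ (stdG d).real {w | B ≤ nrm w} ≤ η := by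
  have hint : Integrable (fun w => nrm w) (stdG d) :=
    (memLp_nrm (p := 1) (ξ := fun w => w) fun i => memLp_coord 1 (by norm_num) i).integrable le_rfl
  set I := ∫ w, nrm w ∂stdG d
  have hI : 0 ≤ I := integral_nonneg fun w => nrm_nonneg w
  refine ⟨(I + 1) / η, by positivity, ?_⟩
  have := mul_meas_ge_le_integral_of_nonneg (Filter.Eventually.of_forall fun w => nrm_nonneg w)
    hint ((I + 1) / η)
  change (I + 1) / η * (stdG d).real {w | (I + 1) / η ≤ nrm w} ≤ I at this
  have h2 : (stdG d).real {w | (I + 1) / η ≤ nrm w} * (I + 1) ≤ η * (I + 1) := by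
    have := mul_le_mul_of_nonneg_left this hη.le
    rw [← mul_assoc, mul_div_cancel₀ _ hη.ne'] at this
    nlinarith
  exact le_of_mul_le_mul_right h2 (by linarith)

/-- Lower bound on the growth of the Gaussian orthant probability along the diagonal. Two
independent Gaussian vectors `w, w'` are joined by the path `cos θ w + sin θ w'`, all of whose
points are standard Gaussian. If the path starts in the orthant and ends outside the `δ`-enlarged
orthant, then among `N ≍ 1/δ` equally spaced points on it, one lies in the `δ`-shell; a union
bound gives a lower bound `≍ δ` on the probability of the shell. -/
theorem growth {d : ℕ} (A : Matrix (Fin d) (Fin d) ℝ) (ε : ℝ) (h0 : 0 < ε) (h1 : ε < 1) :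
    ∃ c : ℝ, 0 < c ∧ ∀ (z : Fin d → ℝ) (δ : ℝ), 0 < δ → δ ≤ 1 → 1 - ε ≤ gcdf A z →
      min (1 - ε / 2) (1 - ε + c * δ) ≤ gcdf A (fun i => z i + δ) := by
  have hε : 0 < (1 - ε) * ε := mul_pos (by linarith) h0
  obtain ⟨B, hB, hBt⟩ := exists_tail d ((1 - ε) * ε / 8) (by positivity)
  set L : ℝ := ∑ i, nrm (A i) with hL
  have hL0 : 0 ≤ L := Finset.sum_nonneg fun i _ => nrm_nonneg _
  have hAL : ∀ i w, |A.mulVec w i| ≤ L * nrm w := fun i w => by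
    refine (abs_dot_le (A i) w).trans (mul_le_mul_of_nonneg_right ?_ (nrm_nonneg w))
    exact Finset.single_le_sum (f := fun i => nrm (A i)) (fun i _ => nrm_nonneg _)
      (Finset.mem_univ i)
  -- bounds the movement of each coordinate of `A` along the path, up to an event of small mass
  set Q : ℝ := Real.pi * L * B with hQ
  have hQ0 : 0 ≤ Q := by positivity
  refine ⟨(1 - ε) * ε / 4 / (Q + 2), by positivity, fun z δ hδ hδ1 hz => ?_⟩
  by_cases hbig : 1 - ε / 2 ≤ gcdf A (fun i => z i + δ)
  · exact (min_le_left _ _).trans hbig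
  refine (min_le_right _ _).trans ?_
  push Not at hbig
  set S0 : Set (Fin d → ℝ) := {w | ∀ i, A.mulVec w i ≤ z i} with hS0
  set S1 : Set (Fin d → ℝ) := {w | ∀ i, A.mulVec w i ≤ z i + δ} with hS1
  have mS0 : MeasurableSet S0 := measurableSet_orthant A z
  have mS1 : MeasurableSet S1 := measurableSet_orthant A _
  have hsub : S0 ⊆ S1 := fun w hw i => (hw i).trans (by linarith)
  have hG : (stdG d).real (S1 \ S0) = gcdf A (fun i => z i + δ) - gcdf A z :=
    measureReal_sdiff hsub mS0
  set N : ℕ := ⌈Q / δ⌉₊ + 1 with hN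
  have hN0 : (0 : ℝ) < N := by rw [hN]; positivity
  have hN1 : Q / δ ≤ N := by
    rw [hN]; push_cast
    exact (Nat.le_ceil _).trans (by linarith)
  have hN2 : N * δ ≤ Q + 2 := by
    have := (Nat.ceil_lt_add_one (div_nonneg hQ0 hδ.le)).le
    have h3 : (N : ℝ) ≤ Q / δ + 2 := by rw [hN]; push_cast; linarith
    calc N * δ ≤ (Q / δ + 2) * δ := by gcongr
      _ = Q + 2 * δ := by field_simp
      _ ≤ _ := by linarith
  have hQN : Q / N ≤ δ := by
    rw [div_le_iff₀ hN0]; rw [div_le_iff₀ hδ] at hN1; linarith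
  set θ : ℝ := Real.pi / (2 * N) with hθ
  set Wk : ℕ → (Fin d → ℝ) × (Fin d → ℝ) → (Fin d → ℝ) :=
    fun k q => Real.cos (k * θ) • q.1 + Real.sin (k * θ) • q.2 with hWk
  have hmap : ∀ k, Measure.map (Wk k) ((stdG d).prod (stdG d)) = stdG d := fun k => by
    have := map_rot (d := d) (Real.cos (k * θ)) (Real.sin (k * θ)) 1 (by
      rw [one_pow]; exact Real.cos_sq_add_sin_sq _)
    rw [hWk, this]
    simp
  have hWm : ∀ k, Measurable (Wk k) := fun k => by rw [hWk]; fun_prop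
  have hstep : ∀ k q i, |A.mulVec (Wk (k + 1) q) i - A.mulVec (Wk k q) i|
      ≤ L * (θ * (nrm q.1 + nrm q.2)) := by
    intro k q i
    have e : A.mulVec (Wk (k + 1) q) i - A.mulVec (Wk k q) i
        = (Real.cos ((k + 1 : ℕ) * θ) - Real.cos (k * θ)) * A.mulVec q.1 i
          + (Real.sin ((k + 1 : ℕ) * θ) - Real.sin (k * θ)) * A.mulVec q.2 i := by
      simp only [hWk, Matrix.mulVec_add, Matrix.mulVec_smul, Pi.add_apply, Pi.smul_apply,
        smul_eq_mul]
      ring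
    have hθ0 : 0 ≤ θ := by positivity
    have d1 : |((k + 1 : ℕ) : ℝ) * θ - k * θ| = θ := by
      push_cast; rw [← sub_mul, add_sub_cancel_left, one_mul, abs_of_nonneg hθ0]
    have c1 := abs_cos_sub_le ((k + 1 : ℕ) * θ) (k * θ)
    have c2 := abs_sin_sub_le ((k + 1 : ℕ) * θ) (k * θ)
    rw [d1] at c1 c2
    rw [e]
    refine (abs_add_le _ _).trans ?_
    rw [abs_mul, abs_mul]
    have t1 := mul_le_mul c1 (hAL i q.1) (abs_nonneg _) hθ0
    have t2 := mul_le_mul c2 (hAL i q.2) (abs_nonneg _) hθ0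
    linarith
  -- a path from `S0` to the complement of `S1` with steps at most `δ` visits the shell `S1 \ S0`
  have hcover : S0 ×ˢ S1ᶜ ⊆ (⋃ k ∈ Finset.range N, Wk (k + 1) ⁻¹' (S1 \ S0))
      ∪ (({w | B ≤ nrm w} ×ˢ Set.univ) ∪ (Set.univ ×ˢ {w | B ≤ nrm w})) := by
    rintro ⟨w, w'⟩ ⟨hw, hw'⟩
    by_contra hcon
    simp only [Set.mem_union, Set.mem_iUnion, Set.mem_prod, Set.mem_univ, and_true, true_and,
      not_or, not_exists, Set.mem_ofPred_eq, not_le, Set.mem_preimage, Finset.mem_range] at hcon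
    obtain ⟨hk, hb1, hb2⟩ := hcon
    have hsmall : L * (θ * (nrm w + nrm w')) ≤ δ := by
      calc L * (θ * (nrm w + nrm w')) ≤ L * (θ * (2 * B)) := by gcongr; linarith
        _ = Q / N := by rw [hθ, hQ]; field_simp
        _ ≤ δ := hQN
    have hin : ∀ k ≤ N, Wk k (w, w') ∈ S0 := by
      intro k
      induction k with
      | zero => intro _; simpa [hWk] using hw
      | succ k ih =>
        intro hkN
        have h := ih (by omega)
        by_contra hnot
        refine hk k (by omega) ⟨fun i => ?_, hnot⟩
        have := (le_abs_self _).trans (hstep k (w, w') i)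
        have := h i
        simp only at *
        linarith
    have hlast := hin N le_rfl
    have hNθ : (N : ℝ) * θ = Real.pi / 2 := by rw [hθ]; field_simp
    have hWN : Wk N (w, w') = w' := by
      simp only [hWk, hNθ, Real.cos_pi_div_two, Real.sin_pi_div_two]; simp
    rw [hWN] at hlast
    exact hw' (hsub hlast)
  have hmeas : ((stdG d).prod (stdG d)).real (S0 ×ˢ S1ᶜ)
      ≤ N * (stdG d).real (S1 \ S0) + 2 * ((1 - ε) * ε / 8) := by
    refine (measureReal_mono hcover).trans ?_
    refine (measureReal_union_le _ _).trans (add_le_add ?_ ?_)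
    · refine (measureReal_biUnion_finset_le _ _).trans ?_
      have : ∀ k ∈ Finset.range N, ((stdG d).prod (stdG d)).real (Wk (k + 1) ⁻¹' (S1 \ S0))
          = (stdG d).real (S1 \ S0) := fun k _ => by
        rw [← map_measureReal_apply (hWm _) (mS1.diff mS0), hmap]
      rw [Finset.sum_congr rfl this]
      simp
    · refine (measureReal_union_le _ _).trans ?_
      rw [measureReal_prod_prod, measureReal_prod_prod]
      simp only [probReal_univ, mul_one, one_mul]
      linarith
  rw [measureReal_prod_prod, probReal_compl_eq_one_sub mS1, hG] at hmeas
  change gcdf A z * (1 - gcdf A (fun i => z i + δ)) ≤ _ at hmeas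
  have h4 : (1 - ε) * (ε / 2) ≤ gcdf A z * (1 - gcdf A (fun i => z i + δ)) :=
    mul_le_mul hz (by linarith) (by linarith) (by linarith)
  set g := gcdf A (fun i => z i + δ) - gcdf A z with hg
  have h5 : (1 - ε) * ε / 4 ≤ N * g := by linarith
  have h6 : (1 - ε) * ε / 4 * δ ≤ g * (Q + 2) := by
    have hg0 : 0 ≤ g := by rw [← hG]; positivity
    calc (1 - ε) * ε / 4 * δ ≤ N * g * δ := by gcongr
      _ = g * (N * δ) := by ring
      _ ≤ _ := by gcongr
  have h7 : (1 - ε) * ε / 4 / (Q + 2) * δ ≤ g := by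
    rw [div_mul_eq_mul_div, div_le_iff₀ (by positivity)]; exact h6
  linarith

end MASC

/-! ### Random coding with maximum-likelihood decoding -/

namespace MASC
open MeasureTheory ProbabilityTheory
open scoped ENNReal

section coding
open Classical

/-- Under a uniformly random map into `M` bins, two distinct points collide with
probability `1/M`. -/
lemma sum_collision {a : Type*} [Fintype a] (M : ℕ) (hM : 0 < M) {x y : a} (h : y ≠ x) :
    ∑ f : a → Fin M, (if f y = f x then (1 : ℝ) else 0) = Fintype.card (a → Fin M) / M := by
  have hM' : (M : ℝ) ≠ 0 := by exact_mod_cast hM.ne'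
  rw [eq_div_iff hM', Finset.sum_boole]
  have : (Finset.univ.filter fun f : a → Fin M => f y = f x).card * M
      = Fintype.card (a → Fin M) := by
    have e : ((Finset.univ.filter fun f : a → Fin M => f y = f x) ×ˢ
        (Finset.univ : Finset (Fin M))).card = (Finset.univ : Finset (a → Fin M)).card := by
      refine Finset.card_bij' (fun q _ => Function.update q.1 y q.2)
        (fun g _ => (Function.update g y (g x), g y)) ?_ ?_ ?_ ?_
      · intro q _; simp
      · intro g _
        simp [Function.update_of_ne h.symm]
      · rintro ⟨f, m⟩ hq
        simp only [Finset.mem_product, Finset.mem_filter, Finset.mem_univ, true_and,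
          and_true] at hq
        simp [Function.update_of_ne h.symm, ← hq]
      · intro g _
        simp
    rw [Finset.card_product] at e
    simpa using e
  exact_mod_cast this

/-- Maximum-likelihood decoding for given encoders: an error at `(x, y)` requires a competitor
in the same bins that is at least as likely. -/
lemma exists_ml {a b m₁ m₂ : Type*} [Fintype a] [Fintype b] [Nonempty a] [Nonempty b]
    (p : a → b → ℝ) (f₁ : a → m₁) (f₂ : b → m₂) :
    ∃ g : m₁ × m₂ → a × b, ∀ x y, g (f₁ x, f₂ y) ≠ (x, y) →
      ∃ q : a × b, q ≠ (x, y) ∧ f₁ q.1 = f₁ x ∧ f₂ q.2 = f₂ y ∧ p x y ≤ p q.1 q.2 := by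
  have key : ∀ m : m₁ × m₂, ∃ q : a × b, ∀ x y, f₁ x = m.1 → f₂ y = m.2 →
      f₁ q.1 = m.1 ∧ f₂ q.2 = m.2 ∧ p x y ≤ p q.1 q.2 := by
    intro m
    set S : Finset (a × b) := Finset.univ.filter fun q => f₁ q.1 = m.1 ∧ f₂ q.2 = m.2 with hS
    rcases S.eq_empty_or_nonempty with h | h
    · refine ⟨Classical.arbitrary _, fun x y hx hy => ?_⟩
      have : (x, y) ∈ S := by simp [hS, hx, hy]
      rw [h] at this
      simp at this
    · obtain ⟨q, hq, hmax⟩ := S.exists_max_image (fun q => p q.1 q.2) h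
      simp only [hS, Finset.mem_filter, Finset.mem_univ, true_and] at hq
      exact ⟨q, fun x y hx hy => ⟨hq.1, hq.2, hmax (x, y) (by simp [hS, hx, hy])⟩⟩
  choose g hg using key
  refine ⟨g, fun x y hne => ⟨g (f₁ x, f₂ y), hne, ?_⟩⟩
  exact hg (f₁ x, f₂ y) x y rfl rfl

/-- Random-coding union bound with maximum-likelihood decoding, finite alphabets. -/
lemma finite_code {a b : Type*} [Fintype a] [Fintype b] [Nonempty a] [Nonempty b]
    (p : a → b → ℝ) (hp : ∀ x y, 0 ≤ p x y) (M₁ M₂ : ℕ) (h₁ : 0 < M₁) (h₂ : 0 < M₂) :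
    ∃ (f₁ : a → Fin M₁) (f₂ : b → Fin M₂) (g : Fin M₁ × Fin M₂ → a × b),
      ∑ x, ∑ y, (if g (f₁ x, f₂ y) = (x, y) then 0 else p x y)
        ≤ ∑ x, ∑ y, p x y * min 1
          (((Finset.univ.filter fun x' => p x y ≤ p x' y).card : ℝ) / M₁
          + ((Finset.univ.filter fun y' => p x y ≤ p x y').card : ℝ) / M₂
          + ((Finset.univ.filter fun q : a × b => p x y ≤ p q.1 q.2).card : ℝ) / (M₁ * M₂)) := by
  have : Nonempty (Fin M₁) := ⟨⟨0, h₁⟩⟩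
  have : Nonempty (Fin M₂) := ⟨⟨0, h₂⟩⟩
  choose g hg using fun (f : (a → Fin M₁) × (b → Fin M₂)) => exists_ml p f.1 f.2
  set Bd : a → b → ℝ := fun x y => (((Finset.univ.filter fun x' => p x y ≤ p x' y).card : ℝ) / M₁
          + ((Finset.univ.filter fun y' => p x y ≤ p x y').card : ℝ) / M₂
          + ((Finset.univ.filter fun q : a × b => p x y ≤ p q.1 q.2).card : ℝ) / (M₁ * M₂))
    with hBd
  set er : (a → Fin M₁) × (b → Fin M₂) → a → b → ℝ := fun f x y =>
    if g f (f.1 x, f.2 y) = (x, y) then 0 else 1 with her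
  set c₁ : (a → Fin M₁) → a → a → ℝ := fun f x' x => if f x' = f x then 1 else 0 with hc₁
  set c₂ : (b → Fin M₂) → b → b → ℝ := fun f x' x => if f x' = f x then 1 else 0 with hc₂
  have c₁0 : ∀ f x' x, 0 ≤ c₁ f x' x := fun f x' x => by simp only [hc₁]; split_ifs <;> simp
  have c₂0 : ∀ f x' x, 0 ≤ c₂ f x' x := fun f x' x => by simp only [hc₂]; split_ifs <;> simp
  set F₁ : ℝ := (Fintype.card (a → Fin M₁) : ℝ) with hF₁
  set F₂ : ℝ := (Fintype.card (b → Fin M₂) : ℝ) with hF₂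
  have hF₁0 : 0 < F₁ := by rw [hF₁]; exact_mod_cast Fintype.card_pos
  have hF₂0 : 0 < F₂ := by rw [hF₂]; exact_mod_cast Fintype.card_pos
  -- union bound over the three ways in which a competitor can differ from `(x, y)`
  have hub : ∀ f x y, er f x y
      ≤ (∑ x' ∈ Finset.univ.filter fun x' => x' ≠ x ∧ p x y ≤ p x' y, c₁ f.1 x' x)
      + (∑ y' ∈ Finset.univ.filter fun y' => y' ≠ y ∧ p x y ≤ p x y', c₂ f.2 y' y)
      + ∑ q ∈ Finset.univ.filter fun q : a × b => (q.1 ≠ x ∧ q.2 ≠ y) ∧ p x y ≤ p q.1 q.2,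
          c₁ f.1 q.1 x * c₂ f.2 q.2 y := by
    intro f x y
    have n1 : 0 ≤ ∑ x' ∈ Finset.univ.filter fun x' => x' ≠ x ∧ p x y ≤ p x' y, c₁ f.1 x' x :=
      Finset.sum_nonneg fun _ _ => c₁0 _ _ _
    have n2 : 0 ≤ ∑ y' ∈ Finset.univ.filter fun y' => y' ≠ y ∧ p x y ≤ p x y', c₂ f.2 y' y :=
      Finset.sum_nonneg fun _ _ => c₂0 _ _ _
    have n3 : 0 ≤ ∑ q ∈ Finset.univ.filter fun q : a × b => (q.1 ≠ x ∧ q.2 ≠ y) ∧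
        p x y ≤ p q.1 q.2, c₁ f.1 q.1 x * c₂ f.2 q.2 y :=
      Finset.sum_nonneg fun _ _ => mul_nonneg (c₁0 _ _ _) (c₂0 _ _ _)
    by_cases he : g f (f.1 x, f.2 y) = (x, y)
    · simp only [her, he, if_true]; linarith
    · obtain ⟨⟨x', y'⟩, hq, e1, e2, hle⟩ := hg f x y he
      simp only at e1 e2 hle
      have hone : er f x y = 1 := by simp [her, he]
      rw [hone]
      by_cases hx : x' = x
      · have hy : y' ≠ y := fun hy => hq (by rw [hx, hy])
        subst hx
        have := Finset.single_le_sum (f := fun y' => c₂ f.2 y' y)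
          (s := Finset.univ.filter fun y' => y' ≠ y ∧ p x' y ≤ p x' y')
          (fun _ _ => c₂0 _ _ _) (a := y') (by simp [hy, hle])
        have h1 : c₂ f.2 y' y = 1 := by simp [hc₂, e2]
        simp only [h1] at this
        linarith
      · by_cases hy : y' = y
        · subst hy
          have := Finset.single_le_sum (f := fun x' => c₁ f.1 x' x)
            (s := Finset.univ.filter fun x' => x' ≠ x ∧ p x y' ≤ p x' y')
            (fun _ _ => c₁0 _ _ _) (a := x') (by simp [hx, hle])
          have h1 : c₁ f.1 x' x = 1 := by simp [hc₁, e1]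
          simp only [h1] at this
          linarith
        · have := Finset.single_le_sum (f := fun q : a × b => c₁ f.1 q.1 x * c₂ f.2 q.2 y)
            (s := Finset.univ.filter fun q : a × b => (q.1 ≠ x ∧ q.2 ≠ y) ∧ p x y ≤ p q.1 q.2)
            (fun _ _ => mul_nonneg (c₁0 _ _ _) (c₂0 _ _ _)) (a := (x', y'))
            (by simp [hx, hy, hle])
          have h1 : c₁ f.1 x' x = 1 := by simp [hc₁, e1]
          have h2 : c₂ f.2 y' y = 1 := by simp [hc₂, e2]
          simp only [h1, h2] at this
          linarith
  have hM₁0 : (0 : ℝ) < M₁ := by exact_mod_cast h₁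
  have hM₂0 : (0 : ℝ) < M₂ := by exact_mod_cast h₂
  have s1 : ∀ x' x : a, x' ≠ x → ∑ f₁, ∑ _f₂ : b → Fin M₂, c₁ f₁ x' x = F₁ * F₂ * (1 / M₁) := by
    intro x' x h
    simp only [Finset.sum_const, Finset.card_univ, nsmul_eq_mul]
    rw [← Finset.mul_sum, sum_collision M₁ h₁ h]
    ring
  have s2 : ∀ y' y : b, y' ≠ y → ∑ _f₁ : a → Fin M₁, ∑ f₂, c₂ f₂ y' y = F₁ * F₂ * (1 / M₂) := by
    intro x' x h
    simp only [Finset.sum_const, Finset.card_univ, nsmul_eq_mul]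
    rw [sum_collision M₂ h₂ h]
    ring
  have s3 : ∀ (q : a × b) (x : a) (y : b), q.1 ≠ x ∧ q.2 ≠ y → ∑ f₁, ∑ f₂, c₁ f₁ q.1 x * c₂ f₂ q.2 y
      = F₁ * F₂ * (1 / (M₁ * M₂)) := by
    intro q x y h
    rw [← Finset.sum_mul_sum, sum_collision M₂ h₂ h.2, sum_collision M₁ h₁ h.1]
    ring
  have havg : ∀ x y, ∑ f₁, ∑ f₂, er (f₁, f₂) x y ≤ F₁ * F₂ * min 1 (Bd x y) := by
    intro x y
    rw [mul_min_of_nonneg _ _ (by positivity)]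
    refine le_min ?_ ?_
    · have : ∀ f₁ f₂, er (f₁, f₂) x y ≤ 1 := fun f₁ f₂ => by
        simp only [her]; split_ifs <;> norm_num
      refine (Finset.sum_le_sum fun f₁ _ => Finset.sum_le_sum fun f₂ _ => this f₁ f₂).trans ?_
      simp [hF₁, hF₂]
    · refine (Finset.sum_le_sum fun f₁ _ => Finset.sum_le_sum fun f₂ _ =>
        hub (f₁, f₂) x y).trans ?_
      simp only [Finset.sum_add_distrib, hBd, mul_add]
      refine add_le_add (add_le_add ?_ ?_) ?_
      · rw [show (∑ f₁ : a → Fin M₁, ∑ f₂ : b → Fin M₂,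
            ∑ x' ∈ Finset.univ.filter fun x' => x' ≠ x ∧ p x y ≤ p x' y, c₁ f₁ x' x)
            = ∑ x' ∈ Finset.univ.filter fun x' => x' ≠ x ∧ p x y ≤ p x' y, F₁ * F₂ * (1 / M₁) by
          simp only [Finset.sum_comm (t := Finset.univ.filter _)]
          exact Finset.sum_congr rfl fun x' hx' => s1 x' x (Finset.mem_filter.mp hx').2.1]
        rw [Finset.sum_const, nsmul_eq_mul]
        have hc := Finset.card_le_card (Finset.monotone_filter_right
          (Finset.univ : Finset a) (p := fun x' => x' ≠ x ∧ p x y ≤ p x' y)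
          (q := fun x' => p x y ≤ p x' y) (fun x' _ h => h.2))
        have hc' : ((Finset.univ.filter fun x' => x' ≠ x ∧ p x y ≤ p x' y).card : ℝ)
          ≤ ((Finset.univ.filter fun x' => p x y ≤ p x' y).card : ℝ) := by exact_mod_cast hc
        refine (mul_le_mul_of_nonneg_right hc' (show 0 ≤ F₁ * F₂ * (1 / (M₁ : ℝ)) by
          positivity)).trans (le_of_eq (by ring))
      · rw [show (∑ f₁ : a → Fin M₁, ∑ f₂ : b → Fin M₂,
            ∑ y' ∈ Finset.univ.filter fun y' => y' ≠ y ∧ p x y ≤ p x y', c₂ f₂ y' y)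
            = ∑ y' ∈ Finset.univ.filter fun y' => y' ≠ y ∧ p x y ≤ p x y', F₁ * F₂ * (1 / M₂) by
          simp only [Finset.sum_comm (t := Finset.univ.filter _)]
          exact Finset.sum_congr rfl fun y' hy' => s2 y' y (Finset.mem_filter.mp hy').2.1]
        rw [Finset.sum_const, nsmul_eq_mul]
        have hc := Finset.card_le_card (Finset.monotone_filter_right
          (Finset.univ : Finset b) (p := fun y' => y' ≠ y ∧ p x y ≤ p x y')
          (q := fun y' => p x y ≤ p x y') (fun y' _ h => h.2))
        have hc' : ((Finset.univ.filter fun y' => y' ≠ y ∧ p x y ≤ p x y').card : ℝ)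
          ≤ ((Finset.univ.filter fun y' => p x y ≤ p x y').card : ℝ) := by exact_mod_cast hc
        refine (mul_le_mul_of_nonneg_right hc' (show 0 ≤ F₁ * F₂ * (1 / (M₂ : ℝ)) by
          positivity)).trans (le_of_eq (by ring))
      · rw [show (∑ f₁ : a → Fin M₁, ∑ f₂ : b → Fin M₂,
            ∑ q ∈ Finset.univ.filter fun q : a × b => (q.1 ≠ x ∧ q.2 ≠ y) ∧ p x y ≤ p q.1 q.2,
              c₁ f₁ q.1 x * c₂ f₂ q.2 y)
            = ∑ q ∈ Finset.univ.filter fun q : a × b => (q.1 ≠ x ∧ q.2 ≠ y) ∧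
              p x y ≤ p q.1 q.2, F₁ * F₂ * (1 / (M₁ * M₂)) by
          simp only [Finset.sum_comm (t := Finset.univ.filter _)]
          exact Finset.sum_congr rfl fun q hq => s3 q x y (Finset.mem_filter.mp hq).2.1]
        rw [Finset.sum_const, nsmul_eq_mul]
        have hc := Finset.card_le_card (Finset.monotone_filter_right
          (Finset.univ : Finset (a × b)) (p := fun q => (q.1 ≠ x ∧ q.2 ≠ y) ∧ p x y ≤ p q.1 q.2)
          (q := fun q => p x y ≤ p q.1 q.2) (fun y' _ h => h.2))
        have hc' : ((Finset.univ.filter fun q : a × b => (q.1 ≠ x ∧ q.2 ≠ y) ∧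
            p x y ≤ p q.1 q.2).card : ℝ)
          ≤ ((Finset.univ.filter fun q : a × b => p x y ≤ p q.1 q.2).card : ℝ) := by
          exact_mod_cast hc
        refine (mul_le_mul_of_nonneg_right hc' (show 0 ≤ F₁ * F₂ * (1 / ((M₁ : ℝ) * M₂)) by
          positivity)).trans (le_of_eq (by ring))
  have htot : ∑ f : (a → Fin M₁) × (b → Fin M₂), ∑ x, ∑ y, p x y * er f x y
      ≤ ∑ _f : (a → Fin M₁) × (b → Fin M₂), ∑ x, ∑ y, p x y * min 1 (Bd x y) := by
    rw [Finset.sum_const, Finset.card_univ, Fintype.card_prod, nsmul_eq_mul, Finset.sum_comm,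
      Finset.mul_sum]
    refine Finset.sum_le_sum fun x _ => ?_
    rw [Finset.sum_comm, Finset.mul_sum]
    refine Finset.sum_le_sum fun y _ => ?_
    rw [← Finset.mul_sum, Fintype.sum_prod_type]
    have := mul_le_mul_of_nonneg_left (havg x y) (hp x y)
    push_cast
    linarith
  obtain ⟨f, -, hf⟩ := Finset.exists_le_of_sum_le Finset.univ_nonempty htot
  refine ⟨f.1, f.2, g f, le_trans (le_of_eq ?_) hf⟩
  refine Finset.sum_congr rfl fun x _ => Finset.sum_congr rfl fun y _ => ?_
  simp only [her]
  split_ifs <;> simp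

/-- Random-coding union bound on countable alphabets, up to an arbitrarily small truncation
error `δ`: the competitors are only counted in finite sets `K₁`, `K₂`. -/
theorem countable_code {α β : Type*} (p : α × β → ℝ) (hp : ∀ q, 0 ≤ p q) (hs : HasSum p 1)
    (M₁ M₂ : ℕ) (h₁ : 0 < M₁) (h₂ : 0 < M₂) (δ : ℝ) (hδ : 0 < δ) (hδ1 : δ < 1) :
    ∃ (K₁ : Finset α) (K₂ : Finset β)
      (f₁ : α → Fin M₁) (f₂ : β → Fin M₂) (g : Fin M₁ × Fin M₂ → α × β),
      ∑' q : α × β, (if g (f₁ q.1, f₂ q.2) = q then 0 else p q)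
        ≤ δ + ∑ q ∈ K₁ ×ˢ K₂, p q * min 1
          (((K₁.filter fun x' => p q ≤ p (x', q.2)).card : ℝ) / M₁
          + ((K₂.filter fun y' => p q ≤ p (q.1, y')).card : ℝ) / M₂
          + (((K₁ ×ˢ K₂).filter fun q' => p q ≤ p q').card : ℝ) / (M₁ * M₂)) := by
  obtain ⟨s, hsδ⟩ := (hs.eventually_const_lt (u := 1 - δ) (by linarith)).exists
  set K₁ := s.image Prod.fst with hK₁
  set K₂ := s.image Prod.snd with hK₂
  have hsK : s ⊆ K₁ ×ˢ K₂ := fun q hq => by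
    simp only [Finset.mem_product, hK₁, hK₂]
    exact ⟨Finset.mem_image_of_mem _ hq, Finset.mem_image_of_mem _ hq⟩
  have hne : s.Nonempty := by
    rw [Finset.nonempty_iff_ne_empty]
    rintro rfl
    simp at hsδ
    linarith
  obtain ⟨⟨x₀, y₀⟩, hx₀⟩ := hne
  have : Nonempty {x // x ∈ K₁} := ⟨⟨x₀, Finset.mem_image_of_mem Prod.fst hx₀⟩⟩
  have : Nonempty {y // y ∈ K₂} := ⟨⟨y₀, Finset.mem_image_of_mem Prod.snd hx₀⟩⟩
  obtain ⟨f₁, f₂, g, hfg⟩ := finite_code (fun (x : {x // x ∈ K₁}) (y : {y // y ∈ K₂}) =>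
    p (x.1, y.1)) (fun x y => hp _) M₁ M₂ h₁ h₂
  set F₁ : α → Fin M₁ := fun x => if h : x ∈ K₁ then f₁ ⟨x, h⟩ else ⟨0, h₁⟩ with hF₁
  set F₂ : β → Fin M₂ := fun y => if h : y ∈ K₂ then f₂ ⟨y, h⟩ else ⟨0, h₂⟩ with hF₂
  set G : Fin M₁ × Fin M₂ → α × β := fun m => ((g m).1.1, (g m).2.1) with hG
  refine ⟨K₁, K₂, F₁, F₂, G, ?_⟩
  set e : α × β → ℝ := fun q => if G (F₁ q.1, F₂ q.2) = q then 0 else p q with he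
  have he0 : ∀ q, 0 ≤ e q := fun q => by
    simp only [he]; split_ifs; exacts [le_rfl, hp q]
  have hep : ∀ q, e q ≤ p q := fun q => by
    simp only [he]; split_ifs; exacts [hp q, le_rfl]
  have hes : Summable e := Summable.of_nonneg_of_le he0 hep hs.summable
  have h1 : ∑' q, e q ≤ δ + ∑ q ∈ K₁ ×ˢ K₂, e q := by
    have a1 := (hs.summable.sub hes).sum_le_tsum (K₁ ×ˢ K₂) fun q _ => sub_nonneg.mpr (hep q)
    rw [hs.summable.tsum_sub hes, hs.tsum_eq, Finset.sum_sub_distrib] at a1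
    have a4 := Finset.sum_le_sum_of_subset_of_nonneg hsK fun q _ _ => hp q
    linarith
  refine h1.trans (add_le_add le_rfl ?_)
  rw [Finset.sum_product, Finset.sum_product]
  rw [← Finset.sum_coe_sort K₁, ← Finset.sum_coe_sort K₁]
  simp_rw [← Finset.sum_coe_sort K₂]
  refine le_trans (le_of_eq ?_) (hfg.trans (le_of_eq ?_))
  · refine Finset.sum_congr rfl fun x _ => Finset.sum_congr rfl fun y _ => ?_
    have hx : F₁ x.1 = f₁ x := by simp [hF₁]
    have hy : F₂ y.1 = f₂ y := by simp [hF₂]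
    have hiff : G (f₁ x, f₂ y) = (x.1, y.1) ↔ g (f₁ x, f₂ y) = (x, y) := by
      simp only [hG, Prod.ext_iff, Subtype.ext_iff]
    simp only [he, hx, hy]
    by_cases h : g (f₁ x, f₂ y) = (x, y)
    · rw [if_pos (hiff.mpr h), if_pos h]
    · rw [if_neg (mt hiff.mp h), if_neg h]
  · refine Finset.sum_congr rfl fun x _ => Finset.sum_congr rfl fun y _ => ?_
    have c1 : (Finset.univ.filter fun x' : {x // x ∈ K₁} => p (x.1, y.1) ≤ p (x'.1, y.1)).card
        = (K₁.filter fun x' => p (x.1, y.1) ≤ p (x', y.1)).card := by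
      rw [← Finset.card_map (Function.Embedding.subtype _)]
      congr 1; ext; simp [and_comm]
    have c2 : (Finset.univ.filter fun y' : {y // y ∈ K₂} => p (x.1, y.1) ≤ p (x.1, y'.1)).card
        = (K₂.filter fun y' => p (x.1, y.1) ≤ p (x.1, y')).card := by
      rw [← Finset.card_map (Function.Embedding.subtype _)]
      congr 1; ext; simp [and_comm]
    have c3 : (Finset.univ.filter fun q : {x // x ∈ K₁} × {y // y ∈ K₂} =>
          p (x.1, y.1) ≤ p (q.1.1, q.2.1)).card
        = ((K₁ ×ˢ K₂).filter fun q => p (x.1, y.1) ≤ p q).card := by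
      rw [← Finset.card_map ((Function.Embedding.subtype _).prodMap (Function.Embedding.subtype _))]
      congr 1; ext ⟨u, v⟩; simp
      tauto
    rw [c1, c2, c3]

end coding
end MASC

/-! ### Discrete probability -/

namespace MASC
open MeasureTheory ProbabilityTheory
open scoped ENNReal

section discrete
variable {Ω : Type*} [Countable Ω] [MeasurableSpace Ω] [DiscreteMeasurableSpace Ω]

/-- The measure with probability mass function `P`. -/
noncomputable def pm (P : Ω → ℝ) : Measure Ω :=
  Measure.sum fun x => ENNReal.ofReal (P x) • Measure.dirac x

omit [Countable Ω] in
lemma pm_singleton (P : Ω → ℝ) (x : Ω) : pm P {x} = ENNReal.ofReal (P x) := by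
  classical
  rw [pm, Measure.sum_apply _ (measurableSet_singleton x), tsum_eq_single x]
  · simp
  · intro y hy
    simp [hy]

omit [Countable Ω] in
lemma pm_real_singleton {P : Ω → ℝ} (h0 : ∀ x, 0 ≤ P x) (x : Ω) : (pm P).real {x} = P x := by
  rw [measureReal_def, pm_singleton, ENNReal.toReal_ofReal (h0 x)]

omit [Countable Ω] [DiscreteMeasurableSpace Ω] in
lemma pm_prob {P : Ω → ℝ} (h0 : ∀ x, 0 ≤ P x) (hs : HasSum P 1) :
    IsProbabilityMeasure (pm P) := by
  refine ⟨?_⟩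
  rw [pm, Measure.sum_apply _ MeasurableSet.univ]
  simp only [Measure.smul_apply, measure_univ, smul_eq_mul, mul_one]
  rw [← ENNReal.ofReal_tsum_of_nonneg h0 hs.summable, hs.tsum_eq, ENNReal.ofReal_one]

lemma pm_integrable_iff {P : Ω → ℝ} (h0 : ∀ x, 0 ≤ P x) (f : Ω → ℝ) :
    Integrable f (pm P) ↔ Summable fun x => P x * |f x| := by
  unfold pm
  rw [integrable_sum_dirac_iff (x := fun i => i) (fun _ => ENNReal.ofReal_ne_top)]
  simp only [ENNReal.toReal_ofReal (h0 _), Real.norm_eq_abs]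

lemma pm_integral {P : Ω → ℝ} (h0 : ∀ x, 0 ≤ P x) (f : Ω → ℝ) :
    ∫ x, f x ∂pm P = ∑' x, P x * f x := by
  by_cases h : Integrable f (pm P)
  · rw [integral_countable h]
    simp only [pm_real_singleton h0, smul_eq_mul]
  · rw [integral_undef h, tsum_eq_zero_of_not_summable]
    intro hs
    refine h ((pm_integrable_iff h0 f).mpr (hs.abs.congr fun x => ?_))
    rw [abs_mul, abs_of_nonneg (h0 x)]

lemma pm_memLp_three {P : Ω → ℝ} (h0 : ∀ x, 0 ≤ P x) (hs : HasSum P 1) (f : Ω → ℝ) (c : ℝ)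
    (hf : Summable fun x => P x * |f x - c| ^ 3) : MemLp f 3 (pm P) := by
  have := pm_prob h0 hs
  have h : MemLp (fun x => f x - c) 3 (pm P) := by
    rw [← integrable_norm_rpow_iff (Measurable.of_discrete).aestronglyMeasurable (by norm_num)
      (by norm_num), pm_integrable_iff h0]
    refine hf.congr fun x => ?_
    have : ((3 : ℝ≥0∞).toReal) = ((3 : ℕ) : ℝ) := by norm_num
    rw [this, Real.rpow_natCast, Real.norm_eq_abs, abs_pow, abs_abs]
  refine (h.add (memLp_const c)).congr_norm Measurable.of_discrete.aestronglyMeasurable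
    (Filter.Eventually.of_forall fun x => ?_)
  simp

/-- A nonnegative function summed over finitely many points of a discrete probability space is
at most its integral. -/
lemma sum_le_integral (ν : Measure Ω) (f : Ω → ℝ) (hf : Integrable f ν) (h0 : ∀ x, 0 ≤ f x)
    (K : Finset Ω) : ∑ x ∈ K, ν.real {x} * f x ≤ ∫ x, f x ∂ν := by
  have := setIntegral_finset K (hf.integrableOn (s := ↑K))
  simp only [smul_eq_mul] at this
  rw [← this]
  exact setIntegral_le_integral hf (Filter.Eventually.of_forall h0)

/-- `exp_trunc_le` as a statement about the Bochner integral. -/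
lemma trunc_integral_le {Ω : Type*} [MeasurableSpace Ω] (ν : Measure Ω) [IsProbabilityMeasure ν]
    (W : Ω → ℝ) (hW : Measurable W)
    (q : ℝ) (hq : ∀ a : ℝ, ν.real {ω | a ≤ W ω ∧ W ω ≤ a + 1} ≤ q) (τ : ℝ) :
    Integrable ({ω | W ω ≤ τ}.indicator fun ω => Real.exp (W ω - τ)) ν ∧
    ∫ ω, {ω | W ω ≤ τ}.indicator (fun ω => Real.exp (W ω - τ)) ω ∂ν ≤ 2 * q := by
  have hq0 : 0 ≤ q := measureReal_nonneg.trans (hq 0)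
  have mS : MeasurableSet {ω | W ω ≤ τ} := measurableSet_le hW measurable_const
  have me : Measurable fun ω => Real.exp (W ω - τ) := by fun_prop
  refine ⟨?_, ?_⟩
  · refine Integrable.of_bound (me.indicator mS).aestronglyMeasurable 1
      (Filter.Eventually.of_forall fun ω => ?_)
    rw [Real.norm_eq_abs, abs_of_nonneg (Set.indicator_nonneg (fun _ _ => (Real.exp_pos _).le) _)]
    by_cases h : W ω ≤ τ
    · rw [Set.indicator_of_mem (by exact h)]
      exact Real.exp_le_one_iff.mpr (by linarith)
    · rw [Set.indicator_of_notMem (by exact h)]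
      norm_num
  · rw [integral_indicator mS, integral_eq_lintegral_of_nonneg_ae
      (Filter.Eventually.of_forall fun _ => (Real.exp_pos _).le) me.aestronglyMeasurable]
    exact ENNReal.toReal_le_of_le_ofReal (by linarith) (exp_trunc_le ν W hW q hq τ)

/-- Change of measure: if `-log ν{x}` falls in each unit interval with probability at most `q`,
then at most `2 q e^τ` points have mass at least `e^{-τ}`. -/
lemma count_le (ν : Measure Ω) [IsProbabilityMeasure ν] (q : ℝ)
    (hq : ∀ a : ℝ, ν.real {x | a ≤ -Real.log (ν.real {x}) ∧ -Real.log (ν.real {x}) ≤ a + 1} ≤ q)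
    (τ : ℝ) (K : Finset Ω) (hK : ∀ x ∈ K, Real.exp (-τ) ≤ ν.real {x}) :
    (K.card : ℝ) ≤ 2 * q * Real.exp τ := by
  obtain ⟨h1, h2⟩ := trunc_integral_le ν (fun x => -Real.log (ν.real {x})) Measurable.of_discrete
    q hq τ
  have h3 := sum_le_integral ν _ h1 (fun x => Set.indicator_nonneg
    (fun _ _ => (Real.exp_pos _).le) _) K
  have h4 : ∀ x ∈ K, ν.real {x} * {x | -Real.log (ν.real {x}) ≤ τ}.indicator
      (fun x => Real.exp (-Real.log (ν.real {x}) - τ)) x = Real.exp (-τ) := by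
    intro x hx
    have hpos : 0 < ν.real {x} := (Real.exp_pos _).trans_le (hK x hx)
    have hle : -Real.log (ν.real {x}) ≤ τ := by
      have := (Real.le_log_iff_exp_le hpos).mpr (hK x hx)
      linarith
    rw [Set.indicator_of_mem (by exact hle), sub_eq_add_neg, Real.exp_add, Real.exp_neg (Real.log _),
      Real.exp_log hpos, ← mul_assoc, mul_inv_cancel₀ hpos.ne', one_mul]
  rw [Finset.sum_congr rfl h4, Finset.sum_const, nsmul_eq_mul] at h3
  have h5 := mul_le_mul_of_nonneg_right (h3.trans h2) (Real.exp_pos τ).le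
  rwa [mul_assoc, ← Real.exp_add, neg_add_cancel, Real.exp_zero, mul_one] at h5

omit [Countable Ω] in
lemma pi_real_singleton {n : ℕ} (Q : Fin n → Ω → ℝ) (h0 : ∀ j x, 0 ≤ Q j x)
    (hs : ∀ j, HasSum (Q j) 1) (x : Fin n → Ω) :
    (Measure.pi fun j => pm (Q j)).real {x} = ∏ j, Q j (x j) := by
  have : ∀ j, IsProbabilityMeasure (pm (Q j)) := fun j => pm_prob (h0 j) (hs j)
  rw [measureReal_def, Measure.pi_singleton, ENNReal.toReal_prod]
  exact Finset.prod_congr rfl fun j _ => pm_real_singleton (h0 j) _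

lemma integral_pi_coord {Ω : Type*} [MeasurableSpace Ω] {n : ℕ} (μ : Fin n → Measure Ω)
    [∀ j, IsProbabilityMeasure (μ j)] (f : Ω → ℝ) (hf : Measurable f) (j : Fin n) :
    ∫ x, f (x j) ∂Measure.pi μ = ∫ ω, f ω ∂μ j := by
  have mp := measurePreserving_eval μ j
  have := integral_map (μ := Measure.pi μ) (measurable_pi_apply j).aemeasurable
    (f := f) (hf.aestronglyMeasurable)
  rw [← this, mp.map_eq]

/-- Anticoncentration of an independent, not necessarily identically distributed, sum on a
product space. -/
lemma anticonc_pi {n : ℕ} (hn : 0 < n) (μ : Fin n → Measure Ω) [∀ j, IsProbabilityMeasure (μ j)]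
    (f : Fin n → Ω → ℝ) (m : Fin n → ℝ) (h3 : ∀ j, MemLp (f j) 3 (μ j))
    (hm : ∀ j, ∫ ω, f j ω ∂μ j = m j) (v T : ℝ) (hv : 0 < v)
    (hV : n * v ≤ ∑ j, ∫ ω, (f j ω - m j) ^ 2 ∂μ j)
    (hT : ∑ j, ∫ ω, |f j ω - m j| ^ 3 ∂μ j ≤ n * T) (a : ℝ) :
    (Measure.pi μ).real {x | a ≤ ∑ j, f j (x j) ∧ ∑ j, f j (x j) ≤ a + 1}
      ≤ (1 / √v + 2 * T / (v * √v)) / √n := by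
  have hfm : ∀ j, Measurable (f j) := fun j => Measurable.of_discrete
  have h := anticonc_sqrt (Measure.pi μ) (fun j x => f j (x j) - m j)
    (iIndepFun_pi (X := fun j ω => f j ω - m j) fun j => Measurable.of_discrete.aemeasurable)
    (fun j => Measurable.of_discrete)
    (fun j => ((h3 j).sub (memLp_const _)).comp_measurePreserving (measurePreserving_eval μ j))
    (fun j => by
      rw [integral_pi_coord μ (fun ω => f j ω - m j) Measurable.of_discrete j,
        integral_sub ((h3 j).integrable (by norm_num)) (integrable_const _), hm]
      simp) v T hv hn
    (hV.trans (le_of_eq (Finset.sum_congr rfl fun j _ =>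
      (integral_pi_coord μ (fun ω => (f j ω - m j) ^ 2) Measurable.of_discrete j).symm)))
    (le_trans (le_of_eq (Finset.sum_congr rfl fun j _ =>
      integral_pi_coord μ (fun ω => |f j ω - m j| ^ 3) Measurable.of_discrete j)) hT)
    (a - ∑ j, m j) (a + 1 - ∑ j, m j) (by linarith)
  have e : a + 1 - ∑ j, m j - (a - ∑ j, m j) = 1 := by ring
  rw [e] at h
  refine le_trans (le_of_eq ?_) h
  congr 1
  ext x
  simp only [Set.mem_ofPred_eq, Finset.sum_sub_distrib]
  constructor <;> rintro ⟨h1, h2⟩ <;> constructor <;> linarith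

/-- Chebyshev's inequality for an i.i.d. sum on a product space. -/
lemma chebyshev_pi {Ω : Type*} [MeasurableSpace Ω] {n : ℕ} (hn : 0 < n) (μ : Measure Ω)
    [IsProbabilityMeasure μ] (G : Ω → ℝ)
    (hG : MemLp G 2 μ) (hGm : Measurable G) (t : ℝ) (ht : 0 < t) :
    (Measure.pi fun _ : Fin n => μ).real {x | n * t ≤ |∑ j, G (x j) - n * ∫ ω, G ω ∂μ|}
      ≤ Var[G; μ] / t ^ 2 / n := by
  have hn' : (0 : ℝ) < n := by exact_mod_cast hn
  have hS : MemLp (fun x : Fin n → Ω => ∑ j, G (x j)) 2 (Measure.pi fun _ : Fin n => μ) :=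
    memLp_finsetSum _ fun j _ =>
      hG.comp_measurePreserving (measurePreserving_eval (fun _ : Fin n => μ) j)
  have hv := variance_sum_pi (μ := fun _ : Fin n => μ) (X := fun _ => G) fun _ => hG
  have e : (∑ i : Fin n, fun ω : Fin n → Ω => G (ω i)) = fun x => ∑ j, G (x j) := by
    ext x; simp
  rw [e] at hv
  have hI : ∫ x, ∑ j, G (x j) ∂(Measure.pi fun _ : Fin n => μ) = n * ∫ ω, G ω ∂μ := by
    have hint : ∀ j, Integrable (fun x : Fin n → Ω => G (x j)) (Measure.pi fun _ : Fin n => μ) :=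
      fun j => (hG.comp_measurePreserving
        (measurePreserving_eval (fun _ : Fin n => μ) j)).integrable (by norm_num)
    rw [integral_finsetSum _ fun j _ => hint j]
    simp [integral_pi_coord (fun _ : Fin n => μ) G hGm]
  have h := meas_ge_le_variance_div_sq hS (c := n * t) (by positivity)
  rw [hI, hv] at h
  have h0 : 0 ≤ Var[G; μ] := variance_nonneg _ _
  have := ENNReal.toReal_le_of_le_ofReal (by simp; positivity) h
  refine this.trans (le_of_eq ?_)
  simp only [Finset.sum_const, Finset.card_univ, Fintype.card_fin, nsmul_eq_mul]
  field_simp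

end discrete
end MASC

/-! ### Conditional information and the number of competitors -/

namespace MASC
open MeasureTheory ProbabilityTheory
open scoped ENNReal

/-- Number of sequences of product probability at least `e^{-τ}`, for a product of
not necessarily identical probability mass functions. -/
lemma count_pi {Ω : Type*} [Countable Ω] [MeasurableSpace Ω] [DiscreteMeasurableSpace Ω] {n : ℕ}
    (hn : 0 < n) (Q : Fin n → Ω → ℝ) (h0 : ∀ j x, 0 ≤ Q j x) (hs : ∀ j, HasSum (Q j) 1)
    (f : Fin n → Ω → ℝ) (hf : ∀ j x, 0 < Q j x → f j x = -Real.log (Q j x))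
    (m : Fin n → ℝ) (h3 : ∀ j, MemLp (f j) 3 (pm (Q j)))
    (hm : ∀ j, ∫ ω, f j ω ∂pm (Q j) = m j) (v T : ℝ) (hv : 0 < v)
    (hV : n * v ≤ ∑ j, ∫ ω, (f j ω - m j) ^ 2 ∂pm (Q j))
    (hT : ∑ j, ∫ ω, |f j ω - m j| ^ 3 ∂pm (Q j) ≤ n * T) (τ : ℝ)
    (K : Finset (Fin n → Ω)) (hK : ∀ x ∈ K, Real.exp (-τ) ≤ ∏ j, Q j (x j)) :
    (K.card : ℝ) ≤ 2 * ((1 / √v + 2 * T / (v * √v)) / √n) * Real.exp τ := by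
  have : ∀ j, IsProbabilityMeasure (pm (Q j)) := fun j => pm_prob (h0 j) (hs j)
  have hν := pi_real_singleton Q h0 hs
  refine count_le (Measure.pi fun j => pm (Q j)) _ (fun a => ?_) τ K fun x hx => ?_
  · refine le_trans ?_ (anticonc_pi hn (fun j => pm (Q j)) f m h3 hm v T hv hV hT a)
    refine ENNReal.toReal_mono (measure_ne_top _ _) (measure_mono_ae ?_)
    -- the identity `-log ν{x} = ∑ f_j(x_j)` holds off the null set where `ν{x} = 0`
    refine ae_iff_of_countable.mpr fun x hx hmem => ?_
    have hpos : 0 < (Measure.pi fun j => pm (Q j)).real {x} :=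
      ENNReal.toReal_pos hx (measure_ne_top _ _)
    have hne : ∀ j, Q j (x j) ≠ 0 := by
      rw [hν] at hpos
      intro j
      exact Finset.prod_ne_zero_iff.mp hpos.ne' j (Finset.mem_univ j)
    have e : -Real.log ((Measure.pi fun j => pm (Q j)).real {x}) = ∑ j, f j (x j) := by
      rw [hν, Real.log_prod fun j _ => hne j, ← Finset.sum_neg_distrib]
      exact Finset.sum_congr rfl fun j _ => (hf j _ ((h0 j _).lt_of_ne' (hne j))).symm
    have hmem' : a ≤ -Real.log ((Measure.pi fun j => pm (Q j)).real {x}) ∧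
      -Real.log ((Measure.pi fun j => pm (Q j)).real {x}) ≤ a + 1 := hmem
    rw [e] at hmem'
    exact hmem'
  · rw [hν]; exact hK x hx

/-- Data describing one conditional information: a source `P` on `Ω ≃ β × α`, the marginal `P2`
of the conditioning component in `β`, the conditional information `ι` with mean `H`, and its
conditional means, variances and third absolute central moments. -/
structure Side {Ω α β : Type*} (e : Ω ≃ β × α) (P : Ω → ℝ) (P2 : β → ℝ) (ι : Ω → ℝ) (H : ℝ)
    (m Vc Tc : β → ℝ) : Prop where
  P0 : ∀ x, 0 ≤ P x
  Ps : HasSum P 1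
  hP2 : ∀ b, P2 b = ∑' a, P (e.symm (b, a))
  hι : ∀ x, ι x = Real.log (P2 (e x).1 / P x)
  hH : H = ∑' x, P x * ι x
  hm : ∀ b, m b = ∑' a, P (e.symm (b, a)) / P2 b * ι (e.symm (b, a))
  hVc : ∀ b, Vc b = ∑' a, P (e.symm (b, a)) / P2 b * (ι (e.symm (b, a)) - m b) ^ 2
  hTc : ∀ b, Tc b = ∑' a, P (e.symm (b, a)) / P2 b * |ι (e.symm (b, a)) - m b| ^ 3
  Vpos : 0 < ∑' b, P2 b * Vc b
  hT : Summable fun x => P x * |ι x - H| ^ 3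
  hTsq : Summable fun b => P2 b * Tc b ^ 2

namespace Side
variable {Ω α β : Type*} {e : Ω ≃ β × α} {P : Ω → ℝ} {P2 : β → ℝ} {ι : Ω → ℝ} {H : ℝ} {m Vc Tc : β → ℝ}

/-- The conditional probability mass function given `b`. -/
noncomputable def Q (e : Ω ≃ β × α) (P : Ω → ℝ) (P2 : β → ℝ) (b : β) (a : α) : ℝ :=
  P (e.symm (b, a)) / P2 b

/-- The sequences whose conditional variances and third moments are of typical size. -/
def good (e : Ω ≃ β × α) (Vc Tc : β → ℝ) (v T : ℝ) (n : ℕ) : Set (Fin n → Ω) :=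
  {x | n * (v / 2) ≤ ∑ j, Vc (e (x j)).1 ∧ ∑ j, Tc (e (x j)).1 ≤ n * (T + 1)}

lemma summable_fiber {f : Ω → ℝ} (hf : Summable f) (b : β) :
    Summable fun a => f (e.symm (b, a)) :=
  ((e.symm.summable_iff (f := f)).mpr hf).prod_factor b

variable (S : Side e P P2 ι H m Vc Tc)
include S

lemma P2_nonneg (b : β) : 0 ≤ P2 b := by
  rw [S.hP2]; exact tsum_nonneg fun a => S.P0 _

lemma Q_nonneg (b : β) (a : α) : 0 ≤ Q e P P2 b a := div_nonneg (S.P0 _) (S.P2_nonneg b)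

lemma le_P2 (b : β) (a : α) : P (e.symm (b, a)) ≤ P2 b := by
  rw [S.hP2]
  exact (summable_fiber (e := e) S.Ps.summable b).le_tsum a fun _ _ => S.P0 _

lemma P2_pos {x : Ω} (hx : 0 < P x) : 0 < P2 (e x).1 := by
  refine hx.trans_le ?_
  have := S.le_P2 (e x).1 (e x).2
  simpa using this

lemma Q_hasSum {b : β} (hb : 0 < P2 b) : HasSum (Q e P P2 b) 1 := by
  have h := (summable_fiber (e := e) S.Ps.summable b).hasSum
  rw [← S.hP2] at h
  have := h.div_const (P2 b)
  rwa [div_self hb.ne'] at this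

/-- Summation over the source of a function of the conditioning component. -/
lemma marginal (f : β → ℝ) (hf0 : ∀ b, 0 ≤ f b) (hf : Summable fun b => P2 b * f b) :
    HasSum (fun x => P x * f (e x).1) (∑' b, P2 b * f b) := by
  have hfib : ∀ b, HasSum (fun a => P (e.symm (b, a)) * f b) (P2 b * f b) := fun b => by
    have h := (summable_fiber (e := e) S.Ps.summable b).hasSum
    rw [← S.hP2] at h
    exact h.mul_right _
  have hs : Summable fun q : β × α => P (e.symm q) * f q.1 := by
    rw [summable_prod_of_nonneg fun q => mul_nonneg (S.P0 _) (hf0 _)]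
    refine ⟨fun b => (hfib b).summable, ?_⟩
    simpa only [(hfib _).tsum_eq] using hf
  have h1 : HasSum (fun q : β × α => P (e.symm q) * f q.1) (∑' b, P2 b * f b) := by
    have := hs.hasSum
    rw [hs.tsum_prod' fun b => (hfib b).summable] at this
    simpa only [(hfib _).tsum_eq] using this
  rw [← e.hasSum_iff] at h1
  refine h1.congr_fun ?_
  intro x; simp

/-- The conditional information is not almost surely constant. -/
lemma nondeg (c : ℝ) : ∃ x, 0 < P x ∧ ι x ≠ c := by
  by_contra! hcon
  have hm : ∀ b, 0 < P2 b → m b = c := by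
    intro b hb
    have h : ∀ a, P (e.symm (b, a)) / P2 b * ι (e.symm (b, a)) = Q e P P2 b a * c := by
      intro a
      rcases (S.P0 (e.symm (b, a))).eq_or_lt with h | h
      · simp [Q, ← h]
      · rw [hcon _ h]; rfl
    rw [S.hm]
    simp only [h]
    rw [((S.Q_hasSum hb).mul_right c).tsum_eq, one_mul]
  have hz : ∀ b, P2 b * Vc b = 0 := by
    intro b
    rcases (S.P2_nonneg b).eq_or_lt with hb | hb
    · rw [← hb, zero_mul]
    have h : ∀ a, P (e.symm (b, a)) / P2 b * (ι (e.symm (b, a)) - m b) ^ 2 = 0 := by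
      intro a
      rcases (S.P0 (e.symm (b, a))).eq_or_lt with h | h
      · simp [← h]
      · rw [hcon _ h, hm b hb]; simp
    rw [S.hVc]
    simp [h]
  have := S.Vpos
  simp [hz] at this

lemma ι_nonneg {x : Ω} (hx : 0 < P x) : 0 ≤ ι x := by
  rw [S.hι]
  refine Real.log_nonneg ?_
  rw [one_le_div hx]
  have := S.le_P2 (e x).1 (e x).2
  simpa using this

section
variable [Countable Ω] [MeasurableSpace Ω] [DiscreteMeasurableSpace Ω]

lemma memLp : MemLp ι 3 (pm P) := pm_memLp_three S.P0 S.Ps ι H S.hT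

lemma H_pos : 0 < H := by
  have := pm_prob S.P0 S.Ps
  have hsum : Summable fun x => P x * ι x := by
    have := (pm_integrable_iff S.P0 ι).mp (S.memLp.integrable (by norm_num))
    refine Summable.of_norm (this.congr fun x => ?_)
    rw [Real.norm_eq_abs, abs_mul, abs_of_nonneg (S.P0 x)]
  have h0 : ∀ x, 0 ≤ P x * ι x := by
    intro x
    rcases (S.P0 x).eq_or_lt with h | h
    · simp [← h]
    · exact mul_nonneg h.le (S.ι_nonneg h)
  obtain ⟨x, hx, hx0⟩ := S.nondeg 0
  rw [S.hH]
  exact hsum.tsum_pos h0 x (mul_pos hx ((S.ι_nonneg hx).lt_of_ne' hx0))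

lemma variance_pos : 0 < ∑' x, P x * (ι x - H) ^ 2 := by
  have := pm_prob S.P0 S.Ps
  have hs : Summable fun x => P x * (ι x - H) ^ 2 := by
    have h : MemLp (fun x => ι x - H) 2 (pm P) :=
      (S.memLp.sub (memLp_const H)).mono_exponent (by norm_num)
    have := (pm_integrable_iff S.P0 _).mp h.integrable_sq
    simpa only [abs_pow, sq_abs] using this
  obtain ⟨x, hx, hx0⟩ := S.nondeg H
  have : ι x - H ≠ 0 := sub_ne_zero.mpr hx0
  exact hs.tsum_pos (fun x => mul_nonneg (S.P0 x) (sq_nonneg _)) x (by positivity)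

end

section
variable [Countable α] [MeasurableSpace α] [DiscreteMeasurableSpace α]

lemma memLp_fiber {b : β} (hb : 0 < P2 b) :
    MemLp (fun a => ι (e.symm (b, a))) 3 (pm (Q e P P2 b)) := by
  refine pm_memLp_three (S.Q_nonneg b) (S.Q_hasSum hb) _ H ?_
  refine ((summable_fiber (e := e) S.hT b).div_const (P2 b)).congr fun a => ?_
  unfold Q; ring

lemma m_eq (b : β) : ∫ a, ι (e.symm (b, a)) ∂pm (Q e P P2 b) = m b := by
  rw [pm_integral (S.Q_nonneg b), S.hm]; rfl

lemma Vc_eq (b : β) : ∫ a, (ι (e.symm (b, a)) - m b) ^ 2 ∂pm (Q e P P2 b) = Vc b := by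
  rw [pm_integral (S.Q_nonneg b), S.hVc]; rfl

lemma Tc_eq (b : β) : ∫ a, |ι (e.symm (b, a)) - m b| ^ 3 ∂pm (Q e P P2 b) = Tc b := by
  rw [pm_integral (S.Q_nonneg b), S.hTc]; rfl

lemma Vc_nonneg (b : β) : 0 ≤ Vc b := by
  rw [← S.Vc_eq]; exact integral_nonneg fun _ => sq_nonneg _

lemma Tc_nonneg (b : β) : 0 ≤ Tc b := by
  rw [← S.Tc_eq]; exact integral_nonneg fun _ => by positivity

/-- From `t ^ 2 ≤ 1 + t ^ 3`; it makes the conditional variance square integrable. -/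
lemma Vc_le (b : β) : Vc b ≤ 1 + Tc b := by
  rcases (S.P2_nonneg b).eq_or_lt with hb | hb
  · have := S.Tc_nonneg b
    have h : Vc b = 0 := by rw [S.hVc]; simp [← hb]
    linarith
  have := pm_prob (S.Q_nonneg b) (S.Q_hasSum hb)
  have h3 : MemLp (fun a => ι (e.symm (b, a)) - m b) 3 (pm (Q e P P2 b)) :=
    (S.memLp_fiber hb).sub (memLp_const _)
  have i3 : Integrable (fun a => |ι (e.symm (b, a)) - m b| ^ 3) (pm (Q e P P2 b)) :=
    h3.integrable_norm_pow (p := 3) (by norm_num)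
  have i2 : Integrable (fun a => (ι (e.symm (b, a)) - m b) ^ 2) (pm (Q e P P2 b)) :=
    (h3.mono_exponent (q := 3) (p := 2) (by norm_num)).integrable_sq
  have := integral_mono i2 ((integrable_const 1).add i3) (fun a => by
    change (ι (e.symm (b, a)) - m b) ^ 2 ≤ 1 + |ι (e.symm (b, a)) - m b| ^ 3
    rw [← sq_abs]
    set t := |ι (e.symm (b, a)) - m b|
    have ht : 0 ≤ t := abs_nonneg _
    nlinarith [mul_nonneg ht (sq_nonneg (t - 1)), sq_nonneg (t - 1)])
  rw [integral_add' (integrable_const 1) i3, S.Vc_eq, S.Tc_eq] at this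
  simpa using this

/-- Number of competitors with the same conditioning sequence, for a typical sequence. -/
lemma count {v T : ℝ} (hv : 0 < v) {n : ℕ} (hn : 0 < n) (x : Fin n → Ω)
    (hx : ∀ j, 0 < P (x j)) (hg : x ∈ good e Vc Tc v T n) (K : Finset (Fin n → α))
    (hK : ∀ x' ∈ K, ∏ j, P (x j) ≤ ∏ j, P (e.symm ((e (x j)).1, x' j))) :
    (K.card : ℝ) ≤ 2 * ((1 / √(v / 2) + 2 * (T + 1) / (v / 2 * √(v / 2))) / √n)
      * Real.exp (∑ j, ι (x j)) := by
  have hb : ∀ j, 0 < P2 (e (x j)).1 := fun j => S.P2_pos (hx j)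
  refine count_pi hn (fun j => Q e P P2 (e (x j)).1) (fun j => S.Q_nonneg _)
    (fun j => S.Q_hasSum (hb j)) (fun j a => ι (e.symm ((e (x j)).1, a))) ?_
    (fun j => m (e (x j)).1) (fun j => S.memLp_fiber (hb j)) (fun j => S.m_eq _)
    (v / 2) (T + 1) (by positivity) ?_ ?_ _ K ?_
  · intro j a ha
    rw [S.hι, Equiv.apply_symm_apply, ← Real.log_inv, Q, inv_div]
  · simp only [S.Vc_eq]; exact hg.1
  · simp only [S.Tc_eq]; exact hg.2
  · intro x' hx'
    have e1 : Real.exp (-∑ j, ι (x j)) = (∏ j, P (x j)) / ∏ j, P2 (e (x j)).1 := by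
      rw [← Finset.sum_neg_distrib, Real.exp_sum, ← Finset.prod_div_distrib]
      refine Finset.prod_congr rfl fun j _ => ?_
      rw [S.hι, ← Real.log_inv, inv_div, Real.exp_log (div_pos (hx j) (hb j))]
    rw [e1]
    simp only [Q]
    rw [Finset.prod_div_distrib]
    exact div_le_div_of_nonneg_right (hK x' hx') (Finset.prod_nonneg fun j _ => (hb j).le)

variable [Countable Ω] [MeasurableSpace Ω] [DiscreteMeasurableSpace Ω]

/-- By Chebyshev's inequality, atypical sequences have probability `O(1/n)`. -/
lemma bad_prob : ∃ v T K : ℝ, 0 < v ∧ 0 ≤ T ∧ 0 ≤ K ∧ ∀ n : ℕ, 0 < n →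
    (Measure.pi fun _ : Fin n => pm P).real (good e Vc Tc v T n)ᶜ ≤ K / n := by
  have := pm_prob S.P0 S.Ps
  have hT2 : MemLp (fun x => Tc (e x).1) 2 (pm P) := by
    rw [memLp_two_iff_integrable_sq Measurable.of_discrete.aestronglyMeasurable,
      pm_integrable_iff S.P0]
    simp only [abs_pow, sq_abs]
    exact (S.marginal (fun b => Tc b ^ 2) (fun b => sq_nonneg _) S.hTsq).summable
  have hV2 : MemLp (fun x => Vc (e x).1) 2 (pm P) := by
    refine ((memLp_const (1 : ℝ)).add hT2).mono' Measurable.of_discrete.aestronglyMeasurable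
      (Filter.Eventually.of_forall fun x => ?_)
    rw [Real.norm_eq_abs, abs_of_nonneg (S.Vc_nonneg _)]
    exact S.Vc_le _
  set v : ℝ := ∑' b, P2 b * Vc b with hv
  have hVs : Summable fun b => P2 b * Vc b := by
    by_contra h
    have := S.Vpos
    rw [tsum_eq_zero_of_not_summable h] at this
    exact lt_irrefl _ this
  have hIV : ∫ x, Vc (e x).1 ∂pm P = v := by
    rw [pm_integral S.P0, (S.marginal Vc S.Vc_nonneg hVs).tsum_eq]
  set T : ℝ := ∫ x, Tc (e x).1 ∂pm P with hT
  have hT0 : 0 ≤ T := integral_nonneg fun x => S.Tc_nonneg _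
  have hv0 : 0 < v := S.Vpos
  refine ⟨v, T, Var[fun x => Vc (e x).1; pm P] / (v / 2) ^ 2
    + Var[fun x => Tc (e x).1; pm P] / 1 ^ 2, hv0, hT0,
    add_nonneg (div_nonneg (variance_nonneg _ _) (by positivity))
      (div_nonneg (variance_nonneg _ _) (by positivity)), fun n hn => ?_⟩
  have c1 := chebyshev_pi hn (pm P) _ hV2 Measurable.of_discrete (v / 2) (by positivity)
  have c2 := chebyshev_pi hn (pm P) _ hT2 Measurable.of_discrete 1 one_pos
  rw [add_div]
  refine le_trans (measureReal_mono ?_) ((measureReal_union_le _ _).trans (add_le_add c1 c2))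
  intro x hx
  by_contra hcon
  simp only [Set.mem_union, Set.mem_ofPred_eq, not_or, not_le, hIV, ← hT, abs_lt] at hcon
  refine hx ⟨?_, ?_⟩
  · linarith [hcon.1.1]
  · linarith [hcon.2.2]

end
end Side
end MASC

/-! ### One-shot bound for i.i.d. sources -/

namespace MASC
open MeasureTheory ProbabilityTheory
open scoped ENNReal

/-- Random coding for an i.i.d. source. Outside an exceptional set `Bad`, the number of competitors
of each of the three kinds is at most `k / √n` times the exponential of the corresponding
information sum `W i`. The error of the best code is then controlled by the probability that some
`W i` exceeds its threshold `τ i`: the factor `1 / √n` in the counts is absorbed in the thresholds,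
and the remaining truncated exponential moments are small because each `W i` puts mass at most `q`
on intervals of length one. -/
lemma one_shot {α β : Type*} [Countable α] [Countable β] [DecidableEq α] [DecidableEq β]
    [MeasurableSpace α]
    [MeasurableSpace β] [DiscreteMeasurableSpace α] [DiscreteMeasurableSpace β]
    (P : α × β → ℝ) (h0 : ∀ x, 0 ≤ P x) (hs : HasSum P 1) {n : ℕ} (hn : 0 < n)
    (M₁ M₂ : ℕ) (hM₁ : 0 < M₁) (hM₂ : 0 < M₂)
    (W : Fin 3 → (Fin n → α × β) → ℝ) (Bad : Set (Fin n → α × β)) (k q : ℝ) (hk : 0 ≤ k)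
    (hN0 : ∀ x : Fin n → α × β, (∀ j, 0 < P (x j)) → x ∉ Bad → ∀ K : Finset (Fin n → α),
      (∀ x' ∈ K, ∏ j, P (x j) ≤ ∏ j, P (x' j, (x j).2)) →
        (K.card : ℝ) ≤ k / √n * Real.exp (W 0 x))
    (hN1 : ∀ x : Fin n → α × β, (∀ j, 0 < P (x j)) → x ∉ Bad → ∀ K : Finset (Fin n → β),
      (∀ x' ∈ K, ∏ j, P (x j) ≤ ∏ j, P ((x j).1, x' j)) →
        (K.card : ℝ) ≤ k / √n * Real.exp (W 1 x))
    (hN2 : ∀ x : Fin n → α × β, (∀ j, 0 < P (x j)) → x ∉ Bad →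
      ∀ K : Finset (Fin n → α × β),
      (∀ x' ∈ K, ∏ j, P (x j) ≤ ∏ j, P (x' j)) →
        (K.card : ℝ) ≤ k / √n * Real.exp (W 2 x))
    (hq : ∀ i a, (Measure.pi fun _ : Fin n => pm P).real {x | a ≤ W i x ∧ W i x ≤ a + 1} ≤ q)
    (τ : Fin 3 → ℝ) (hτ0 : Real.exp (τ 0) = √n * M₁) (hτ1 : Real.exp (τ 1) = √n * M₂)
    (hτ2 : Real.exp (τ 2) = √n * (M₁ * M₂)) (δ : ℝ) (hδ : 0 < δ) (hδ1 : δ < 1) :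
    ∃ f₁ : (Fin n → α) → Fin M₁, ∃ f₂ : (Fin n → β) → Fin M₂,
      ∃ g : Fin M₁ × Fin M₂ → (Fin n → α) × (Fin n → β),
        (∑' xy : (Fin n → α) × (Fin n → β),
          if g (f₁ xy.1, f₂ xy.2) = xy then (0 : ℝ) else ∏ i, P (xy.1 i, xy.2 i)) ≤
        δ + (Measure.pi fun _ : Fin n => pm P).real Bad
          + (1 - (Measure.pi fun _ : Fin n => pm P).real {x | ∀ i, W i x ≤ τ i})
          + k * (6 * q) := by
  classical
  have := pm_prob h0 hs
  set ν := Measure.pi fun _ : Fin n => pm P with hν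
  have hνs : ∀ x, ν.real {x} = ∏ j, P (x j) :=
    pi_real_singleton (fun _ => P) (fun _ => h0) (fun _ => hs)
  let φ : (Fin n → α × β) ≃ (Fin n → α) × (Fin n → β) := Equiv.arrowProdEquivProdArrow _ _ _
  have hφ : ∀ xy : (Fin n → α) × (Fin n → β),
      ν.real {φ.symm xy} = ∏ i, P (xy.1 i, xy.2 i) := fun xy => hνs _
  have hsum : HasSum (fun xy : (Fin n → α) × (Fin n → β) => ∏ i, P (xy.1 i, xy.2 i)) 1 := by
    have h1 : HasSum (fun x => ν.real {x}) 1 := by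
      have hI : Integrable (fun _ : Fin n → α × β => (1 : ℝ)) ν := integrable_const 1
      have h2 := integral_countable hI
      simp only [integral_const, probReal_univ, smul_eq_mul, mul_one] at h2
      have h3 : Summable fun x => ν.real {x} := by
        by_contra h
        rw [tsum_eq_zero_of_not_summable h] at h2
        exact one_ne_zero h2
      rw [h2]
      exact h3.hasSum
    rw [← φ.symm.hasSum_iff] at h1
    exact h1.congr_fun fun xy => (hφ xy).symm
  obtain ⟨K₁, K₂, f₁, f₂, g, hg⟩ := countable_code _
    (fun xy : (Fin n → α) × (Fin n → β) => Finset.prod_nonneg fun i _ => h0 _) hsum M₁ M₂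
    hM₁ hM₂ δ hδ hδ1
  refine ⟨f₁, f₂, g, ?_⟩
  let E : Set (Fin n → α × β) := {x | ∀ i, W i x ≤ τ i}
  let t : Fin 3 → (Fin n → α × β) → ℝ := fun i =>
    {x | W i x ≤ τ i}.indicator fun x => Real.exp (W i x - τ i)
  have ht0 : ∀ i x, 0 ≤ t i x := fun i x => Set.indicator_nonneg (fun _ _ => (Real.exp_pos _).le) _
  let G : (Fin n → α × β) → ℝ := fun x =>
    Bad.indicator 1 x + Eᶜ.indicator 1 x + k * ∑ i, t i x
  have hti := fun i => trunc_integral_le ν (W i) Measurable.of_discrete q (hq i) (τ i)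
  have hG0 : ∀ x, 0 ≤ G x := fun x => by
    have := Finset.sum_nonneg fun i (_ : i ∈ Finset.univ) => ht0 i x
    have h1 : (0:ℝ) ≤ Bad.indicator 1 x := Set.indicator_nonneg (by simp) _
    have h2 : (0:ℝ) ≤ Eᶜ.indicator 1 x := Set.indicator_nonneg (by simp) _
    have := mul_nonneg hk this
    simp only [G]; linarith
  have mB : MeasurableSet Bad := .of_discrete
  have mE : MeasurableSet E := .of_discrete
  have iB : Integrable (Bad.indicator (1 : (Fin n → α × β) → ℝ)) ν :=
    (integrable_const (1:ℝ)).indicator mB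
  have iE : Integrable (Eᶜ.indicator (1 : (Fin n → α × β) → ℝ)) ν :=
    (integrable_const (1:ℝ)).indicator mE.compl
  have iT : Integrable (fun x => k * ∑ i, t i x) ν :=
    (integrable_finsetSum _ fun i _ => (hti i).1).const_mul k
  have hGi : Integrable G ν := (iB.add iE).add iT
  have hGv : ∫ x, G x ∂ν ≤ ν.real Bad + (1 - ν.real E) + k * (6 * q) := by
    have e1 : ∫ x, G x ∂ν = ν.real Bad + ν.real Eᶜ + k * ∑ i, ∫ x, t i x ∂ν := by
      have a1 : ∫ x, G x ∂ν = ∫ x, (Bad.indicator (1 : (Fin n → α × β) → ℝ) x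
          + Eᶜ.indicator (1 : (Fin n → α × β) → ℝ) x) ∂ν + ∫ x, k * ∑ i, t i x ∂ν :=
        integral_add (iB.add iE) iT
      rw [a1, integral_add iB iE, integral_indicator_one mB, integral_indicator_one mE.compl,
        integral_const_mul, integral_finsetSum _ fun i _ => (hti i).1]
    rw [e1, probReal_compl_eq_one_sub mE]
    have : ∑ i, ∫ x, t i x ∂ν ≤ 6 * q := by
      rw [Fin.sum_univ_three]
      have a0 := (hti 0).2
      have a1 := (hti 1).2
      have a2 := (hti 2).2
      simp only [t]
      linarith
    have := mul_le_mul_of_nonneg_left this hk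
    linarith
  have hsn : (0:ℝ) < √n := by positivity
  have hM₁' : (0:ℝ) < M₁ := by positivity
  have hM₂' : (0:ℝ) < M₂ := by positivity
  have key : ∀ xy : (Fin n → α) × (Fin n → β),
      (∏ i, P (xy.1 i, xy.2 i)) * min 1 (
        ((K₁.filter fun x' => ∏ i, P (xy.1 i, xy.2 i) ≤ ∏ i, P (x' i, xy.2 i)).card : ℝ) / M₁
        + ((K₂.filter fun y' => ∏ i, P (xy.1 i, xy.2 i) ≤ ∏ i, P (xy.1 i, y' i)).card : ℝ) / M₂
        + (((K₁ ×ˢ K₂).filter fun q' =>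
            ∏ i, P (xy.1 i, xy.2 i) ≤ ∏ i, P (q'.1 i, q'.2 i)).card : ℝ) / (M₁ * M₂))
      ≤ ν.real {φ.symm xy} * G (φ.symm xy) := by
    intro xy
    rw [hφ]
    have hp0 : 0 ≤ ∏ i, P (xy.1 i, xy.2 i) := Finset.prod_nonneg fun i _ => h0 _
    by_cases hp : ∏ i, P (xy.1 i, xy.2 i) = 0
    · simp [hp]
    have hpos : ∀ j, 0 < P (φ.symm xy j) := fun j =>
      (h0 _).lt_of_ne' (Finset.prod_ne_zero_iff.mp hp j (Finset.mem_univ j))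
    refine mul_le_mul_of_nonneg_left ?_ hp0
    set x := φ.symm xy with hx
    have hsum0 : 0 ≤ ∑ i, t i x := Finset.sum_nonneg fun i _ => ht0 i x
    have b0 : (0:ℝ) ≤ Bad.indicator 1 x := Set.indicator_nonneg (by simp) _
    have b1 : (0:ℝ) ≤ Eᶜ.indicator 1 x := Set.indicator_nonneg (by simp) _
    by_cases hB : x ∈ Bad
    · refine (min_le_left _ _).trans ?_
      have : Bad.indicator (1 : (Fin n → α × β) → ℝ) x = 1 := by simp [hB]
      have := mul_nonneg hk hsum0
      simp only [G]; linarith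
    by_cases hE : x ∈ E
    swap
    · refine (min_le_left _ _).trans ?_
      have : Eᶜ.indicator (1 : (Fin n → α × β) → ℝ) x = 1 := by simp [hE]
      have := mul_nonneg hk hsum0
      simp only [G]; linarith
    refine (min_le_right _ _).trans ?_
    have htv : ∀ i, t i x = Real.exp (W i x) / Real.exp (τ i) := fun i => by
      have hi : x ∈ {x | W i x ≤ τ i} := hE i
      simp only [t]
      rw [Set.indicator_of_mem hi, Real.exp_sub]
    have c0 := hN0 x hpos hB (K₁.filter fun x' => ∏ i, P (xy.1 i, xy.2 i) ≤ ∏ i, P (x' i, xy.2 i))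
      fun x' hx' => (Finset.mem_filter.mp hx').2
    have c1 := hN1 x hpos hB (K₂.filter fun y' => ∏ i, P (xy.1 i, xy.2 i) ≤ ∏ i, P (xy.1 i, y' i))
      fun x' hx' => (Finset.mem_filter.mp hx').2
    have c2 := hN2 x hpos hB (((K₁ ×ˢ K₂).filter fun q' =>
        ∏ i, P (xy.1 i, xy.2 i) ≤ ∏ i, P (q'.1 i, q'.2 i)).map φ.symm.toEmbedding)
      fun x' hx' => by
        obtain ⟨q', hq', rfl⟩ := Finset.mem_map.mp hx'
        exact (Finset.mem_filter.mp hq').2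
    rw [Finset.card_map] at c2
    have d0 := div_le_div_of_nonneg_right c0 hM₁'.le
    have d1 := div_le_div_of_nonneg_right c1 hM₂'.le
    have d2 := div_le_div_of_nonneg_right c2 (mul_pos hM₁' hM₂').le
    have e0 : k / √n * Real.exp (W 0 x) / M₁ = k * t 0 x := by
      rw [htv, hτ0]; field_simp
    have e1 : k / √n * Real.exp (W 1 x) / M₂ = k * t 1 x := by
      rw [htv, hτ1]; field_simp
    have e2 : k / √n * Real.exp (W 2 x) / (M₁ * M₂) = k * t 2 x := by
      rw [htv, hτ2]; field_simp
    rw [e0] at d0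
    rw [e1] at d1
    rw [e2] at d2
    simp only [G, Fin.sum_univ_three]
    linarith
  have hfin : ∑ xy ∈ K₁ ×ˢ K₂, ν.real {φ.symm xy} * G (φ.symm xy) ≤ ∫ x, G x ∂ν := by
    have := sum_le_integral ν G hGi hG0 ((K₁ ×ˢ K₂).map φ.symm.toEmbedding)
    rwa [Finset.sum_map] at this
  have hall := (Finset.sum_le_sum fun xy (_ : xy ∈ K₁ ×ˢ K₂) => key xy).trans (hfin.trans hGv)
  refine (Eq.trans_le ?_ (hg.trans (add_le_add (le_refl δ) hall))).trans ?_
  · refine tsum_congr fun xy => ?_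
    congr
  simp only [E]
  linarith

end MASC

/-! ### Choice of the code sizes -/

namespace MASC
open MeasureTheory ProbabilityTheory
open scoped ENNReal

lemma gcdf_mono {d : ℕ} (A : Matrix (Fin d) (Fin d) ℝ) {z z' : Fin d → ℝ} (h : ∀ i, z i ≤ z' i) :
    gcdf A z ≤ gcdf A z' :=
  measureReal_mono fun _ hw i => (hw i).trans (h i)

/-- If the Gaussian distribution function at `z` exceeds `1 - ε`, the coordinates of `z` are
bounded below. -/
lemma exists_lower_bound {d : ℕ} (A : Matrix (Fin d) (Fin d) ℝ) (ε : ℝ) (h1 : ε < 1) :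
    ∃ b : ℝ, ∀ z, 1 - ε ≤ gcdf A z → ∀ i, -b ≤ z i := by
  obtain ⟨B, hB, hBt⟩ := exists_tail d ((1 - ε) / 2) (by linarith)
  set L : ℝ := 1 + ∑ i, nrm (A i) with hL
  have hL0 : 0 < L := by
    have : 0 ≤ ∑ i, nrm (A i) := Finset.sum_nonneg fun i _ => nrm_nonneg _
    linarith
  refine ⟨L * B, fun z hz i => ?_⟩
  by_contra! hlt
  have hsub : gcdf A z ≤ (stdG d).real {w | B ≤ nrm w} := by
    refine measureReal_mono fun w hw => ?_
    have h2 : A.mulVec w i ≤ z i := hw i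
    have h3 : |A.mulVec w i| ≤ L * nrm w := by
      refine (abs_dot_le (A i) w).trans (mul_le_mul_of_nonneg_right ?_ (nrm_nonneg w))
      have : nrm (A i) ≤ ∑ i, nrm (A i) :=
        Finset.single_le_sum (f := fun i => nrm (A i)) (fun i _ => nrm_nonneg _) (Finset.mem_univ i)
      linarith
    have h4 := neg_le_of_abs_le h3
    have : L * B ≤ L * nrm w := by linarith
    exact le_of_mul_le_mul_left this hL0
  linarith

lemma floor_exp {t : ℝ} (ht : 0 ≤ t) : 0 < ⌊Real.exp t⌋₊ ∧ Real.log ⌊Real.exp t⌋₊ ≤ t ∧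
    t - Real.log 2 ≤ Real.log ⌊Real.exp t⌋₊ := by
  have h1 : 1 ≤ Real.exp t := Real.one_le_exp ht
  have hM : 1 ≤ ⌊Real.exp t⌋₊ := (Nat.one_le_floor_iff _).mpr h1
  have hM' : (1 : ℝ) ≤ ⌊Real.exp t⌋₊ := by exact_mod_cast hM
  refine ⟨hM, ?_, ?_⟩
  · rw [Real.log_le_iff_le_exp (by linarith)]
    exact Nat.floor_le (by linarith)
  · rw [sub_le_iff_le_add, ← Real.log_mul (by linarith) (by norm_num),
      Real.le_log_iff_exp_le (by linarith)]
    have := Nat.lt_floor_add_one (Real.exp t)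
    linarith

/-- Choice of the code sizes: a point of the rate region yields sizes whose thresholds
`log √n + log M` make the Gaussian approximation of the error at most `ε`, an error `K/√n`
included. -/
lemma choose_sizes (A : Matrix (Fin 3) (Fin 3) ℝ) (ε : ℝ) (h0 : 0 < ε) (h1 : ε < 1)
    (H : Fin 3 → ℝ) (hH0 : 0 < H 0) (hH1 : 0 < H 1) (K : ℝ) (hK : 0 ≤ K) :
    ∃ C : ℝ, 0 ≤ C ∧ ∃ n₀ : ℕ, ∀ n : ℕ, n₀ ≤ n → 2 ≤ n ∧ ∀ R₁ R₂ : ℝ,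
      1 - ε ≤ gcdf A (fun i => √(n : ℝ) * (![R₁, R₂, R₁ + R₂] i - H i
          + Real.log (n : ℝ) / (2 * (n : ℝ)) - C / (n : ℝ))) →
      ∃ M₁ M₂ : ℕ, 0 < M₁ ∧ 0 < M₂ ∧
        Real.log (M₁ : ℝ) ≤ (n : ℝ) * R₁ ∧ Real.log (M₂ : ℝ) ≤ (n : ℝ) * R₂ ∧
        K / √n + (1 - gcdf A (fun i => (Real.log √n
          + ![Real.log M₁, Real.log M₂, Real.log M₁ + Real.log M₂] i - n * H i) / √n)) ≤ ε := by
  obtain ⟨c, hc, hgrow⟩ := growth A ε h0 h1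
  obtain ⟨b, hb⟩ := exists_lower_bound A ε h1
  have hlog2 : 0 < Real.log 2 := Real.log_pos (by norm_num)
  -- `K / c` makes the Gaussian probability grow by `K / √n`; `2 log 2` pays for rounding the two
  -- code sizes down to integers
  set Δ : ℝ := K / c + 1 with hΔ
  have hΔ0 : 0 < Δ := by positivity
  set C : ℝ := Δ + 2 * Real.log 2 with hC
  have hC0 : 0 < C := by positivity
  have tsqrt : Filter.Tendsto (fun n : ℕ => √(n : ℝ)) Filter.atTop Filter.atTop :=
    Real.tendsto_sqrt_atTop.comp tendsto_natCast_atTop_atTop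
  have tlog : Filter.Tendsto (fun n : ℕ => Real.log n / (2 * n) + b / √n) Filter.atTop (nhds 0) := by
    have t1 : Filter.Tendsto (fun n : ℕ => Real.log n / n) Filter.atTop (nhds 0) := by
      have := (Real.isLittleO_log_id_atTop.tendsto_div_nhds_zero).comp
        (tendsto_natCast_atTop_atTop (R := ℝ))
      exact this
    have t2 := (t1.div_const 2).add (tsqrt.const_div_atTop b)
    simp only [zero_div, add_zero] at t2
    refine t2.congr fun n => ?_
    rw [div_div, mul_comm (n : ℝ)]
  have ev := (((tlog.eventually_lt_const hH0).and (tlog.eventually_lt_const hH1)).and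
    ((tsqrt.eventually_ge_atTop Δ).and (tsqrt.eventually_ge_atTop (2 * K / ε)))).and
      (Filter.eventually_ge_atTop 2)
  obtain ⟨n₀, hn₀⟩ := Filter.eventually_atTop.mp ev
  refine ⟨C, hC0.le, n₀, fun n hn => ?_⟩
  obtain ⟨⟨⟨l0, l1⟩, s1, s2⟩, hn2⟩ := hn₀ n hn
  refine ⟨hn2, fun R₁ R₂ hR => ?_⟩
  have hn' : (0 : ℝ) < n := by positivity
  have hs : 0 < √(n : ℝ) := by positivity
  have hss : √(n : ℝ) * √(n : ℝ) = n := Real.mul_self_sqrt hn'.le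
  set z : Fin 3 → ℝ := fun i => √(n : ℝ) * (![R₁, R₂, R₁ + R₂] i - H i
          + Real.log (n : ℝ) / (2 * (n : ℝ)) - C / (n : ℝ)) with hz
  have hzb := hb z hR
  have hRpos : ∀ i, Real.log n / (2 * n) + b / √n < H i → 0 ≤ ![R₁, R₂, R₁ + R₂] i := by
    intro i hi
    have h2 := hzb i
    simp only [hz] at h2
    have h3 : -(b / √n) ≤ ![R₁, R₂, R₁ + R₂] i - H i
          + Real.log (n : ℝ) / (2 * (n : ℝ)) - C / (n : ℝ) := by
      rw [← neg_div, div_le_iff₀ hs]; linarith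
    have : 0 < C / n := by positivity
    linarith
  have hR₁ : 0 ≤ R₁ := hRpos 0 l0
  have hR₂ : 0 ≤ R₂ := hRpos 1 l1
  obtain ⟨p1, u1, v1⟩ := floor_exp (t := n * R₁) (by positivity)
  obtain ⟨p2, u2, v2⟩ := floor_exp (t := n * R₂) (by positivity)
  refine ⟨_, _, p1, p2, u1, u2, ?_⟩
  set M₁ := ⌊Real.exp (n * R₁)⌋₊
  set M₂ := ⌊Real.exp (n * R₂)⌋₊
  have hδ1 : Δ / √n ≤ 1 := (div_le_one hs).mpr s1
  have hg := hgrow z (Δ / √n) (by positivity) hδ1 hR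
  have hmono : gcdf A (fun i => z i + Δ / √n) ≤ gcdf A (fun i => (Real.log √n
          + ![Real.log M₁, Real.log M₂, Real.log M₁ + Real.log M₂] i - n * H i) / √n) := by
    refine gcdf_mono A fun i => ?_
    rw [le_div_iff₀ hs]
    have e : (z i + Δ / √n) * √n
        = n * ![R₁, R₂, R₁ + R₂] i - n * H i + Real.log n / 2 - C + Δ := by
      rw [add_mul, div_mul_cancel₀ _ hs.ne']
      have : z i * √n = (√(n : ℝ) * √(n : ℝ)) * (![R₁, R₂, R₁ + R₂] i - H i
          + Real.log (n : ℝ) / (2 * (n : ℝ)) - C / (n : ℝ)) := by simp only [hz]; ring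
      rw [this, hss]
      field_simp
    rw [e, Real.log_sqrt hn'.le]
    have hi : n * ![R₁, R₂, R₁ + R₂] i - 2 * Real.log 2
        ≤ ![Real.log M₁, Real.log M₂, Real.log M₁ + Real.log M₂] i := by
      fin_cases i
      · show n * R₁ - 2 * Real.log 2 ≤ Real.log M₁
        linarith
      · show n * R₂ - 2 * Real.log 2 ≤ Real.log M₂
        linarith
      · show n * (R₁ + R₂) - 2 * Real.log 2 ≤ Real.log M₁ + Real.log M₂
        linarith
    linarith
  have hcΔ : K / √n ≤ c * (Δ / √n) := by
    rw [← mul_div_assoc]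
    refine div_le_div_of_nonneg_right ?_ hs.le
    rw [hΔ, mul_add, mul_div_cancel₀ _ hc.ne']
    linarith
  have hKε : K / √n ≤ ε / 2 := by
    rw [div_le_iff₀ h0] at s2
    rw [div_le_iff₀ hs]
    linarith
  rcases min_le_iff.mp (hg.trans hmono) with h | h <;> linarith

end MASC

/-! ### The achievability theorem -/

open MeasureTheory ProbabilityTheory MASC in
/-- **Third-order MASC rate region, achievability.**
For i.i.d. pairs with single-letter joint distribution `P` on countable alphabets satisfying
`V(X₁,X₂) > 0`, `E[V_c(X₁|X₂)] > 0`, `E[V_c(X₂|X₁)] > 0`, finite third (conditional) moments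
and finite second moments of the conditional third moments, and any `ε ∈ (0,1)`:
there are `C ≥ 0` and `n₀` such that for all `n ≥ n₀` and every rate pair `(R₁,R₂)` with
`√n·(R̄ − H̄ + (log n/(2n))·1 − (C/n)·1) ∈ Q_inv(𝖵,ε)`, there is an `(n,M₁,M₂,ε)` MASC
with `log M₁ ≤ nR₁` and `log M₂ ≤ nR₂`.
Here `ι 0, ι 1, ι 2` are the conditional and joint informations, `Hbar` their means,
`V` the entropy dispersion matrix with `A·Aᵀ = V`, `m1, m2` the conditional means, and
`Vc1, Vc2, Tc1, Tc2` the conditional varentropies / third conditional central moments. -/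
theorem masc_third_order_achievability
    {𝒳₁ 𝒳₂ : Type*} [Countable 𝒳₁] [Countable 𝒳₂] [DecidableEq 𝒳₁] [DecidableEq 𝒳₂]
    (P : 𝒳₁ × 𝒳₂ → ℝ) (hP0 : ∀ x, 0 ≤ P x) (hPsum : ∑' x, P x = 1)
    (P1 : 𝒳₁ → ℝ) (hP1 : ∀ a, P1 a = ∑' b, P (a, b))
    (P2 : 𝒳₂ → ℝ) (hP2 : ∀ b, P2 b = ∑' a, P (a, b))
    (ι : Fin 3 → 𝒳₁ × 𝒳₂ → ℝ)
    (hι0 : ∀ x, ι 0 x = Real.log (P2 x.2 / P x))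
    (hι1 : ∀ x, ι 1 x = Real.log (P1 x.1 / P x))
    (hι2 : ∀ x, ι 2 x = Real.log (1 / P x))
    (Hbar : Fin 3 → ℝ) (hH : ∀ i, Hbar i = ∑' x, P x * ι i x)
    (V : Matrix (Fin 3) (Fin 3) ℝ)
    (hV : ∀ i j, V i j = ∑' x, P x * ((ι i x - Hbar i) * (ι j x - Hbar j)))
    (A : Matrix (Fin 3) (Fin 3) ℝ) (hA : A * A.transpose = V)
    (hVjoint : 0 < V 2 2)
    (m1 : 𝒳₂ → ℝ) (hm1 : ∀ b, m1 b = ∑' a, P (a, b) / P2 b * ι 0 (a, b))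
    (m2 : 𝒳₁ → ℝ) (hm2 : ∀ a, m2 a = ∑' b, P (a, b) / P1 a * ι 1 (a, b))
    (Vc1 : 𝒳₂ → ℝ) (hVc1 : ∀ b, Vc1 b = ∑' a, P (a, b) / P2 b * (ι 0 (a, b) - m1 b) ^ 2)
    (Vc2 : 𝒳₁ → ℝ) (hVc2 : ∀ a, Vc2 a = ∑' b, P (a, b) / P1 a * (ι 1 (a, b) - m2 a) ^ 2)
    (hVc1pos : 0 < ∑' b, P2 b * Vc1 b)
    (hVc2pos : 0 < ∑' a, P1 a * Vc2 a)
    (hT0 : Summable fun x => P x * |ι 0 x - Hbar 0| ^ 3)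
    (hT1 : Summable fun x => P x * |ι 1 x - Hbar 1| ^ 3)
    (hT2 : Summable fun x => P x * |ι 2 x - Hbar 2| ^ 3)
    (Tc1 : 𝒳₂ → ℝ) (hTc1 : ∀ b, Tc1 b = ∑' a, P (a, b) / P2 b * |ι 0 (a, b) - m1 b| ^ 3)
    (Tc2 : 𝒳₁ → ℝ) (hTc2 : ∀ a, Tc2 a = ∑' b, P (a, b) / P1 a * |ι 1 (a, b) - m2 a| ^ 3)
    (hTc1sq : Summable fun b => P2 b * Tc1 b ^ 2)
    (hTc2sq : Summable fun a => P1 a * Tc2 a ^ 2)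
    (ε : ℝ) (hε : ε ∈ Set.Ioo (0 : ℝ) 1) :
    ∃ C : ℝ, 0 ≤ C ∧ ∃ n₀ : ℕ, ∀ n : ℕ, n₀ ≤ n → ∀ R₁ R₂ : ℝ,
      1 - ε ≤ stdGaussianCdf A (fun i =>
          Real.sqrt (n : ℝ) *
            (![R₁, R₂, R₁ + R₂] i - Hbar i
              + Real.log (n : ℝ) / (2 * (n : ℝ)) - C / (n : ℝ))) →
      ∃ M₁ M₂ : ℕ, 0 < M₁ ∧ 0 < M₂ ∧
        Real.log (M₁ : ℝ) ≤ (n : ℝ) * R₁ ∧ Real.log (M₂ : ℝ) ≤ (n : ℝ) * R₂ ∧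
        ∃ f₁ : (Fin n → 𝒳₁) → Fin M₁, ∃ f₂ : (Fin n → 𝒳₂) → Fin M₂,
          ∃ g : Fin M₁ × Fin M₂ → (Fin n → 𝒳₁) × (Fin n → 𝒳₂),
            (∑' xy : (Fin n → 𝒳₁) × (Fin n → 𝒳₂),
                if g (f₁ xy.1, f₂ xy.2) = xy then (0 : ℝ)
                else ∏ i, P (xy.1 i, xy.2 i)) ≤ ε := by
  let _ : MeasurableSpace 𝒳₁ := ⊤
  let _ : MeasurableSpace 𝒳₂ := ⊤
  have hs : HasSum P 1 := by
    have h : Summable P := by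
      by_contra h
      rw [tsum_eq_zero_of_not_summable h] at hPsum
      exact zero_ne_one hPsum
    rw [← hPsum]
    exact h.hasSum
  have S0 : Side (Equiv.prodComm 𝒳₁ 𝒳₂) P P2 (ι 0) (Hbar 0) m1 Vc1 Tc1 :=
    ⟨hP0, hs, hP2, hι0, hH 0, hm1, hVc1, hTc1, hVc1pos, hT0, hTc1sq⟩
  have S1 : Side (Equiv.refl (𝒳₁ × 𝒳₂)) P P1 (ι 1) (Hbar 1) m2 Vc2 Tc2 :=
    ⟨hP0, hs, hP1, hι1, hH 1, hm2, hVc2, hTc2, hVc2pos, hT1, hTc2sq⟩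
  have hpm := pm_prob hP0 hs
  have hmem : ∀ i, MemLp (ι i) 3 (pm P) := by
    intro i
    fin_cases i
    · exact S0.memLp
    · exact S1.memLp
    · exact pm_memLp_three hP0 hs _ _ hT2
  have hmean : ∀ i, ∫ x, ι i x ∂pm P = Hbar i := fun i => by rw [pm_integral hP0, hH]
  have hVd : ∀ i, V i i = ∫ x, (ι i x - Hbar i) ^ 2 ∂pm P := fun i => by
    rw [pm_integral hP0, hV]
    exact tsum_congr fun x => by ring
  have hVpos : ∀ i, 0 < V i i := by
    intro i
    rw [hVd, pm_integral hP0]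
    fin_cases i
    · exact S0.variance_pos
    · exact S1.variance_pos
    · have := hVjoint
      rw [hVd, pm_integral hP0] at this
      exact this
  -- multivariate Berry-Esseen bound for the information vector
  obtain ⟨D, hD, hBE⟩ := berryEsseen A (pm P) (fun x i => ι i x - Hbar i) Measurable.of_discrete
    (fun i => (hmem i).sub (memLp_const _))
    (fun i => by
      rw [integral_sub ((hmem i).integrable (by norm_num)) (integrable_const _), hmean]
      simp)
    (fun i j => by rw [pm_integral hP0, hA, hV])
    (fun i => by rw [hA]; exact hVpos i)
  -- anti-concentration of each information sum
  let q₀ : Fin 3 → ℝ := fun i =>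
    1 / √(V i i) + 2 * (∫ x, |ι i x - Hbar i| ^ 3 ∂pm P) / (V i i * √(V i i))
  have hq₀ : ∀ i, 0 ≤ q₀ i := fun i => by
    have h1 := hVpos i
    have h2 : 0 ≤ ∫ x, |ι i x - Hbar i| ^ 3 ∂pm P := integral_nonneg fun _ => by positivity
    simp only [q₀]
    positivity
  have hanti : ∀ (n : ℕ), 0 < n → ∀ i a, (Measure.pi fun _ : Fin n => pm P).real
      {x | a ≤ ∑ j, ι i (x j) ∧ ∑ j, ι i (x j) ≤ a + 1} ≤ (∑ i, q₀ i) / √n := by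
    intro n hn i a
    refine (anticonc_pi hn (fun _ => pm P) (fun _ => ι i) (fun _ => Hbar i) (fun _ => hmem i)
      (fun _ => hmean i) (V i i) (∫ x, |ι i x - Hbar i| ^ 3 ∂pm P) (hVpos i) ?_ ?_ a).trans ?_
    · simp [hVd]
    · simp
    · exact div_le_div_of_nonneg_right
        (Finset.single_le_sum (fun i _ => hq₀ i) (Finset.mem_univ i)) (Real.sqrt_nonneg _)
  obtain ⟨v0, T0, K0, hv0, hT0', hK0, hbad0⟩ := S0.bad_prob
  obtain ⟨v1, T1, K1, hv1, hT1', hK1, hbad1⟩ := S1.bad_prob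
  set k0 : ℝ := 2 * (1 / √(v0 / 2) + 2 * (T0 + 1) / (v0 / 2 * √(v0 / 2))) with hk0
  set k1 : ℝ := 2 * (1 / √(v1 / 2) + 2 * (T1 + 1) / (v1 / 2 * √(v1 / 2))) with hk1
  have hk0' : 0 ≤ k0 := by positivity
  have hk1' : 0 ≤ k1 := by positivity
  have hq2 := hq₀ 2
  set k : ℝ := k0 + k1 + 2 * q₀ 2 with hk
  have hk' : 0 ≤ k := by positivity
  have hq' : 0 ≤ ∑ i, q₀ i := Finset.sum_nonneg fun i _ => hq₀ i
  set K : ℝ := 1 + (K0 + K1) + D + k * (6 * ∑ i, q₀ i) with hKdef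
  obtain ⟨C, hC, n₀, hmain⟩ := choose_sizes A ε hε.1 hε.2 Hbar S0.H_pos S1.H_pos K (by positivity)
  refine ⟨C, hC, n₀, fun n hn R₁ R₂ hR => ?_⟩
  obtain ⟨hn2, hmain⟩ := hmain n hn
  have hn0 : 0 < n := by omega
  have hnr : (0 : ℝ) < n := by positivity
  have hsn : 0 < √(n : ℝ) := by positivity
  have hcdf : ∀ z : Fin 3 → ℝ, stdGaussianCdf A z = gcdf A z := fun z => by
    unfold stdGaussianCdf gcdf Measure.real
    rw [Measure.map_apply (measurable_mulVec A)]
    · rfl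
    · rw [show {y : Fin 3 → ℝ | ∀ i, y i ≤ z i} = ⋂ i, {y | y i ≤ z i} by ext; simp]
      exact MeasurableSet.iInter fun i => measurableSet_le (measurable_pi_apply i) measurable_const
  rw [hcdf] at hR
  obtain ⟨M₁, M₂, hM₁, hM₂, hl₁, hl₂, herr⟩ := hmain R₁ R₂ hR
  refine ⟨M₁, M₂, hM₁, hM₂, hl₁, hl₂, ?_⟩
  have hM₁' : (0 : ℝ) < M₁ := by positivity
  have hM₂' : (0 : ℝ) < M₂ := by positivity
  set τ : Fin 3 → ℝ := fun i => Real.log √n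
    + ![Real.log M₁, Real.log M₂, Real.log M₁ + Real.log M₂] i with hτ
  set ν := Measure.pi fun _ : Fin n => pm P with hν
  let Bad : Set (Fin n → 𝒳₁ × 𝒳₂) := (Side.good (Equiv.prodComm 𝒳₁ 𝒳₂) Vc1 Tc1 v0 T0 n)ᶜ
    ∪ (Side.good (Equiv.refl (𝒳₁ × 𝒳₂)) Vc2 Tc2 v1 T1 n)ᶜ
  have hBad : ν.real Bad ≤ (K0 + K1) / √n := by
    refine (measureReal_union_le _ _).trans ((add_le_add (hbad0 n hn0) (hbad1 n hn0)).trans ?_)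
    rw [← add_div]
    refine div_le_div_of_nonneg_left (by positivity) hsn ?_
    rw [Real.sqrt_le_left hnr.le]
    have : (1 : ℝ) ≤ n := by exact_mod_cast hn0
    nlinarith
  have hscale : ∀ k' : ℝ, k' ≤ k → ∀ t : ℝ, k' / √n * Real.exp t ≤ k / √n * Real.exp t :=
    fun k' h t => mul_le_mul_of_nonneg_right (div_le_div_of_nonneg_right h hsn.le)
      (Real.exp_pos _).le
  obtain ⟨f₁, f₂, g, hg⟩ := one_shot P hP0 hs hn0 M₁ M₂ hM₁ hM₂ (fun i x => ∑ j, ι i (x j)) Bad k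
    ((∑ i, q₀ i) / √n) hk'
    (fun x hx hxB L hL => by
      have hgood : x ∈ Side.good (Equiv.prodComm 𝒳₁ 𝒳₂) Vc1 Tc1 v0 T0 n := by
        by_contra h; exact hxB (Or.inl h)
      refine (S0.count hv0 hn0 x hx hgood L hL).trans ?_
      rw [← mul_div_assoc]
      exact hscale k0 (by rw [hk]; linarith) _)
    (fun x hx hxB L hL => by
      have hgood : x ∈ Side.good (Equiv.refl (𝒳₁ × 𝒳₂)) Vc2 Tc2 v1 T1 n := by
        by_contra h; exact hxB (Or.inr h)
      refine (S1.count hv1 hn0 x hx hgood L hL).trans ?_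
      rw [← mul_div_assoc]
      exact hscale k1 (by rw [hk]; linarith) _)
    (fun x hx _ L hL => by
      refine (count_pi hn0 (fun _ => P) (fun _ => hP0) (fun _ => hs) (fun _ => ι 2)
        (fun _ y _ => by rw [hι2, one_div, Real.log_inv]) (fun _ => Hbar 2) (fun _ => hmem 2)
        (fun _ => hmean 2) (V 2 2) (∫ x, |ι 2 x - Hbar 2| ^ 3 ∂pm P) (hVpos 2) (by simp [hVd])
        (by simp) (∑ j, ι 2 (x j)) L fun x' hx' => ?_).trans ?_
      · have : Real.exp (-∑ j, ι 2 (x j)) = ∏ j, P (x j) := by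
          rw [← Finset.sum_neg_distrib, Real.exp_sum]
          refine Finset.prod_congr rfl fun j _ => ?_
          rw [hι2, one_div, Real.log_inv, neg_neg, Real.exp_log (hx j)]
        rw [this]
        exact hL x' hx'
      · rw [← mul_div_assoc]
        exact hscale (2 * q₀ 2) (by rw [hk]; linarith) _)
    (fun i a => hanti n hn0 i a) τ
    (by
      show Real.exp (Real.log √n + Real.log M₁) = _
      rw [Real.exp_add, Real.exp_log hsn, Real.exp_log hM₁'])
    (by
      show Real.exp (Real.log √n + Real.log M₂) = _
      rw [Real.exp_add, Real.exp_log hsn, Real.exp_log hM₂'])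
    (by
      show Real.exp (Real.log √n + (Real.log M₁ + Real.log M₂)) = _
      rw [Real.exp_add, Real.exp_add, Real.exp_log hsn, Real.exp_log hM₁', Real.exp_log hM₂'])
    (1 / √n) (by positivity) (by
      rw [div_lt_one hsn, Real.lt_sqrt zero_le_one]
      have : (2 : ℝ) ≤ n := by exact_mod_cast hn2
      linarith)
  refine ⟨f₁, f₂, g, hg.trans ?_⟩
  have hbe := hBE n hn0 (fun i => τ i - n * Hbar i)
  have hs1 : {x : Fin n → 𝒳₁ × 𝒳₂ | ∀ i, ∑ j, (ι i (x j) - Hbar i) ≤ τ i - n * Hbar i}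
      = {x | ∀ i, ∑ j, ι i (x j) ≤ τ i} := by
    ext x
    simp [Finset.sum_sub_distrib]
  have hs2 : {w : Fin 3 → ℝ | ∀ i, √n * A.mulVec w i ≤ τ i - n * Hbar i}
      = {w | ∀ i, A.mulVec w i ≤ (τ i - n * Hbar i) / √n} := by
    ext w
    simp only [Set.mem_ofPred_eq, le_div_iff₀ hsn, mul_comm]
  rw [hs1, hs2] at hbe
  have hbe' := (abs_le.mp hbe).1
  have e : K / √n = 1 / √n + (K0 + K1) / √n + D / √n + k * (6 * ((∑ i, q₀ i) / √n)) := by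
    rw [hKdef]; ring
  rw [e] at herr
  unfold gcdf at herr
  linarith
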